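/- Let n ≥ 3, let p be an odd prime, and let f ∈ Aut(F_n) have order p. Then N(f) = SAut(F_n) if det(f̄) = 1, and N(f) = Aut(F_n) if det(f̄) = −1. -/

import Mathlib

open Matrix

namespace NormalClosurePaper

/-- The automorphism group of the free group on `n` generators. -/
abbrev FrAut (n : ℕ) := MulAut (FreeGroup (Fin n))

/-- Exponent sum of the generator `x_i` in a word of the free group. -/
def expSum {n : ℕ} (i : Fin n) : FreeGroup (Fin n) →* Multiplicative ℤ :=
  FreeGroup.lift fun j => Multiplicative.ofAdd (if j = i then (1 : ℤ) else 0)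

/-- The abelianized matrix of an automorphism of the free group:
the `(i, j)` entry is the exponent sum of `x_i` in `f x_j`. -/
def mat {n : ℕ} (f : FrAut n) : Matrix (Fin n) (Fin n) ℤ :=
  Matrix.of fun i j => (expSum i (f (FreeGroup.of j))).toAdd

lemma expSum_apply {n : ℕ} (f : FrAut n) (i : Fin n) (w : FreeGroup (Fin n)) :
    (expSum i (f w)).toAdd = ∑ k, mat f i k * (expSum k w).toAdd := by
  induction w using FreeGroup.induction_on with
  | C1 => simp
  | of j =>
      have h : (expSum i (f (FreeGroup.of j))).toAdd = mat f i j := rfl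
      rw [h]
      simp [expSum, mul_ite, Finset.sum_ite_eq]
  | inv_of j ih =>
      simp only [_root_.map_inv, toAdd_inv, mul_neg, Finset.sum_neg_distrib, ih]
  | mul x y ihx ihy =>
      simp only [_root_.map_mul, toAdd_mul, mul_add, Finset.sum_add_distrib, ihx, ihy]

lemma mat_one {n : ℕ} : mat (1 : FrAut n) = 1 := by
  ext i j
  simp [mat, expSum, Matrix.one_apply, eq_comm]

lemma mat_mul {n : ℕ} (f g : FrAut n) : mat (f * g) = mat f * mat g := by
  ext i j
  rw [Matrix.mul_apply]
  show (expSum i ((f * g) (FreeGroup.of j))).toAdd = _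
  rw [show (f * g) (FreeGroup.of j) = f (g (FreeGroup.of j)) from rfl, expSum_apply]
  rfl

/-- The matrix of the induced map on the abelianization, as a monoid homomorphism. -/
def matHom (n : ℕ) : FrAut n →* Matrix (Fin n) (Fin n) ℤ where
  toFun := mat
  map_one' := mat_one
  map_mul' := mat_mul

/-- The homomorphism `Aut(F_n) → GL_n(ℤ)` induced by abelianization. -/
def ρ (n : ℕ) : FrAut n →* GL (Fin n) ℤ := (matHom n).toHomUnits

/-- The composition of `ρ` with the determinant. -/
def detρ (n : ℕ) : FrAut n →* ℤˣ := (Matrix.GeneralLinearGroup.det).comp (ρ n)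

/-- The special automorphism group `SAut(F_n)`: automorphisms whose induced matrix
has determinant `1`. -/
def SAut (n : ℕ) : Subgroup (FrAut n) := (detρ n).ker

/-- The Torelli subgroup `IA_n`, the kernel of `ρ`. -/
def IA (n : ℕ) : Subgroup (FrAut n) := (ρ n).ker

/-- The group of inner automorphisms of the free group. -/
def Inn (n : ℕ) : Subgroup (FrAut n) := (MulAut.conj (G := FreeGroup (Fin n))).range

instance Inn_normal (n : ℕ) : (Inn n).Normal := by
  constructor
  rintro - ⟨a, rfl⟩ g
  refine ⟨g a, ?_⟩
  ext y
  simp [MulAut.conj_apply, MulAut.mul_apply, _root_.map_mul, _root_.map_inv]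

/-- The outer automorphism group `Out(F_n)`. -/
abbrev OutF (n : ℕ) := FrAut n ⧸ Inn n

/-- The projection `Aut(F_n) → Out(F_n)`. -/
def toOut (n : ℕ) : FrAut n →* OutF n := QuotientGroup.mk' (Inn n)

lemma mat_conj {n : ℕ} (g : FreeGroup (Fin n)) : mat (MulAut.conj g) = 1 := by
  rw [← mat_one (n := n)]
  ext i j
  simp only [mat, Matrix.of_apply, MulAut.conj_apply, MulAut.one_apply, _root_.map_mul,
    _root_.map_inv, toAdd_mul, toAdd_inv]
  omega

lemma ρ_conj {n : ℕ} (g : FreeGroup (Fin n)) : ρ n (MulAut.conj g) = 1 :=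
  Units.ext (mat_conj g)

/-- The homomorphism `Out(F_n) → GL_n(ℤ)` induced by abelianization. -/
def ρOut (n : ℕ) : OutF n →* GL (Fin n) ℤ :=
  QuotientGroup.lift (Inn n) (ρ n) (by rintro - ⟨g, rfl⟩; exact ρ_conj g)

/-- The composition of `ρOut` with the determinant. -/
def detρOut (n : ℕ) : OutF n →* ℤˣ := (Matrix.GeneralLinearGroup.det).comp (ρOut n)

/-- The special outer automorphism group `SOut(F_n)`. -/
def SOut (n : ℕ) : Subgroup (OutF n) := (detρOut n).ker

/-- Entrywise reduction `GL_n(ℤ) → GL_n(ℤ/ℓℤ)`. -/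
def redGL (n ℓ : ℕ) : GL (Fin n) ℤ →* GL (Fin n) (ZMod ℓ) :=
  Units.map (RingHom.mapMatrix (Int.castRingHom (ZMod ℓ))).toMonoidHom

/-- The subgroup `GΓ_n(ℓ)` of `GL_n(ℤ)` of matrices congruent to the identity mod `ℓ`. -/
def GGamma (n ℓ : ℕ) : Subgroup (GL (Fin n) ℤ) := (redGL n ℓ).ker

/-- The level `ℓ` congruence subgroup `Γ_n(ℓ)` (viewed inside `GL_n(ℤ)`): matrices with
determinant `1` that are congruent to the identity mod `ℓ`. -/
def GammaGL (n ℓ : ℕ) : Subgroup (GL (Fin n) ℤ) :=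
  GGamma n ℓ ⊓ (Matrix.GeneralLinearGroup.det).ker

/-- Reduction `SL_n(ℤ) → SL_n(ℤ/ℓℤ)`. -/
def redSL (n ℓ : ℕ) : Matrix.SpecialLinearGroup (Fin n) ℤ →*
    Matrix.SpecialLinearGroup (Fin n) (ZMod ℓ) :=
  Matrix.SpecialLinearGroup.map (Int.castRingHom (ZMod ℓ))

/-- Projection `SL_n(ℤ/ℓℤ) → PSL_n(ℤ/ℓℤ)`. -/
def projPSL (n ℓ : ℕ) : Matrix.SpecialLinearGroup (Fin n) (ZMod ℓ) →*
    Matrix.ProjectiveSpecialLinearGroup (Fin n) (ZMod ℓ) :=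
  QuotientGroup.mk' _


section NormalClosureOfPrimeOrder

open FreeGroup

section Words

/-- The length of the longest common prefix of two lists. -/
def prefixLen {β : Type*} [DecidableEq β] : List β → List β → ℕ
  | a :: l, b :: m => if a = b then prefixLen l m + 1 else 0
  | [], _ => 0
  | _ :: _, [] => 0

lemma le_prefixLen_iff {β : Type*} [DecidableEq β] (k : ℕ) (l m : List β) :
    k ≤ prefixLen l m ↔ k ≤ l.length ∧ k ≤ m.length ∧ l.take k = m.take k := by
  induction l generalizing k m with
  | nil => simp +contextual [prefixLen]
  | cons a l ih =>
    cases m with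
    | nil => simp +contextual [prefixLen]
    | cons b m =>
      cases k with
      | zero => simp
      | succ k =>
        simp only [prefixLen]
        split_ifs with h
        · simp [h, ih]
        · simp [h]

variable {α : Type*} [DecidableEq α]

/-- The length of the longest common prefix of two elements of a free group. -/
def cp (x y : FreeGroup α) : ℕ := prefixLen x.toWord y.toWord

lemma le_cp_iff (k : ℕ) (x y : FreeGroup α) :
    k ≤ cp x y ↔ k ≤ x.norm ∧ k ≤ y.norm ∧ x.toWord.take k = y.toWord.take k :=
  le_prefixLen_iff k _ _

lemma cp_le_left (x y : FreeGroup α) : cp x y ≤ x.norm := ((le_cp_iff _ x y).1 le_rfl).1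

lemma cp_le_right (x y : FreeGroup α) : cp x y ≤ y.norm := ((le_cp_iff _ x y).1 le_rfl).2.1

lemma take_cp (x y : FreeGroup α) : x.toWord.take (cp x y) = y.toWord.take (cp x y) :=
  ((le_cp_iff _ x y).1 le_rfl).2.2

lemma cp_comm (x y : FreeGroup α) : cp x y = cp y x :=
  le_antisymm
    ((le_cp_iff _ _ _).2 ⟨cp_le_right x y, cp_le_left x y, (take_cp x y).symm⟩)
    ((le_cp_iff _ _ _).2 ⟨cp_le_right y x, cp_le_left y x, (take_cp y x).symm⟩)

lemma cp_ultra (x y z : FreeGroup α) : min (cp x y) (cp y z) ≤ cp x z := by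
  have h1 := (le_cp_iff _ x y).1 (min_le_left (cp x y) (cp y z))
  have h2 := (le_cp_iff _ y z).1 (min_le_right (cp x y) (cp y z))
  exact (le_cp_iff _ _ _).2 ⟨h1.1, h2.2.1, h1.2.2.trans h2.2.2⟩

lemma norm_inv_mk_mul_mk (l m : List (α × Bool)) (hl : IsReduced l) (hm : IsReduced m) :
    ((mk l)⁻¹ * mk m).norm + 2 * prefixLen l m = l.length + m.length := by
  induction l generalizing m with
  | nil =>
    have : (mk ([] : List (α × Bool)))⁻¹ * mk m = mk m := by
      rw [← FreeGroup.one_eq_mk]; simp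
    rw [this]
    simp [FreeGroup.norm, prefixLen, hm.reduce_eq]
  | cons a l ih =>
    cases m with
    | nil =>
      rw [← FreeGroup.one_eq_mk]
      simp [FreeGroup.norm, prefixLen, reduce_invRev, hl.reduce_eq]
    | cons b m =>
      simp only [prefixLen]
      split_ifs with h
      · subst h
        have e : (mk (a :: l))⁻¹ * mk (a :: m) = (mk l)⁻¹ * mk m := by
          rw [show a :: l = [a] ++ l from rfl, show a :: m = [a] ++ m from rfl,
            ← FreeGroup.mul_mk, ← FreeGroup.mul_mk]
          group
        rw [e]
        have := ih m (List.IsChain.tail hl) (List.IsChain.tail hm)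
        simp only [List.length_cons]
        omega
      · have hred : IsReduced (invRev (a :: l) ++ b :: m) := by
          have h1 : IsReduced (invRev (a :: l)) := by
            rw [isReduced_iff_reduce_eq, reduce_invRev, hl.reduce_eq]
          unfold FreeGroup.IsReduced at *
          rw [List.isChain_append]
          refine ⟨h1, hm, ?_⟩
          intro x hx y hy
          simp [invRev] at hx hy
          subst hx hy
          intro h2
          have : a.2 ≠ b.2 := fun h3 => h (Prod.ext h2 h3)
          simpa using (Bool.eq_not_of_ne this.symm).symm
        rw [FreeGroup.inv_mk, FreeGroup.mul_mk]
        simp only [FreeGroup.norm, toWord_mk, hred.reduce_eq]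
        simp

lemma norm_inv_mul_add (x y : FreeGroup α) : (x⁻¹ * y).norm + 2 * cp x y = x.norm + y.norm := by
  have := norm_inv_mk_mul_mk x.toWord y.toWord isReduced_toWord isReduced_toWord
  rwa [mk_toWord, mk_toWord] at this

lemma norm_mul_add (x y : FreeGroup α) : (x * y).norm + 2 * cp x⁻¹ y = x.norm + y.norm := by
  have := norm_inv_mul_add x⁻¹ y
  rwa [inv_inv, norm_inv_eq] at this

lemma cp_inv_lt (x : FreeGroup α) (hx : x ≠ 1) : 2 * cp x⁻¹ x < x.norm := by
  have h0 := reduceCyclically.reduce_flatten_replicate_succ (isReduced_toWord (x := x)) 0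
  have h1 := reduceCyclically.reduce_flatten_replicate_succ (isReduced_toWord (x := x)) 1
  simp only [zero_add, List.replicate_one, List.flatten_singleton, reduce_toWord] at h0
  have e : (x * x).toWord = reduce (List.replicate (1 + 1) x.toWord).flatten := by
    rw [toWord_mul]; simp [List.replicate_succ]
  rw [← e] at h1
  have h0' := congrArg List.length h0
  have h1' := congrArg List.length h1
  simp [List.replicate_succ] at h0' h1'
  have hne : (reduceCyclically x.toWord).length ≠ 0 := by
    intro h
    have := reduceCyclically.conj_conjugator_reduceCyclically x.toWord
    rw [List.length_eq_zero_iff.1 h] at this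
    apply hx
    rw [← mk_toWord (x := x), ← this]
    simp only [List.append_nil]
    rw [← FreeGroup.mul_mk, ← FreeGroup.inv_mk, mul_inv_cancel]
  have := norm_mul_add x x
  simp only [FreeGroup.norm] at *
  omega

end Words

section NielsenReduced

variable {α β : Type*} [DecidableEq α]

/-- The value of a signed letter under an assignment of the generators. -/
def letterVal (U : β → FreeGroup α) (s : β × Bool) : FreeGroup α :=
  cond s.2 (U s.1) (U s.1)⁻¹

lemma letterVal_not {α β : Type*} (U : β → FreeGroup α) (s : β × Bool) :
    letterVal U (s.1, !s.2) = (letterVal U s)⁻¹ := by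
  rcases s with ⟨i, _ | _⟩ <;> simp [letterVal]

/-- Two consecutive signed letters do not cancel. -/
def NonCancel (s t : β × Bool) : Prop := s.1 = t.1 → s.2 = t.2

/-- Nielsen reduced families. -/
structure NielsenReduced (U : β → FreeGroup α) : Prop where
  ne_one : ∀ s, letterVal U s ≠ 1
  two_mul_cp_le : ∀ s t, NonCancel s t →
    2 * cp (letterVal U s)⁻¹ (letterVal U t) ≤ (letterVal U t).norm
  cp_add_cp_lt : ∀ r s t, NonCancel r s → NonCancel s t →
    cp (letterVal U r)⁻¹ (letterVal U s) + cp (letterVal U s)⁻¹ (letterVal U t) <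
      (letterVal U s).norm

lemma NielsenReduced.norm_lift_cons {U : β → FreeGroup α} (hU : NielsenReduced U)
    (L : List (β × Bool)) : ∀ s w : β × Bool, (s :: L).IsChain NonCancel → NonCancel w s →
      cp (letterVal U w)⁻¹ (lift U (FreeGroup.mk (s :: L))) ≤ cp (letterVal U w)⁻¹ (letterVal U s) ∧
      (s :: L).length + cp (letterVal U w)⁻¹ (letterVal U s) ≤
        (lift U (FreeGroup.mk (s :: L))).norm := by
  induction L with
  | nil =>
    intro s w _ hw
    have e : lift U (FreeGroup.mk [s]) = letterVal U s := by simp [lift_mk, letterVal]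
    rw [e]
    have h0 := mt FreeGroup.norm_eq_zero.1 (hU.ne_one s)
    have := hU.two_mul_cp_le w s hw
    simp
    omega
  | cons t L ih =>
    intro s w hL hw
    rw [List.isChain_cons_cons] at hL
    obtain ⟨ih1, ih2⟩ := ih t s hL.2 hL.1
    have e : lift U (FreeGroup.mk (s :: t :: L)) =
        letterVal U s * lift U (FreeGroup.mk (t :: L)) := by
      simp [lift_mk, letterVal]
    rw [e]
    have k3 := hU.cp_add_cp_lt w s t hw hL.1
    set h := lift U (FreeGroup.mk (t :: L))
    set v := letterVal U s
    have k1 := norm_inv_mul_add v (v * h)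
    have k2 := norm_mul_add v h
    rw [inv_mul_cancel_left] at k1
    have k4 := cp_ultra (letterVal U w)⁻¹ (v * h) v
    rw [cp_comm (v * h) v] at k4
    simp only [List.length_cons] at *
    omega

lemma NielsenReduced.length_le_norm {U : β → FreeGroup α} (hU : NielsenReduced U)
    (L : List (β × Bool)) (hL : FreeGroup.IsReduced L) :
    L.length ≤ (lift U (FreeGroup.mk L)).norm := by
  cases L with
  | nil => simp
  | cons s L =>
    have := (hU.norm_lift_cons L s s hL (fun _ => rfl)).2
    omega

end NielsenReduced

section TieBreak

variable {n : ℕ}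

/-- The numerical value of a word, read in base `2 * n`. -/
def wordNum (l : List (Fin n × Bool)) : ℕ :=
  Nat.ofDigits (2 * n + 1) (l.map fun s => 2 * s.1.1 + s.2.toNat).reverse

lemma wordNum_append_lt {p q : List (Fin n × Bool)} (b : List (Fin n × Bool))
    (h : wordNum p < wordNum q) : wordNum (p ++ b) < wordNum (q ++ b) := by
  simp only [wordNum, List.map_append, List.reverse_append, Nat.ofDigits_append] at *
  gcongr

lemma wordNum_inj {p q : List (Fin n × Bool)} (hl : p.length = q.length)
    (h : wordNum p = wordNum q) : p = q := by
  rcases Nat.eq_zero_or_pos n with rfl | hn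
  · cases p with
    | nil => exact (List.length_eq_zero_iff.1 hl.symm).symm
    | cons a _ => exact a.1.elim0
  have hd : ∀ l : List (Fin n × Bool), ∀ d ∈ (l.map fun s => 2 * s.1.1 + s.2.toNat).reverse,
      d < 2 * n + 1 := by
    intro l d hd
    simp only [List.mem_reverse, List.mem_map] at hd
    obtain ⟨⟨⟨i, hi⟩, b⟩, -, rfl⟩ := hd
    have := Bool.toNat_le b
    simp only
    omega
  have := Nat.ofDigits_inj_of_len_eq (b := 2 * n + 1) (by omega) (by simpa using hl)
    (hd p) (hd q) h
  rw [List.reverse_inj] at this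
  refine List.map_injective_iff.2 ?_ this
  rintro ⟨i, b⟩ ⟨j, c⟩ h
  simp only [Prod.mk.injEq, Fin.ext_iff]
  cases b <;> cases c <;> simp at h ⊢ <;> omega

/-- The tie-breaking weight: the numerical value of the first halves of the word and of its
inverse. -/
def halfNum (w : FreeGroup (Fin n)) : ℕ :=
  wordNum (w.toWord.take ((w.norm + 1) / 2)) + wordNum (w⁻¹.toWord.take ((w.norm + 1) / 2))

lemma halfNum_inv (w : FreeGroup (Fin n)) : halfNum w⁻¹ = halfNum w := by
  simp only [halfNum, norm_inv_eq, inv_inv]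
  rw [add_comm]

lemma toWord_mk_of_norm_eq {α : Type*} [DecidableEq α] {L : List (α × Bool)}
    (h : (mk L).norm = L.length) : (mk L).toWord = L := by
  have h1 : Red L (reduce L) := reduce.red
  exact h1.sublist.eq_of_length h

lemma halfNum_mul_lt (v w : FreeGroup (Fin n)) (c : ℕ) (hv : v.norm = 2 * c)
    (hcp : cp v⁻¹ w = c) (hw : 2 * c ≤ w.norm)
    (hlt : wordNum (v.toWord.take c) < wordNum (v⁻¹.toWord.take c)) :
    (v * w).norm = w.norm ∧ halfNum (v * w) < halfNum w := by
  have hn : (v * w).norm = w.norm := by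
    have := norm_mul_add v w
    omega
  refine ⟨hn, ?_⟩
  set p := v.toWord.take c with hp
  set q := v⁻¹.toWord.take c with hq
  set b := w.toWord.drop c with hb
  have hwq : w.toWord = q ++ b := by
    rw [hq, ← hcp, take_cp, hb, ← hcp, List.take_append_drop]
  have lp : p.length = c := by
    rw [hp, List.length_take]
    change min c v.norm = c
    omega
  have lq : q.length = c := by
    rw [hq, List.length_take]
    change min c v⁻¹.norm = c
    rw [norm_inv_eq]
    omega
  have hvw : v.toWord = p ++ invRev q := by
    rw [hp, hq, toWord_inv]
    conv_lhs => rw [← List.take_append_drop c v.toWord]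
    congr 1
    have l : v.toWord.length = 2 * c := hv
    simp only [invRev, List.take_reverse, List.map_reverse, List.reverse_reverse,
      List.length_map, l, List.map_drop, List.map_map]
    have : (fun g : Fin n × Bool => (g.1, !g.2)) ∘ (fun g : Fin n × Bool => (g.1, !g.2)) = id := by
      ext x <;> simp
    rw [this, List.map_id]
    congr 1
    omega
  have hmul : v * w = mk (p ++ b) := by
    rw [← mk_toWord (x := v), ← mk_toWord (x := w), hvw, hwq, ← FreeGroup.mul_mk,
      ← FreeGroup.mul_mk, ← FreeGroup.mul_mk, ← FreeGroup.inv_mk]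
    group
  have lw : w.norm = c + b.length := by
    have : w.norm = w.toWord.length := rfl
    rw [this, hwq, List.length_append, lq]
  have hvword : (v * w).toWord = p ++ b := by
    rw [hmul]
    apply toWord_mk_of_norm_eq
    rw [← hmul, hn, List.length_append, lp, lw]
  have hinv : ∀ r : List (Fin n × Bool), (invRev (r ++ b)).take ((w.norm + 1) / 2) =
      (invRev b).take ((w.norm + 1) / 2) := by
    intro r
    rw [invRev_append, List.take_append_of_le_length]
    rw [invRev_length]
    omega
  unfold halfNum
  rw [hn, toWord_inv, toWord_inv, hvword, hwq, hinv, hinv]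
  apply Nat.add_lt_add_right
  rw [List.take_append, List.take_append, List.take_of_length_le (l := p) (by omega),
    List.take_of_length_le (l := q) (by omega), lp, lq]
  exact wordNum_append_lt _ hlt

/-- Length with tie-break. -/
def weight (w : FreeGroup (Fin n)) : ℕ ×ₗ ℕ := toLex (w.norm, halfNum w)

lemma weight_inv (w : FreeGroup (Fin n)) : weight w⁻¹ = weight w := by
  simp [weight, halfNum_inv]

lemma nielsenReduced_of_weight_le {β : Type*} {U : β → FreeGroup (Fin n)}
    (h1 : ∀ s, letterVal U s ≠ 1)
    (hmin : ∀ s t : β × Bool, s.1 ≠ t.1 →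
      weight (letterVal U s) ≤ weight (letterVal U s * letterVal U t)) : NielsenReduced U := by
  have hmin2 : ∀ s t : β × Bool, s.1 ≠ t.1 →
      weight (letterVal U t) ≤ weight (letterVal U s * letterVal U t) := by
    intro s t hst
    have := hmin (t.1, !t.2) (s.1, !s.2) hst.symm
    rwa [letterVal_not, letterVal_not, ← _root_.mul_inv_rev, weight_inv, weight_inv] at this
  have hle : ∀ x y : FreeGroup (Fin n), weight x ≤ weight y → x.norm ≤ y.norm := by
    intro x y h
    rw [weight, weight, Prod.Lex.toLex_le_toLex] at h
    rcases h with h | h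
    · exact h.le
    · exact h.1.le
  have hcp : ∀ s t, NonCancel s t → s.1 = t.1 →
      2 * cp (letterVal U s)⁻¹ (letterVal U t) < (letterVal U t).norm := by
    intro s t hst h
    have : s = t := Prod.ext h (hst h)
    subst this
    exact cp_inv_lt _ (h1 s)
  have hcp2 : ∀ s t, NonCancel s t →
      2 * cp (letterVal U s)⁻¹ (letterVal U t) ≤ (letterVal U t).norm := by
    intro s t hst
    by_cases h : s.1 = t.1
    · exact (hcp s t hst h).le
    · have := hle _ _ (hmin s t h)
      have := norm_mul_add (letterVal U s) (letterVal U t)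
      omega
  have hcp3 : ∀ s t, NonCancel s t →
      2 * cp (letterVal U s)⁻¹ (letterVal U t) ≤ (letterVal U s).norm := by
    intro s t hst
    by_cases h : s.1 = t.1
    · have : s = t := Prod.ext h (hst h)
      subst this
      exact (hcp s s hst h).le
    · have := hle _ _ (hmin2 s t h)
      have := norm_mul_add (letterVal U s) (letterVal U t)
      omega
  refine ⟨h1, hcp2, ?_⟩
  intro r s t hrs hst
  by_contra! hcon
  have a1 := hcp2 r s hrs
  have a2 := hcp3 r s hrs
  have a3 := hcp2 s t hst
  have a4 := hcp3 s t hst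
  have hrs' : r.1 ≠ s.1 := fun h => by
    have := hcp r s hrs h
    omega
  have hst' : s.1 ≠ t.1 := fun h => by
    have e : s = t := Prod.ext h (hst h)
    have := hcp s t hst h
    subst e
    omega
  set u := letterVal U r
  set v := letterVal U s
  set w := letterVal U t
  obtain ⟨c, hc⟩ : ∃ c, c = cp v⁻¹ w := ⟨_, rfl⟩
  have hv : v.norm = 2 * c := by omega
  rcases lt_trichotomy (wordNum (v.toWord.take c)) (wordNum (v⁻¹.toWord.take c)) with h | h | h
  · obtain ⟨k1, k2⟩ := halfNum_mul_lt v w c hv hc.symm (by omega) h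
    refine absurd (hmin2 s t hst') (not_le.2 ?_)
    rw [weight, weight, Prod.Lex.toLex_lt_toLex]
    exact Or.inr ⟨k1, k2⟩
  · have hvl : v.toWord.length = 2 * c := hv
    have e := wordNum_inj (by simp [hvl]) h
    have h3 : c ≤ cp v⁻¹ v := (le_cp_iff _ _ _).2 ⟨by rw [norm_inv_eq]; omega, by omega, e.symm⟩
    have := cp_inv_lt v (h1 s)
    omega
  · obtain ⟨k1, k2⟩ := halfNum_mul_lt v⁻¹ u⁻¹ c (by rw [norm_inv_eq, hv])
      (by rw [inv_inv, cp_comm]; omega) (by rw [norm_inv_eq]; omega) (by rwa [inv_inv])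
    refine absurd (hmin r s hrs') (not_le.2 ?_)
    change weight (u * v) < weight u
    rw [← weight_inv (u * v), ← weight_inv u, _root_.mul_inv_rev,
      weight, weight, Prod.Lex.toLex_lt_toLex]
    exact Or.inr ⟨k1, k2⟩

end TieBreak

section Nielsen

variable {n : ℕ}

lemma FrAut.ext_of {f g : FrAut n} (h : ∀ i, f (of i) = g (of i)) : f = g := by
  have : f.toMonoidHom = g.toMonoidHom := FreeGroup.ext_hom _ _ h
  ext x
  exact DFunLike.congr_fun this x

lemma FrAut.inv_apply_eq {f : FrAut n} {x y : FreeGroup (Fin n)} : f⁻¹ x = y ↔ x = f y := by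
  constructor
  · rintro rfl
    exact (f.apply_symm_apply x).symm
  · rintro rfl
    exact f.symm_apply_apply y

/-- An automorphism given by the images of the generators under it and under its inverse. -/
def autOf (u v : Fin n → FreeGroup (Fin n)) (h₁ : ∀ i, lift v (u i) = of i)
    (h₂ : ∀ i, lift u (v i) = of i) : FrAut n :=
  MonoidHom.toMulEquiv (lift u) (lift v) (FreeGroup.ext_hom _ _ (by simpa using h₁))
    (FreeGroup.ext_hom _ _ (by simpa using h₂))

@[simp] lemma autOf_of (u v : Fin n → FreeGroup (Fin n)) (h₁ h₂) (i : Fin n) :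
    autOf u v h₁ h₂ (of i) = u i := by
  change lift u (of i) = u i
  simp

lemma lift_update_letterVal {i : Fin n} {t : Fin n × Bool} (h : t.1 ≠ i)
    (a : FreeGroup (Fin n)) :
    lift (Function.update FreeGroup.of i a) (letterVal FreeGroup.of t) =
      letterVal FreeGroup.of t := by
  rcases t with ⟨j, _ | _⟩ <;> simp_all [letterVal]

lemma map_letterVal (f : FrAut n) (t : Fin n × Bool) :
    f (letterVal of t) = letterVal (fun i => f (of i)) t := by
  rcases t with ⟨j, _ | _⟩ <;> simp [letterVal]

/-- The transvection `x_i ↦ x_i t` for a signed letter `t`. -/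
def rmul (i : Fin n) (t : Fin n × Bool) (h : t.1 ≠ i) : FrAut n :=
  autOf (Function.update of i (of i * letterVal of t))
    (Function.update of i (of i * letterVal of (t.1, !t.2)))
    (by
      intro k
      by_cases hk : k = i
      · subst hk
        simp [lift_update_letterVal h, letterVal_not]
      · simp [hk])
    (by
      intro k
      by_cases hk : k = i
      · subst hk
        rw [Function.update_self, _root_.map_mul,
          lift_update_letterVal (t := (t.1, !t.2)) (i := k) h]
        simp [letterVal_not]
      · simp [hk])

lemma rmul_self (i : Fin n) (t : Fin n × Bool) (h : t.1 ≠ i) :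
    rmul i t h (of i) = of i * letterVal of t := by simp [rmul]

lemma rmul_of_ne (i : Fin n) (t : Fin n × Bool) (h : t.1 ≠ i) {k : Fin n} (hk : k ≠ i) :
    rmul i t h (of k) = of k := by simp [rmul, hk]

/-- The inversion `x_i ↦ x_i⁻¹`. -/
def inversion (i : Fin n) : FrAut n :=
  autOf (Function.update of i (of i)⁻¹) (Function.update of i (of i)⁻¹)
    (by
      intro k
      by_cases hk : k = i
      · subst hk
        simp
      · simp [hk])
    (by
      intro k
      by_cases hk : k = i
      · subst hk
        simp
      · simp [hk])

lemma inversion_self (i : Fin n) : inversion i (of i) = (of i)⁻¹ := by simp [inversion]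

lemma inversion_of_ne {i k : Fin n} (hk : k ≠ i) : inversion i (of k) = of k := by
  simp [inversion, hk]

lemma inversion_mul_self (i : Fin n) : inversion i * inversion i = 1 := by
  apply FrAut.ext_of
  intro k
  by_cases hk : k = i
  · subst hk
    simp [inversion_self]
  · simp [inversion_of_ne hk]

lemma inversion_letterVal {i : Fin n} {t : Fin n × Bool} (h : t.1 ≠ i) :
    inversion i (letterVal of t) = letterVal of t := by
  rcases t with ⟨j, _ | _⟩ <;> simp [letterVal, inversion_of_ne h]

/-- The permutation automorphisms. -/
def permAut : Equiv.Perm (Fin n) →* FrAut n where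
  toFun σ := freeGroupCongr σ
  map_one' := FrAut.ext_of (by simp)
  map_mul' σ τ := FrAut.ext_of (by simp)

@[simp] lemma permAut_of (σ : Equiv.Perm (Fin n)) (i : Fin n) : permAut σ (of i) = of (σ i) := by
  simp [permAut]

/-- The transvection `x_i ↦ t x_i` for a signed letter `t`. -/
def lmul (i : Fin n) (t : Fin n × Bool) (h : t.1 ≠ i) : FrAut n :=
  inversion i * rmul i (t.1, !t.2) h * (inversion i)⁻¹

lemma inversion_inv (i : Fin n) : (inversion i)⁻¹ = inversion i :=
  inv_eq_of_mul_eq_one_left (inversion_mul_self i)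

lemma lmul_self (i : Fin n) (t : Fin n × Bool) (h : t.1 ≠ i) :
    lmul i t h (of i) = letterVal of t * of i := by
  simp [lmul, inversion_inv, inversion_self, rmul_self, letterVal_not, inversion_letterVal h]

lemma lmul_of_ne (i : Fin n) (t : Fin n × Bool) (h : t.1 ≠ i) {k : Fin n} (hk : k ≠ i) :
    lmul i t h (of k) = of k := by
  simp [lmul, inversion_inv, inversion_of_ne hk, rmul_of_ne _ _ _ hk]

lemma exists_perm_apply_apply {i j k l : Fin n} (hij : i ≠ j) (hkl : k ≠ l) :
    ∃ σ : Equiv.Perm (Fin n), σ i = k ∧ σ j = l := by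
  refine ⟨Equiv.swap (Equiv.swap i k j) l * Equiv.swap i k, ?_, by simp⟩
  rw [Equiv.Perm.mul_apply, Equiv.swap_apply_left]
  apply Equiv.swap_apply_of_ne_of_ne _ hkl
  intro h
  have : Equiv.swap i k i = Equiv.swap i k j := by rw [← h, Equiv.swap_apply_left]
  exact hij ((Equiv.swap i k).injective this)

variable {N : Subgroup (FrAut n)} [hN : N.Normal]

lemma rmul_mem_of_rmul_mem {i₀ j₀ : Fin n} (h₀ : j₀ ≠ i₀) (hmem : rmul i₀ (j₀, true) h₀ ∈ N)
    (i : Fin n) (t : Fin n × Bool) (h : t.1 ≠ i) : rmul i t h ∈ N := by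
  have hpos : ∀ j (h : j ≠ i), rmul i (j, true) h ∈ N := by
    intro j h
    obtain ⟨σ, hi, hj⟩ := exists_perm_apply_apply h₀ h
    have e : rmul i (j, true) h = permAut σ * rmul i₀ (j₀, true) h₀ * (permAut σ)⁻¹ := by
      rw [eq_mul_inv_iff_mul_eq]
      apply FrAut.ext_of
      intro k
      by_cases hk : k = i₀
      · subst hk
        simp [rmul_self, hj, hi, letterVal]
      · have : σ k ≠ i := fun h => hk (σ.injective (h.trans hj.symm))
        simp [rmul_of_ne _ _ _ hk, rmul_of_ne _ _ _ this]
    rw [e]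
    exact hN.conj_mem _ hmem _
  obtain ⟨j, _ | _⟩ := t
  · have e : rmul i (j, false) h = (rmul i (j, true) h)⁻¹ := by
      rw [eq_inv_iff_mul_eq_one]
      apply FrAut.ext_of
      intro k
      by_cases hk : k = i
      · subst hk
        have : j ≠ k := h
        simp [rmul_self, letterVal, rmul_of_ne _ _ _ this]
      · simp [rmul_of_ne _ _ _ hk]
    rw [e]
    exact N.inv_mem (hpos j h)
  · exact hpos j h

lemma lmul_mem (hr : ∀ (i : Fin n) (t : Fin n × Bool) (h : t.1 ≠ i), rmul i t h ∈ N)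
    (i : Fin n) (t : Fin n × Bool) (h : t.1 ≠ i) : lmul i t h ∈ N :=
  hN.conj_mem _ (hr _ _ _) _

lemma permAut_swap_mul_inversion_mem
    (hr : ∀ (i : Fin n) (t : Fin n × Bool) (h : t.1 ≠ i), rmul i t h ∈ N)
    {i j : Fin n} (h : i ≠ j) : permAut (Equiv.swap i j) * inversion j ∈ N := by
  have e : permAut (Equiv.swap i j) * inversion j =
      rmul i (j, true) h.symm * lmul j (i, false) h * rmul i (j, true) h.symm *
        lmul j (i, true) h * rmul j (i, false) h := by
    apply FrAut.ext_of
    intro k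
    by_cases hi : k = i
    · subst hi
      simp [inversion_of_ne h, rmul_self, rmul_of_ne _ _ _ h, lmul_of_ne _ _ _ h, letterVal,
        lmul_self, rmul_of_ne _ _ _ h.symm]
    · by_cases hj : k = j
      · subst hj
        simp [inversion_self, rmul_self, lmul_of_ne _ _ _ h, letterVal,
          lmul_self, rmul_of_ne _ _ _ hi, mul_assoc]
      · simp [inversion_of_ne hj, rmul_of_ne _ _ _ hi, rmul_of_ne _ _ _ hj, lmul_of_ne _ _ _ hj,
          Equiv.swap_apply_of_ne_of_ne hi hj]
  rw [e]
  exact N.mul_mem (N.mul_mem (N.mul_mem (N.mul_mem (hr _ _ _) (lmul_mem hr _ _ _)) (hr _ _ _))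
    (lmul_mem hr _ _ _)) (hr _ _ _)

lemma inversion_mul_inversion_mem
    (hr : ∀ (i : Fin n) (t : Fin n × Bool) (h : t.1 ≠ i), rmul i t h ∈ N)
    {i j : Fin n} (h : i ≠ j) : inversion i * inversion j ∈ N := by
  have e : inversion i * inversion j = (permAut (Equiv.swap i j) * inversion j) *
      (permAut (Equiv.swap i j) * inversion j) := by
    apply FrAut.ext_of
    intro k
    by_cases hi : k = i
    · subst hi
      simp [inversion_of_ne h, inversion_self]
    · by_cases hj : k = j
      · subst hj
        simp [inversion_of_ne hi, inversion_self, inversion_of_ne h]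
      · simp [inversion_of_ne hj, inversion_of_ne hi,
          Equiv.swap_apply_of_ne_of_ne hi hj]
  rw [e]
  exact N.mul_mem (permAut_swap_mul_inversion_mem hr h) (permAut_swap_mul_inversion_mem hr h)

lemma inversion_mem_sup
    (hr : ∀ (i : Fin n) (t : Fin n × Bool) (h : t.1 ≠ i), rmul i t h ∈ N)
    (i₀ i : Fin n) : inversion i ∈ N ⊔ Subgroup.zpowers (inversion i₀) := by
  by_cases h : i = i₀
  · subst h
    exact Subgroup.mem_sup_right (Subgroup.mem_zpowers _)
  · have e : inversion i = inversion i * inversion i₀ * inversion i₀ := by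
      rw [mul_assoc, inversion_mul_self, mul_one]
    rw [e]
    exact Subgroup.mul_mem _ (Subgroup.mem_sup_left (inversion_mul_inversion_mem hr h))
      (Subgroup.mem_sup_right (Subgroup.mem_zpowers _))

lemma permAut_mem_sup
    (hr : ∀ (i : Fin n) (t : Fin n × Bool) (h : t.1 ≠ i), rmul i t h ∈ N)
    (i₀ : Fin n) (σ : Equiv.Perm (Fin n)) :
    permAut σ ∈ N ⊔ Subgroup.zpowers (inversion i₀) := by
  induction σ using Equiv.Perm.swap_induction_on with
  | one => rw [_root_.map_one]; exact Subgroup.one_mem _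
  | swap_mul σ i j hij ih =>
    rw [_root_.map_mul]
    refine Subgroup.mul_mem _ ?_ ih
    have := Subgroup.mem_sup_left (T := Subgroup.zpowers (inversion i₀))
      (permAut_swap_mul_inversion_mem hr hij)
    have := Subgroup.mul_mem _ this (inversion_mem_sup hr i₀ j)
    rwa [mul_assoc, inversion_mul_self, mul_one] at this

lemma signedPerm_mem_sup
    (hr : ∀ (i : Fin n) (t : Fin n × Bool) (h : t.1 ≠ i), rmul i t h ∈ N)
    (i₀ : Fin n) (s : Finset (Fin n)) : ∀ φ : FrAut n,
    (∀ j ∈ s, ∃ t, φ (FreeGroup.of j) = letterVal FreeGroup.of t) →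
      (∀ j ∉ s, ∃ i, φ (FreeGroup.of j) = FreeGroup.of i) →
    φ ∈ N ⊔ Subgroup.zpowers (inversion i₀) := by
  induction s using Finset.induction_on with
  | empty =>
    intro φ _ h
    choose π hπ using fun j => h j (by simp)
    have hinj : Function.Injective π := fun a b hab => by
      have : φ (of a) = φ (of b) := by rw [hπ, hπ, hab]
      exact of_injective (φ.injective this)
    have e : φ = permAut (Equiv.ofBijective π (Finite.injective_iff_bijective.1 hinj)) :=
      FrAut.ext_of (by simp [hπ])
    rw [e]
    exact permAut_mem_sup hr i₀ _
  | insert a s ha ih =>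
    intro φ h1 h2
    obtain ⟨⟨i, b⟩, hb⟩ := h1 a (Finset.mem_insert_self a s)
    cases b with
    | true =>
      refine ih φ (fun j hj => h1 j (Finset.mem_insert_of_mem hj)) (fun j hj => ?_)
      by_cases hja : j = a
      · exact ⟨i, by rw [hja, hb]; rfl⟩
      · exact h2 j (by simp [hja, hj])
    | false =>
      have : φ * inversion a ∈ N ⊔ Subgroup.zpowers (inversion i₀) := by
        refine ih _ (fun j hj => ?_) (fun j hj => ?_)
        · obtain ⟨t, ht⟩ := h1 j (Finset.mem_insert_of_mem hj)
          exact ⟨t, by rw [MulAut.mul_apply, inversion_of_ne (by rintro rfl; exact ha hj), ht]⟩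
        · by_cases hja : j = a
          · subst hja
            exact ⟨i, by simp [inversion_self, hb, letterVal]⟩
          · obtain ⟨k, hk⟩ := h2 j (by simp [hja, hj])
            exact ⟨k, by rw [MulAut.mul_apply, inversion_of_ne hja, hk]⟩
      have := Subgroup.mul_mem _ this (inversion_mem_sup hr i₀ a)
      rwa [mul_assoc, inversion_mul_self, mul_one] at this

lemma exists_mul_nielsenReduced
    (hr : ∀ (i : Fin n) (t : Fin n × Bool) (h : t.1 ≠ i), rmul i t h ∈ N) (ψ : FrAut n) :
    ∃ g ∈ N, NielsenReduced fun i => (ψ * g) (of i) := by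
  obtain ⟨m, ⟨⟨g, hg⟩, rfl⟩, hmin'⟩ := (inferInstance : WellFoundedLT (ℕ ×ₗ ℕ)).wf.has_min
    (Set.range fun g : N => ∑ i, weight ((ψ * g.1) (of i))) ⟨_, ⟨1, rfl⟩⟩
  have hmin : ∀ g' : N,
      ¬ (∑ i, weight ((ψ * g'.1) (of i)) < ∑ i, weight ((ψ * g) (of i))) :=
    fun g' => hmin' _ ⟨g', rfl⟩
  refine ⟨g, hg, ?_⟩
  have key : ∀ (i : Fin n) (h : FrAut n), h ∈ N → (∀ k, k ≠ i → h (of k) = of k) →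
      weight ((ψ * g) (of i)) ≤ weight ((ψ * g) (h (of i))) := by
    intro i h hh hk
    by_contra! hlt
    refine hmin ⟨g * h, N.mul_mem hg hh⟩ ?_
    apply Finset.sum_lt_sum
    · intro k _
      by_cases hki : k = i
      · subst hki
        exact hlt.le
      · simp [hk k hki]
    · exact ⟨i, Finset.mem_univ _, hlt⟩
  apply nielsenReduced_of_weight_le
  · intro s
    rw [← map_letterVal]
    intro h
    rw [map_eq_one_iff _ (ψ * g).injective] at h
    rcases s with ⟨j, _ | _⟩ <;> simp [letterVal, of_ne_one] at h
  · rintro ⟨i, b⟩ t hst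
    cases b with
    | true =>
      have := key i (rmul i t hst.symm) (hr _ _ _) (fun k hk => rmul_of_ne _ _ _ hk)
      rw [rmul_self, _root_.map_mul, map_letterVal] at this
      exact this
    | false =>
      have := key i (lmul i (t.1, !t.2) hst.symm) (lmul_mem hr _ _ _)
        (fun k hk => lmul_of_ne _ _ _ hk)
      rw [lmul_self, _root_.map_mul, map_letterVal, letterVal_not, ← weight_inv,
        ← weight_inv (_ * _), _root_.mul_inv_rev, inv_inv] at this
      exact this

lemma detρ_inversion (i : Fin n) : detρ n (inversion i) = -1 := by
  have : mat (inversion i) = Matrix.diagonal (Function.update 1 i (-1)) := by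
    ext a b
    by_cases hb : b = i
    · subst hb
      simp only [mat, Matrix.of_apply, inversion_self, Matrix.diagonal_apply]
      by_cases hab : a = b
      · subst hab; simp [expSum]
      · simp [expSum, hab, Ne.symm hab]
    · simp only [mat, Matrix.of_apply, inversion_of_ne hb, Matrix.diagonal_apply]
      by_cases hab : a = b
      · subst hab; simp [expSum, hb]
      · simp [expSum, hab, Ne.symm hab]
  apply Units.ext
  change (mat (inversion i)).det = -1
  rw [this, Matrix.det_diagonal, Finset.prod_update_of_mem (Finset.mem_univ i)]
  simp

theorem sAut_le_of_rmul_mem {i₀ j₀ : Fin n} (h₀ : j₀ ≠ i₀)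
    (hmem : rmul i₀ (j₀, true) h₀ ∈ N) (hNle : N ≤ SAut n) : SAut n ≤ N := by
  have hr := rmul_mem_of_rmul_mem h₀ hmem
  intro ψ hψ
  obtain ⟨g, hg, hred⟩ := exists_mul_nielsenReduced hr ψ
  set φ := ψ * g with hφ
  have hsp : ∀ j, ∃ t, φ⁻¹ (of j) = letterVal of t := by
    intro j
    have h1 := hred.length_le_norm (φ⁻¹ (of j)).toWord isReduced_toWord
    have h2 : lift (fun i => φ (of i)) (FreeGroup.mk (φ⁻¹ (of j)).toWord) = of j := by
      have e : lift (fun i => φ (of i)) = φ.toMonoidHom := FreeGroup.ext_hom _ _ (by simp)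
      rw [mk_toWord, e]
      exact φ.apply_symm_apply _
    rw [h2, norm_of] at h1
    have h3 : (φ⁻¹ (of j)).toWord ≠ [] := by
      rw [Ne, toWord_eq_nil_iff, map_eq_one_iff _ φ⁻¹.injective]
      exact of_ne_one j
    obtain ⟨s, hs⟩ := List.length_eq_one_iff.1
      (le_antisymm h1 (List.length_pos_iff.2 h3))
    refine ⟨s, ?_⟩
    rw [← mk_toWord (x := φ⁻¹ (of j)), hs]
    rcases s with ⟨k, _ | _⟩
    · rfl
    · rfl
  have h1 := signedPerm_mem_sup hr i₀ Finset.univ φ⁻¹ (fun j _ => hsp j) (by simp)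
  rw [Subgroup.inv_mem_iff, Subgroup.mem_sup_of_normal_left] at h1
  obtain ⟨a, ha, b, hb, hab⟩ := h1
  have hφdet : detρ n φ = 1 := (SAut n).mul_mem hψ (hNle hg)
  have hadet : detρ n a = 1 := hNle ha
  obtain ⟨k, rfl⟩ := Subgroup.mem_zpowers_iff.1 hb
  rw [← hab, _root_.map_mul, hadet, one_mul, map_zpow, detρ_inversion] at hφdet
  have hk : inversion i₀ ^ k = 1 := by
    rcases Int.even_or_odd k with h | h
    · obtain ⟨m, rfl⟩ := h
      rw [_root_.zpow_add, ← (Commute.refl _).mul_zpow, inversion_mul_self, _root_.one_zpow]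
    · rw [h.neg_one_zpow] at hφdet
      exact absurd hφdet (by decide)
  have hφN : φ ∈ N := by rw [← hab, hk, mul_one]; exact ha
  have : ψ = φ * g⁻¹ := by rw [hφ, mul_inv_cancel_right]
  rw [this]
  exact N.mul_mem hφN (N.inv_mem hg)

end Nielsen

section Finish

variable {n : ℕ}

lemma fixes_closure (f : FrAut n) (s : Set (FreeGroup (Fin n))) (h : ∀ x ∈ s, f x = x)
    {x : FreeGroup (Fin n)} (hx : x ∈ Subgroup.closure s) : f x = x := by
  induction hx using Subgroup.closure_induction with
  | mem x hx => exact h x hx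
  | one => simp
  | mul x y _ _ hx hy => rw [_root_.map_mul, hx, hy]
  | inv x _ hx => rw [_root_.map_inv, hx]

/-- The subgroup generated by all generators except `x_i`. -/
def omitGen (i : Fin n) : Subgroup (FreeGroup (Fin n)) := Subgroup.closure (of '' {i}ᶜ)

lemma of_mem_omitGen {i k : Fin n} (h : k ≠ i) : of k ∈ omitGen i :=
  Subgroup.subset_closure ⟨k, h, rfl⟩

lemma fixes_omitGen (f : FrAut n) (i : Fin n) (h : ∀ k, k ≠ i → f (of k) = of k)
    {x : FreeGroup (Fin n)} (hx : x ∈ omitGen i) : f x = x :=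
  fixes_closure f _ (by rintro _ ⟨k, hk, rfl⟩; exact h k hk) hx

lemma rmul_mem_of_exchange (N : Subgroup (FrAut n)) [hN : N.Normal] (f : FrAut n) (hf : f ∈ N)
    {i j l : Fin n} (hij : i ≠ j) (hil : l ≠ i) (hjl : l ≠ j)
    (hmap : (omitGen i).map f.toMonoidHom = omitGen j)
    {k m : FreeGroup (Fin n)} (hk : k ∈ omitGen j) (hm : m ∈ omitGen j)
    (hfi : f (of i) = k * of j * m) : rmul i (l, true) hil ∈ N := by
  set τ := lmul j (l, true) hjl with hτ
  set ψ := rmul i (j, true) hij.symm with hψ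
  have hτfix : ∀ {x}, x ∈ omitGen j → τ x = x := fun hx =>
    fixes_omitGen τ j (fun k hk => lmul_of_ne _ _ _ hk) hx
  have hψfix : ∀ {x}, x ∈ omitGen i → ψ x = x := fun hx =>
    fixes_omitGen ψ i (fun k hk => rmul_of_ne _ _ _ hk) hx
  have hτj : τ (of j) = of l * of j := by rw [hτ, lmul_self]; rfl
  have hψi : ψ (of i) = of i * of j := by rw [hψ, rmul_self]; rfl
  obtain ⟨x, hx, hfx⟩ : ∃ x ∈ omitGen i, f x = k * of l * k⁻¹ := by
    have : k * of l * k⁻¹ ∈ (omitGen i).map f.toMonoidHom := by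
      rw [hmap]
      exact Subgroup.mul_mem _ (Subgroup.mul_mem _ hk (of_mem_omitGen hjl)) (Subgroup.inv_mem _ hk)
    obtain ⟨x, hx, h⟩ := this
    exact ⟨x, hx, h⟩
  obtain ⟨τ', hτ'⟩ : ∃ τ', τ' = f⁻¹ * τ * f := ⟨_, rfl⟩
  have hτ'fix : ∀ {y}, y ∈ omitGen i → τ' y = y := fun {y} hy => by
    rw [hτ', MulAut.mul_apply, MulAut.mul_apply, hτfix, FrAut.inv_apply_eq]
    rw [← hmap]
    exact ⟨y, hy, rfl⟩
  have hτ'i : τ' (of i) = x * of i := by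
    rw [hτ', MulAut.mul_apply, MulAut.mul_apply, FrAut.inv_apply_eq, hfi, _root_.map_mul,
      _root_.map_mul, hτfix hk, hτfix hm, hτj, _root_.map_mul, hfx, hfi]
    group
  have hcomm : τ' * ψ = ψ * τ' := by
    apply FrAut.ext_of
    intro a
    by_cases ha : a = i
    · subst ha
      rw [MulAut.mul_apply, MulAut.mul_apply, hψi, hτ'i, _root_.map_mul, _root_.map_mul,
        hτ'fix (of_mem_omitGen hij.symm), hτ'i, hψi, hψfix hx, mul_assoc]
    · rw [MulAut.mul_apply, MulAut.mul_apply, hψfix (of_mem_omitGen ha),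
        hτ'fix (of_mem_omitGen ha), hψfix (of_mem_omitGen ha)]
  have hmem : τ'⁻¹ * τ ∈ N := by
    have e : τ'⁻¹ * τ = f⁻¹ * (τ⁻¹ * f * τ⁻¹⁻¹) := by rw [hτ']; group
    rw [e]
    exact N.mul_mem (N.inv_mem hf) (hN.conj_mem _ hf _)
  have e : rmul i (l, true) hil = τ' * ((τ'⁻¹ * τ) * (ψ * (τ'⁻¹ * τ)⁻¹ * ψ⁻¹)) * τ'⁻¹ := by
    have e1 : τ' * ((τ'⁻¹ * τ) * (ψ * (τ'⁻¹ * τ)⁻¹ * ψ⁻¹)) * τ'⁻¹ =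
        τ * ψ * τ⁻¹ * (τ' * (ψ⁻¹ * τ'⁻¹)) := by group
    have e2 : ψ⁻¹ * τ'⁻¹ = τ'⁻¹ * ψ⁻¹ := by rw [← _root_.mul_inv_rev, hcomm, _root_.mul_inv_rev]
    rw [e1, e2, mul_inv_cancel_left, eq_mul_inv_iff_mul_eq, eq_mul_inv_iff_mul_eq]
    apply FrAut.ext_of
    intro a
    simp only [MulAut.mul_apply]
    by_cases ha : a = i
    · subst ha
      rw [hτfix (of_mem_omitGen hij), hψi, _root_.map_mul, _root_.map_mul, rmul_self,
        rmul_of_ne _ _ _ hij.symm, hτfix (of_mem_omitGen hij), hτj, mul_assoc]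
      rfl
    · by_cases haj : a = j
      · subst haj
        rw [hψfix (of_mem_omitGen ha), hτj, _root_.map_mul, _root_.map_mul,
          rmul_of_ne _ _ _ hil, rmul_of_ne _ _ _ ha, rmul_of_ne _ _ _ hil, rmul_of_ne _ _ _ ha]
      · rw [hψfix (of_mem_omitGen ha), hτfix (of_mem_omitGen haj), rmul_of_ne _ _ _ ha,
          rmul_of_ne _ _ _ ha]
  rw [e]
  exact hN.conj_mem _ (N.mul_mem hmem (hN.conj_mem _ (N.inv_mem hmem) _)) _

end Finish

section ResiduallyTwo

/-- The nilpotent matrix with image and kernel spanned by `(i, 1)`. -/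
def nilMat (i : ℤ) : Matrix (Fin 2) (Fin 2) ℤ := !![i, -i * i; 1, -i]

lemma nilMat_mul_self (i : ℤ) : nilMat i * nilMat i = 0 := by
  ext a b
  fin_cases a <;> fin_cases b <;> (simp [nilMat, Matrix.mul_apply, Fin.sum_univ_two]; try ring)

/-- The parabolic matrix fixing `(i, 1)`. -/
def parab (i : ℤ) : (Matrix (Fin 2) (Fin 2) ℤ)ˣ where
  val := 1 + 8 • nilMat i
  inv := 1 - 8 • nilMat i
  val_inv := by
    rw [mul_sub, add_mul, add_mul, mul_one, one_mul, smul_mul_smul_comm, nilMat_mul_self]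
    simp
  inv_val := by
    rw [mul_add, sub_mul, sub_mul, mul_one, one_mul, smul_mul_smul_comm, nilMat_mul_self]
    simp

/-- Invertible integral matrices act on nonzero vectors. -/
local instance : MulAction (Matrix (Fin 2) (Fin 2) ℤ)ˣ {v : Fin 2 → ℤ // v ≠ 0} where
  smul A v := ⟨A.1.mulVec v.1, fun h => v.2 (by
    have := congrArg A⁻¹.1.mulVec h
    rwa [Matrix.mulVec_mulVec, Units.inv_mul, Matrix.one_mulVec, Matrix.mulVec_zero] at this)⟩
  one_smul v := Subtype.ext (Matrix.one_mulVec v.1)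
  mul_smul A B v := Subtype.ext (by
    change (A * B).1.mulVec v.1 = A.1.mulVec (B.1.mulVec v.1)
    rw [Matrix.mulVec_mulVec, Units.val_mul])

lemma parab_smul_zero (i : ℤ) (v : {v : Fin 2 → ℤ // v ≠ 0}) :
    (parab i • v).1 0 = v.1 0 + 8 * (v.1 0 - i * v.1 1) * i := by
  change (1 + 8 • nilMat i).mulVec v.1 0 = _
  simp [nilMat, Matrix.mulVec, dotProduct, Fin.sum_univ_two]
  ring

lemma parab_smul_one (i : ℤ) (v : {v : Fin 2 → ℤ // v ≠ 0}) :
    (parab i • v).1 1 = v.1 1 + 8 * (v.1 0 - i * v.1 1) := by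
  change (1 + 8 • nilMat i).mulVec v.1 1 = _
  simp [nilMat, Matrix.mulVec, dotProduct, Fin.sum_univ_two]
  ring

lemma parab_inv_smul_zero (i : ℤ) (v : {v : Fin 2 → ℤ // v ≠ 0}) :
    ((parab i)⁻¹ • v).1 0 = v.1 0 - 8 * (v.1 0 - i * v.1 1) * i := by
  change (1 - 8 • nilMat i).mulVec v.1 0 = _
  simp [nilMat, Matrix.mulVec, dotProduct, Fin.sum_univ_two]
  ring

lemma parab_inv_smul_one (i : ℤ) (v : {v : Fin 2 → ℤ // v ≠ 0}) :
    ((parab i)⁻¹ • v).1 1 = v.1 1 - 8 * (v.1 0 - i * v.1 1) := by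
  change (1 - 8 • nilMat i).mulVec v.1 1 = _
  simp [nilMat, Matrix.mulVec, dotProduct, Fin.sum_univ_two]
  ring

lemma eq_of_close {i j a b : ℤ} (h₁ : 2 * |a - i * b| < |b|) (h₂ : 2 * |a - j * b| < |b|) :
    i = j := by
  have hb : 0 < |b| := by have := abs_nonneg (a - i * b); omega
  have h3 : |(i - j) * b| ≤ |a - i * b| + |a - j * b| := by
    have := abs_sub (a - j * b) (a - i * b)
    calc |(i - j) * b| = |(a - j * b) - (a - i * b)| := by congr 1; ring
      _ ≤ _ := by linarith
  rw [abs_mul] at h3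
  have h4 : |i - j| < 1 := by
    by_contra! h
    nlinarith
  have := Int.abs_lt_one_iff.1 h4
  omega

open scoped Pointwise in
lemma lift_parab_injective (n : ℕ) [Nontrivial (Fin n)] :
    Function.Injective (lift fun i : Fin n => parab (i : ℤ)) := by
  set X : Fin n → Set {v : Fin 2 → ℤ // v ≠ 0} := fun i =>
    {v | 2 * |v.1 0 - i * v.1 1| < |v.1 1| ∧ 0 ≤ v.1 1 * (v.1 0 - i * v.1 1)} with hX
  set Y : Fin n → Set {v : Fin 2 → ℤ // v ≠ 0} := fun i =>
    {v | 2 * |v.1 0 - i * v.1 1| < |v.1 1| ∧ v.1 1 * (v.1 0 - i * v.1 1) < 0} with hY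
  have hcast : ∀ {i j : Fin n}, ((i : ℕ) : ℤ) = ((j : ℕ) : ℤ) → i = j := fun h =>
    Fin.ext (by exact_mod_cast h)
  refine FreeGroup.injective_lift_of_ping_pong _ X Y ?_ ?_ ?_ ?_ ?_ ?_
  · intro i
    refine ⟨⟨![(i : ℤ), 1], fun h => ?_⟩, ?_⟩
    · have := congrFun h 1
      simp at this
    · simp [hX]
  · intro i j hij
    exact Set.disjoint_left.2 fun v h1 h2 => hij (hcast (eq_of_close h1.1 h2.1))
  · intro i j hij
    exact Set.disjoint_left.2 fun v h1 h2 => hij (hcast (eq_of_close h1.1 h2.1))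
  · intro i j
    refine Set.disjoint_left.2 fun v h1 h2 => ?_
    obtain rfl := hcast (eq_of_close h1.1 h2.1)
    exact absurd h1.2 (not_le.2 h2.2)
  · rintro i _ ⟨v, hv, rfl⟩
    have e0 := parab_smul_zero i v
    have e1 := parab_smul_one i v
    change parab i • v ∈ X i
    simp only [hX, hY, Set.mem_ofPred_eq, Set.mem_compl_iff, not_and, not_lt] at hv ⊢
    have ht : (parab i • v).1 0 - i * (parab i • v).1 1 = v.1 0 - i * v.1 1 := by
      rw [e0, e1]; ring
    rw [ht, e1]
    have hv0 : v.1 0 - i * v.1 1 = 0 → v.1 1 ≠ 0 := by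
      intro h h'
      apply v.2
      ext a
      fin_cases a
      · simpa [h'] using h
      · exact h'
    generalize v.1 0 - i * v.1 1 = t at *
    generalize v.1 1 = b at *
    rcases lt_trichotomy t 0 with h | h | h
    · have hb : b ≤ -2 * t := by
        by_contra! hc
        have := hv (by rw [abs_of_neg h, abs_of_pos (by linarith)]; linarith)
        nlinarith
      rw [abs_of_neg h, abs_of_neg (by linarith)]
      exact ⟨by linarith, by nlinarith⟩
    · subst h
      simpa using hv0 rfl
    · have hb : -2 * t ≤ b := by
        by_contra! hc
        have := hv (by rw [abs_of_pos h, abs_of_neg (by linarith)]; linarith)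
        nlinarith
      rw [abs_of_pos h, abs_of_pos (by linarith)]
      exact ⟨by linarith, by nlinarith⟩
  · rintro i _ ⟨v, hv, rfl⟩
    have e0 := parab_inv_smul_zero i v
    have e1 := parab_inv_smul_one i v
    change (parab i)⁻¹ • v ∈ Y i
    simp only [hX, hY, Set.mem_ofPred_eq, Set.mem_compl_iff, not_and, not_le] at hv ⊢
    have ht : ((parab i)⁻¹ • v).1 0 - i * ((parab i)⁻¹ • v).1 1 = v.1 0 - i * v.1 1 := by
      rw [e0, e1]; ring
    rw [ht, e1]
    have hv0 : v.1 0 - i * v.1 1 = 0 → v.1 1 ≠ 0 := by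
      intro h h'
      apply v.2
      ext a
      fin_cases a
      · simpa [h'] using h
      · exact h'
    generalize v.1 0 - i * v.1 1 = t at *
    generalize v.1 1 = b at *
    rcases lt_trichotomy t 0 with h | h | h
    · have hb : 2 * t ≤ b := by
        by_contra! hc
        have := hv (by rw [abs_of_neg h, abs_of_neg (by linarith)]; linarith)
        nlinarith
      rw [abs_of_neg h, abs_of_pos (by linarith)]
      exact ⟨by linarith, by nlinarith⟩
    · subst h
      simpa using hv (by simpa using hv0 rfl)
    · have hb : b ≤ 2 * t := by
        by_contra! hc
        have := hv (by rw [abs_of_pos h, abs_of_pos (by linarith)]; linarith)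
        nlinarith
      rw [abs_of_pos h, abs_of_neg (by linarith)]
      exact ⟨by linarith, by nlinarith⟩

lemma one_add_two_mul_pow {R : Type*} [Ring R] (B : R) (m : ℕ) :
    ∃ C : R, (1 + 2 * B) ^ (2 ^ m) = 1 + 2 ^ (m + 1) * C := by
  induction m with
  | zero => exact ⟨B, by simp⟩
  | succ m ih =>
    obtain ⟨C, hC⟩ := ih
    refine ⟨C + 2 ^ m * (C * C), ?_⟩
    rw [pow_succ, pow_mul, hC, sq]
    have hcomm : C * 2 ^ (m + 1) = 2 ^ (m + 1) * C :=
      ((Nat.cast_commute 2 C).pow_left (m + 1)).eq.symm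
    have e : 2 ^ (m + 1) * C * (2 ^ (m + 1) * C) = 2 ^ (m + 1) * 2 ^ (m + 1) * (C * C) := by
      rw [mul_assoc, ← mul_assoc C, hcomm]; noncomm_ring
    have e' : (1 + 2 ^ (m + 1) * C) * (1 + 2 ^ (m + 1) * C) =
        1 + 2 * (2 ^ (m + 1) * C) + 2 ^ (m + 1) * C * (2 ^ (m + 1) * C) := by noncomm_ring
    rw [e', e, mul_add, ← mul_assoc, ← pow_succ', ← pow_add, add_assoc,
      ← mul_assoc _ (2 ^ m) (C * C), ← pow_add]
    congr 4
    ring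

theorem exists_two_group_hom_ne_one (n : ℕ) [Nontrivial (Fin n)] {g : FreeGroup (Fin n)}
    (hg : g ≠ 1) : ∃ (U : Type) (_ : Group U) (_ : Finite U) (φ : FreeGroup (Fin n) →* U),
      IsPGroup 2 U ∧ φ g ≠ 1 := by
  set θ := lift fun i : Fin n => parab (i : ℤ) with hθ
  have hform : ∀ w, ∃ B, (θ w).1 = 1 + 2 * B := by
    intro w
    induction w using FreeGroup.induction_on with
    | C1 => exact ⟨0, by simp⟩
    | of i =>
      refine ⟨4 • nilMat i, ?_⟩
      rw [hθ, lift_apply_of]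
      change 1 + 8 • nilMat i = _
      rw [two_mul, ← add_smul]
    | inv_of i _ =>
      refine ⟨-(4 • nilMat i), ?_⟩
      rw [hθ, _root_.map_inv, lift_apply_of]
      change 1 - 8 • nilMat i = _
      rw [two_mul, ← neg_add, ← add_smul, sub_eq_add_neg]
    | mul x y hx hy =>
      obtain ⟨B, hB⟩ := hx
      obtain ⟨C, hC⟩ := hy
      refine ⟨B + C + 2 * (B * C), ?_⟩
      rw [_root_.map_mul, Units.val_mul, hB, hC]
      noncomm_ring
  have hne : (θ g).1 ≠ 1 := fun h => hg (lift_parab_injective n (by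
    rw [← hθ, _root_.map_one]; exact Units.ext h))
  obtain ⟨a, b, hab⟩ : ∃ a b, (θ g).1 a b - (1 : Matrix (Fin 2) (Fin 2) ℤ) a b ≠ 0 := by
    by_contra! h
    exact hne (Matrix.ext fun a b => sub_eq_zero.1 (h a b))
  obtain ⟨k, hk⟩ : ∃ k : ℕ, ¬ ((2 ^ k : ℕ) : ℤ) ∣
      (θ g).1 a b - (1 : Matrix (Fin 2) (Fin 2) ℤ) a b := by
    refine ⟨((θ g).1 a b - (1 : Matrix (Fin 2) (Fin 2) ℤ) a b).natAbs, fun h => ?_⟩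
    have h1 := Int.natAbs_dvd_natAbs.2 h
    rw [Int.natAbs_natCast] at h1
    exact absurd (Nat.le_of_dvd (Int.natAbs_pos.2 hab) h1) (not_le.2 Nat.lt_two_pow_self)
  set r : Matrix (Fin 2) (Fin 2) ℤ →+* Matrix (Fin 2) (Fin 2) (ZMod (2 ^ k)) :=
    (Int.castRingHom (ZMod (2 ^ k))).mapMatrix with hr
  set φ := (Units.map r.toMonoidHom).comp θ with hφ
  have : NeZero (2 ^ k) := ⟨by positivity⟩
  refine ⟨φ.range, inferInstance, inferInstance, φ.rangeRestrict, ?_, ?_⟩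
  · rintro ⟨_, w, rfl⟩
    refine ⟨k, Subtype.ext (Units.ext ?_)⟩
    obtain ⟨B, hB⟩ := hform w
    change r (θ w).1 ^ 2 ^ k = 1
    rw [hB, _root_.map_add, _root_.map_one, _root_.map_mul, map_ofNat]
    obtain ⟨C, hC⟩ := one_add_two_mul_pow (r B) k
    rw [hC]
    have h2 : (2 : Matrix (Fin 2) (Fin 2) (ZMod (2 ^ k))) ^ k = 0 := by
      have : ((2 ^ k : ℕ) : Matrix (Fin 2) (Fin 2) (ZMod (2 ^ k))) = 0 := by
        rw [← Matrix.diagonal_natCast, ZMod.natCast_self]; simp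
      exact_mod_cast this
    rw [pow_succ, h2]
    simp
  · intro h
    have h1 : r (θ g).1 = 1 := congrArg (fun u => (u.1 : (Matrix _ _ _)ˣ).1) h
    have h2 := congrFun (congrFun h1 a) b
    apply hk
    rw [← ZMod.intCast_zmod_eq_zero_iff_dvd]
    have h3 : (((θ g).1 a b : ℤ) : ZMod (2 ^ k)) =
        (1 : Matrix (Fin 2) (Fin 2) (ZMod (2 ^ k))) a b :=
      h2
    rw [Int.cast_sub, h3, Matrix.one_apply, Matrix.one_apply]
    split_ifs <;> simp

end ResiduallyTwo

section KernelTorsion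

lemma eq_top_of_forall_mem_mul_commutator {P : Type*} [Group P] [Finite P] (hP : IsPGroup 2 P)
    (H : Subgroup P) (h : ∀ y : P, ∃ x ∈ H, y⁻¹ * x ∈ commutator P) : H = ⊤ := by
  have : Fact (Nat.Prime 2) := ⟨Nat.prime_two⟩
  have := hP.isNilpotent
  rcases eq_top_or_exists_le_coatom H with hH | ⟨M, hM, hHM⟩
  · exact hH
  exfalso
  have : M.Normal := Subgroup.NormalizerCondition.normal_of_coatom M
    Group.normalizerCondition_of_isNilpotent hM
  have hlt : commutator (P ⧸ M) < ⊤ := by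
    have : Nontrivial (P ⧸ M) := QuotientGroup.nontrivial_iff.2 hM.1
    have : Group.IsNilpotent (P ⧸ M) := inferInstance
    have : Group.IsSolvable (P ⧸ M) := inferInstance
    exact Group.IsSolvable.commutator_lt_top_of_nontrivial _
  have hle : commutator P ≤ (commutator (P ⧸ M)).comap (QuotientGroup.mk' M) := by
    rw [← Subgroup.map_le_iff_le_comap, map_commutator_eq]
    exact Subgroup.commutator_mono le_top le_top
  have hMle : M ≤ (commutator (P ⧸ M)).comap (QuotientGroup.mk' M) := by
    intro x hx
    rw [Subgroup.mem_comap, QuotientGroup.mk'_apply, (QuotientGroup.eq_one_iff x).2 hx]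
    exact one_mem _
  have htop : (commutator (P ⧸ M)).comap (QuotientGroup.mk' M) = ⊤ := by
    rw [eq_top_iff]
    intro y _
    obtain ⟨x, hx, hxy⟩ := h y
    have := Subgroup.mul_mem _ (hMle (hHM hx)) (Subgroup.inv_mem _ (hle hxy))
    simpa using this
  apply hlt.ne
  rw [eq_top_iff]
  intro q _
  obtain ⟨x, rfl⟩ := QuotientGroup.mk'_surjective M q
  have : x ∈ (commutator (P ⧸ M)).comap (QuotientGroup.mk' M) := htop ▸ Subgroup.mem_top x
  exact this

lemma mulAut_eq_one_of_commutator {P : Type*} [Group P] [Finite P] (hP : IsPGroup 2 P) {p : ℕ}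
    (hp : p.Prime) (hodd : Odd p) (σ : MulAut P) (hσ : σ ^ p = 1)
    (h : ∀ x, x⁻¹ * σ x ∈ commutator P) : σ = 1 := by
  classical
  have : Fact p.Prime := ⟨hp⟩
  have hfix : (σ.toMonoidHom.eqLocus (MonoidHom.id P)) = ⊤ := by
    apply eq_top_of_forall_mem_mul_commutator hP
    intro y
    let α := {x : P // y⁻¹ * x ∈ commutator P}
    have : Fintype α := Fintype.ofFinite _
    let s : Function.End α := fun x => ⟨σ x.1, by
      have := Subgroup.mul_mem _ x.2 (h x.1)
      simpa [mul_assoc] using this⟩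
    have hs : ∀ (k : ℕ) (x : α), ((s ^ k : Function.End α) x).1 = (σ ^ k) x.1 := by
      intro k
      induction k with
      | zero => intro x; rfl
      | succ k ih => intro x; rw [pow_succ, pow_succ]; exact ih (s x)
    have hsp : s ^ p ^ 1 = 1 := by
      funext x
      apply Subtype.ext
      rw [hs, pow_one, hσ]; rfl
    have hc := Equiv.Perm.card_fixedPoints_modEq hsp
    have hcard : ∃ k, Fintype.card α = 2 ^ k := by
      have : Fact (Nat.Prime 2) := ⟨Nat.prime_two⟩
      obtain ⟨k, hk⟩ := IsPGroup.iff_card.1 (hP.to_subgroup (commutator P))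
      refine ⟨k, ?_⟩
      rw [← hk, ← Nat.card_eq_fintype_card]
      exact Nat.card_congr ⟨fun x => ⟨_, x.2⟩, fun x => ⟨y * x.1, by simp [x.2]⟩,
        fun x => by simp, fun x => by simp⟩
    obtain ⟨k, hk⟩ := hcard
    have hne : Fintype.card (Function.fixedPoints s) ≠ 0 := by
      intro h0
      rw [h0, hk] at hc
      have h1 := hp.dvd_of_dvd_pow ((Nat.modEq_zero_iff_dvd).1 hc)
      rw [(Nat.prime_dvd_prime_iff_eq hp Nat.prime_two).1 h1] at hodd
      exact absurd hodd (by decide)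
    obtain ⟨⟨x, hx⟩⟩ := Fintype.card_pos_iff.1 (Nat.pos_of_ne_zero hne)
    exact ⟨x.1, congrArg Subtype.val hx, x.2⟩
  ext x
  have : x ∈ σ.toMonoidHom.eqLocus (MonoidHom.id P) := hfix ▸ Subgroup.mem_top x
  exact this

lemma hom_comm_apply_eq {n : ℕ} {A : Type*} [CommGroup A] (θ : FreeGroup (Fin n) →* A)
    (w : FreeGroup (Fin n)) : θ w = ∏ k, θ (of k) ^ (expSum k w).toAdd := by
  induction w using FreeGroup.induction_on with
  | C1 => simp
  | of i =>
    rw [Finset.prod_eq_single i]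
    · simp [expSum]
    · intro j _ hj; simp [expSum, Ne.symm hj]
    · simp
  | inv_of i ih => simpa using ih
  | mul x y hx hy => simp only [_root_.map_mul, hx, hy, toAdd_mul, _root_.zpow_add,
      Finset.prod_mul_distrib]

/-- A torsion automorphism of odd prime order acting trivially on the abelianization is trivial. -/
theorem eq_one_of_pow_prime_of_expSum {n : ℕ} [Nontrivial (Fin n)] {p : ℕ} (hp : p.Prime)
    (hodd : Odd p) (f : FrAut n) (hf : f ^ p = 1) (h : ∀ i w, expSum i (f w) = expSum i w) :
    f = 1 := by
  apply MulEquiv.ext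
  intro x
  by_contra hx
  have hg : x⁻¹ * f x ≠ 1 := fun h' => hx (inv_mul_eq_one.1 h').symm
  obtain ⟨U, _, _, φ, hU, hφ⟩ := exists_two_group_hom_ne_one n hg
  have : Finite (Subgroup.zpowers f) := by
    exact Set.Finite.to_subtype (finite_zpowers.2 (isOfFinOrder_iff_pow_eq_one.2 ⟨p, hp.pos, hf⟩))
  let Φ : FreeGroup (Fin n) →* (Subgroup.zpowers f → U) :=
    MonoidHom.pi fun h => φ.comp h.1.toMonoidHom
  have hK : ∀ w, f w ∈ Φ.ker ↔ w ∈ Φ.ker := by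
    intro w
    simp only [MonoidHom.mem_ker, funext_iff]
    constructor
    · intro H h
      have := H (h * ⟨f, Subgroup.mem_zpowers f⟩⁻¹)
      change φ ((h.1 * f⁻¹) (f w)) = 1 at this
      rwa [MulAut.mul_apply, MulAut.inv_apply_self] at this
    · intro H h
      exact H (h * ⟨f, Subgroup.mem_zpowers f⟩)
  let σ : MulAut (FreeGroup (Fin n) ⧸ Φ.ker) := QuotientGroup.congr Φ.ker Φ.ker f (by
    ext w
    constructor
    · rintro ⟨v, hv, rfl⟩
      exact (hK v).2 hv
    · intro hw
      exact ⟨f⁻¹ w, (hK _).1 (by simpa using hw), by simp⟩)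
  have hσ : ∀ (k : ℕ) (w : FreeGroup (Fin n)),
      (σ ^ k) (w : FreeGroup (Fin n) ⧸ Φ.ker) = ((f ^ k) w : FreeGroup (Fin n)) := by
    intro k
    induction k with
    | zero => intro w; rfl
    | succ k ih => intro w; rw [pow_succ, pow_succ]; exact ih (f w)
  have hσp : σ ^ p = 1 := by
    ext q
    obtain ⟨w, rfl⟩ := QuotientGroup.mk_surjective q
    rw [hσ, hf]; rfl
  have : Finite (FreeGroup (Fin n) ⧸ Φ.ker) :=
    Finite.of_injective _ (QuotientGroup.kerLift_injective Φ)
  have hP : IsPGroup 2 (FreeGroup (Fin n) ⧸ Φ.ker) := by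
    refine IsPGroup.of_injective ?_ _ (QuotientGroup.kerLift_injective Φ)
    have : Fact (Nat.Prime 2) := ⟨Nat.prime_two⟩
    obtain ⟨k, hk⟩ := IsPGroup.iff_card.1 hU
    apply IsPGroup.of_card (n := k * Nat.card (Subgroup.zpowers f))
    rw [Nat.card_fun, hk, pow_mul]
  have hone := mulAut_eq_one_of_commutator hP hp hodd σ hσp (by
    intro q
    obtain ⟨w, rfl⟩ := QuotientGroup.mk_surjective q
    rw [← Abelianization.ker_of, MonoidHom.mem_ker, _root_.map_mul, _root_.map_inv, inv_mul_eq_one]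
    let θ := (Abelianization.of (G := FreeGroup (Fin n) ⧸ Φ.ker)).comp (QuotientGroup.mk' Φ.ker)
    change θ w = θ (f w)
    rw [hom_comm_apply_eq θ w, hom_comm_apply_eq θ (f w)]
    simp only [h])
  have hx1 : (σ x : FreeGroup (Fin n) ⧸ Φ.ker) = x := by rw [hone]; rfl
  have hx2 : x⁻¹ * f x ∈ Φ.ker := QuotientGroup.eq.1 hx1.symm
  exact hφ (congrFun hx2 1)

end KernelTorsion

section Cuts

variable {G : Type*} [Group G]

/-- The points where membership in `C` changes after right multiplication by `g`. -/
def coboundary (C : Set G) (g : G) : Set G := {x | ¬(x ∈ C ↔ x * g ∈ C)}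

/-- A set is almost invariant if right multiplications only change finitely many memberships. -/
def AlmostInvariant (C : Set G) : Prop := ∀ g, (coboundary C g).Finite

open Classical in
/-- The integral indicator function of a set. -/
noncomputable def ind (C : Set G) (x : G) : ℤ := if x ∈ C then 1 else 0

/-- The homomorphism counting the signed change of an almost invariant set. -/
noncomputable def cutHom (C : Set G) (g : G) : ℤ := ∑ᶠ x, (ind C (x * g) - ind C x)

lemma mem_coboundary {C : Set G} {g x : G} : x ∈ coboundary C g ↔ ¬(x ∈ C ↔ x * g ∈ C) :=
  Iff.rfl

lemma coboundary_compl (C : Set G) (g : G) : coboundary Cᶜ g = coboundary C g := by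
  ext x; simp only [mem_coboundary, Set.mem_compl_iff]; tauto

lemma AlmostInvariant.compl {C : Set G} (hC : AlmostInvariant C) : AlmostInvariant Cᶜ := by
  intro g; rw [coboundary_compl]; exact hC g

lemma coboundary_inter_subset (C D : Set G) (g : G) :
    coboundary (C ∩ D) g ⊆ coboundary C g ∪ coboundary D g := by
  intro x; simp only [mem_coboundary, Set.mem_inter_iff, Set.mem_union]; tauto

lemma AlmostInvariant.inter {C D : Set G} (hC : AlmostInvariant C) (hD : AlmostInvariant D) :
    AlmostInvariant (C ∩ D) := fun g =>
  ((hC g).union (hD g)).subset (coboundary_inter_subset C D g)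

lemma AlmostInvariant.union {C D : Set G} (hC : AlmostInvariant C) (hD : AlmostInvariant D) :
    AlmostInvariant (C ∪ D) := by
  have := (hC.compl.inter hD.compl).compl
  rwa [Set.compl_inter, compl_compl, compl_compl] at this

lemma almostInvariant_of_closure {C : Set G} {S : Set G} (hS : Subgroup.closure S = ⊤)
    (h : ∀ s ∈ S, (coboundary C s).Finite) : AlmostInvariant C := by
  intro g
  have hg : g ∈ Subgroup.closure S := hS ▸ Subgroup.mem_top g
  induction hg using Subgroup.closure_induction with
  | mem s hs => exact h s hs
  | one => convert Set.finite_empty; ext x; simp [mem_coboundary]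
  | mul a b _ _ ha hb =>
    refine (ha.union (hb.preimage (mul_left_injective a).injOn)).subset ?_
    intro x hx
    simp only [mem_coboundary, Set.mem_union, Set.mem_preimage, ← mul_assoc] at *
    tauto
  | inv a _ ha =>
    refine (ha.preimage (mul_left_injective a⁻¹).injOn).subset ?_
    intro x hx
    simp only [mem_coboundary, Set.mem_preimage, inv_mul_cancel_right] at *
    tauto

lemma ind_sub_support (C : Set G) (g : G) :
    (Function.support fun x => ind C (x * g) - ind C x) = coboundary C g := by
  ext x
  simp only [Function.mem_support, ind, mem_coboundary]
  split_ifs <;> simp_all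

lemma cutHom_mul {C : Set G} (hC : AlmostInvariant C) (g h : G) :
    cutHom C (g * h) = cutHom C g + cutHom C h := by
  have e : cutHom C h = ∑ᶠ x, (ind C (x * g * h) - ind C (x * g)) :=
    (finsum_comp_equiv (Equiv.mulRight g) (f := fun x => ind C (x * h) - ind C x)).symm
  rw [e, cutHom, cutHom, ← finsum_add_distrib]
  · apply finsum_congr
    intro x
    rw [mul_assoc]; ring
  · rw [Function.HasFiniteSupport, ind_sub_support]; exact hC g
  · have : (Function.support fun x => ind C (x * g * h) - ind C (x * g)) =
        (fun x => x * g) ⁻¹' coboundary C h := by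
      rw [← ind_sub_support]; rfl
    rw [Function.HasFiniteSupport, this]
    exact (hC h).preimage (mul_left_injective g).injOn

lemma cutHom_inter_add_union {C D : Set G} (hC : AlmostInvariant C) (hD : AlmostInvariant D)
    (g : G) : cutHom (C ∩ D) g + cutHom (C ∪ D) g = cutHom C g + cutHom D g := by
  simp only [cutHom]
  rw [← finsum_add_distrib, ← finsum_add_distrib]
  · apply finsum_congr
    intro x
    simp only [ind, Set.mem_inter_iff, Set.mem_union]
    split_ifs <;> simp_all
  all_goals rw [Function.HasFiniteSupport, ind_sub_support]
  · exact hC g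
  · exact hD g
  · exact hC.inter hD g
  · exact hC.union hD g

lemma cutHom_compl (C : Set G) (g : G) : cutHom Cᶜ g = - cutHom C g := by
  rw [cutHom, cutHom, ← finsum_neg_distrib]
  apply finsum_congr
  intro x
  simp only [ind, Set.mem_compl_iff]
  split_ifs <;> simp_all

lemma cutHom_empty (g : G) : cutHom (∅ : Set G) g = 0 := by
  simp [cutHom, ind]

variable (T : G ≃ G) (φ : MulAut G)

lemma coboundary_image (hT : ∀ x g, T (x * g) = T x * φ g) (C : Set G) (g : G) :
    coboundary (T '' C) (φ g) = T '' coboundary C g := by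
  ext x
  obtain ⟨y, rfl⟩ := T.surjective x
  rw [T.injective.mem_set_image, mem_coboundary, mem_coboundary, ← hT,
    T.injective.mem_set_image, T.injective.mem_set_image]

lemma AlmostInvariant.image {C : Set G} (hC : AlmostInvariant C)
    (hT : ∀ x g, T (x * g) = T x * φ g) : AlmostInvariant (T '' C) := by
  intro g
  obtain ⟨g, rfl⟩ := φ.surjective g
  rw [coboundary_image T φ hT]
  exact (hC g).image _

lemma cutHom_image (hT : ∀ x g, T (x * g) = T x * φ g) (C : Set G) (g : G) :
    cutHom (T '' C) (φ g) = cutHom C g := by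
  rw [cutHom, cutHom, ← finsum_comp_equiv T]
  apply finsum_congr
  intro x
  have h : ∀ y, ind (T '' C) (T y) = ind C y := fun y => by
    by_cases hy : y ∈ C
    · rw [ind, ind, if_pos hy, if_pos (T.injective.mem_set_image.2 hy)]
    · rw [ind, ind, if_neg hy, if_neg (mt T.injective.mem_set_image.1 hy)]
  rw [← hT, h, h]

/-- Two sets are nested if one of the four corners they form is empty. -/
def Nested {X : Type*} (C D : Set X) : Prop := C ⊆ D ∨ D ⊆ C ∨ C ∩ D = ∅ ∨ C ∪ D = Set.univ

end Cuts

section BasicCuts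

variable {n : ℕ}

/-- The reduced words starting with `i`, described through the last letter of the inverse. -/
def basicCut (i : Fin n) : Set (FreeGroup (Fin n)) :=
  {w | (toWord w⁻¹).getLast? = some (i, false)}

lemma mem_basicCut_mul_of (i j : Fin n) (x : FreeGroup (Fin n)) :
    x * of j ∈ basicCut i ↔ x ∈ basicCut i ∨ (x = 1 ∧ i = j) := by
  have e : toWord (x * of j)⁻¹ = reduce ((j, false) :: toWord x⁻¹) := by
    rw [_root_.mul_inv_rev]
    conv_lhs => rw [← mk_toWord (x := x⁻¹), ← mk_toWord (x := (of j)⁻¹)]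
    rw [mul_mk, toWord_mk, toWord_inv]
    rfl
  have hx : x = 1 ↔ toWord x⁻¹ = [] := by rw [toWord_eq_nil_iff, inv_eq_one]
  rw [basicCut, Set.mem_ofPred_eq, Set.mem_ofPred_eq, e, hx, reduce.cons, reduce_toWord]
  rcases toWord x⁻¹ with _ | ⟨⟨a, b⟩, l⟩
  · simp [eq_comm]
  · simp only
    split_ifs with h
    · rcases l with _ | ⟨c, l⟩
      · simp at h ⊢
        obtain ⟨_, rfl⟩ := h
        simp
      · simp
    · simp

lemma coboundary_basicCut (i j : Fin n) :
    coboundary (basicCut i) (of j) = if i = j then {1} else ∅ := by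
  have h1 : (1 : FreeGroup (Fin n)) ∉ basicCut i := by simp [basicCut]
  ext x
  rw [mem_coboundary, mem_basicCut_mul_of]
  split_ifs with h
  · rw [Set.mem_singleton_iff]
    constructor
    · tauto
    · rintro rfl; tauto
  · simp [h]

lemma almostInvariant_basicCut (i : Fin n) : AlmostInvariant (basicCut i) := by
  apply almostInvariant_of_closure (FreeGroup.closure_range_of (Fin n))
  rintro _ ⟨j, rfl⟩
  rw [coboundary_basicCut]
  split_ifs
  · exact Set.finite_singleton _
  · exact Set.finite_empty

lemma cutHom_basicCut (i : Fin n) (w : FreeGroup (Fin n)) :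
    cutHom (basicCut i) w = (expSum i w).toAdd := by
  let θ : FreeGroup (Fin n) →* Multiplicative ℤ :=
    MonoidHom.mk' (fun g => Multiplicative.ofAdd (cutHom (basicCut i) g)) fun a b => by
      rw [cutHom_mul (almostInvariant_basicCut i), ofAdd_add]
  suffices θ = expSum i from congrArg Multiplicative.toAdd (DFunLike.congr_fun this w)
  ext j
  change cutHom (basicCut i) (of j) = _
  have h1 : (1 : FreeGroup (Fin n)) ∉ basicCut i := by simp [basicCut]
  have hs := ind_sub_support (basicCut i) (of j)
  rw [coboundary_basicCut] at hs
  by_cases h : i = j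
  · subst h
    rw [if_pos rfl] at hs
    rw [cutHom, finsum_eq_single _ 1]
    · simp only [ind, mem_basicCut_mul_of, h1]
      simp [expSum]
    · intro x hx
      by_contra h0
      exact hx (hs.subset h0)
  · rw [if_neg h] at hs
    rw [cutHom, finsum_eq_zero_of_forall_eq_zero]
    · simp [expSum, Ne.symm h]
    · intro x
      by_contra h0
      exact hs.subset h0

end BasicCuts

section Bonds

variable {V : Type*}

/-- A set is connected for a relation if no proper nonempty subset splits off. -/
def RelConnected (R : V → V → Prop) (C : Set V) : Prop :=
  ∀ B ⊆ C, B.Nonempty → (C \ B).Nonempty → ∃ x ∈ B, ∃ y ∈ C \ B, R x y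

/-- The directed edges leaving a set. -/
def outEdges (R : V → V → Prop) (C : Set V) : Set (V × V) :=
  {e | R e.1 e.2 ∧ e.1 ∈ C ∧ e.2 ∉ C}

lemma exists_finset_of_reflTransGen {R : V → V → Prop} {x y : V} (h : Relation.ReflTransGen R x y) :
    ∃ T : Finset (V × V), (∀ e ∈ T, R e.1 e.2) ∧
      ∀ C : Set V, x ∈ C → y ∉ C → ∃ e ∈ T, e.1 ∈ C ∧ e.2 ∉ C := by
  classical
  induction h with
  | refl => exact ⟨∅, by simp, fun C h1 h2 => absurd h1 h2⟩
  | @tail b c _ hbc ih =>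
    obtain ⟨T, hT, hC⟩ := ih
    refine ⟨insert (b, c) T, ?_, ?_⟩
    · intro e he
      rcases Finset.mem_insert.1 he with rfl | he
      · exact hbc
      · exact hT e he
    · intro C hx hc
      by_cases hb : b ∈ C
      · exact ⟨(b, c), Finset.mem_insert_self _ _, hb, hc⟩
      · obtain ⟨e, he, h⟩ := hC C hx hb
        exact ⟨e, Finset.mem_insert_of_mem he, h⟩

lemma RelConnected.subset_of_reachable {R : V → V → Prop} {C : Set V} (hC : RelConnected R C)
    {x : V} (hx : x ∈ C) : C ⊆ {z | Relation.ReflTransGen R x z} := by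
  intro z hz
  by_contra hzn
  obtain ⟨a, ha, b, hb, hab⟩ := hC (C ∩ {z | Relation.ReflTransGen R x z})
    Set.inter_subset_left ⟨x, hx, Relation.ReflTransGen.refl⟩ ⟨z, hz, fun h => hzn h.2⟩
  exact hb.2 ⟨hb.1, ha.2.tail hab⟩

/-- Only finitely many bonds with a bounded number of edges contain a given edge. -/
theorem finite_bonds (k : ℕ) : ∀ (R : V → V → Prop) (_ : ∀ a b, R a b → R b a) (x y : V)
    (_ : R x y), {C : Set V | x ∈ C ∧ y ∉ C ∧ RelConnected R C ∧ RelConnected R Cᶜ ∧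
      (outEdges R C).Finite ∧ (outEdges R C).ncard ≤ k}.Finite := by
  induction k with
  | zero =>
    intro R _ x y hxy
    convert Set.finite_empty
    ext C
    simp only [Set.mem_ofPred_eq, Set.mem_empty_iff_false, iff_false]
    rintro ⟨hx, hy, -, -, hfin, h0⟩
    rw [Nat.le_zero, Set.ncard_eq_zero hfin] at h0
    exact h0.subset (show (x, y) ∈ outEdges R C from ⟨hxy, hx, hy⟩)
  | succ k ih =>
    intro R hsymm x y hxy
    let R' : V → V → Prop := fun a b => R a b ∧ ¬(a = x ∧ b = y) ∧ ¬(a = y ∧ b = x)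
    have hsymm' : ∀ a b, R' a b → R' b a := fun a b h => ⟨hsymm _ _ h.1, by tauto, by tauto⟩
    have hkey : ∀ C : Set V, x ∈ C → y ∉ C → RelConnected R C → RelConnected R Cᶜ →
        (outEdges R C).Finite → (outEdges R C).ncard ≤ k + 1 → RelConnected R' C ∧
          RelConnected R' Cᶜ ∧ (outEdges R' C).Finite ∧ (outEdges R' C).ncard ≤ k := by
      intro C hx hy h1 h2 hfin hcard
      have hsub : outEdges R' C ⊆ outEdges R C \ {(x, y)} := by
        rintro ⟨a, b⟩ ⟨h, h'⟩
        refine ⟨⟨h.1, h'⟩, fun he => h.2.1 ?_⟩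
        simpa using he
      refine ⟨?_, ?_, hfin.subset (hsub.trans Set.sdiff_subset), ?_⟩
      · intro B hB hne hne'
        obtain ⟨a, ha, b, hb, hab⟩ := h1 B hB hne hne'
        exact ⟨a, ha, b, hb, hab, fun h => hy (h.2 ▸ hb.1), fun h => hy (h.1 ▸ hB ha)⟩
      · intro B hB hne hne'
        obtain ⟨a, ha, b, hb, hab⟩ := h2 B hB hne hne'
        exact ⟨a, ha, b, hb, hab, fun h => hB ha (h.1 ▸ hx), fun h => hb.1 (h.2 ▸ hx)⟩
      · have := Set.ncard_le_ncard hsub (hfin.subset Set.sdiff_subset)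
        rw [Set.ncard_sdiff_singleton_of_mem (show (x, y) ∈ outEdges R C from ⟨hxy, hx, hy⟩)]
          at this
        omega
    by_cases hreach : Relation.ReflTransGen R' x y
    · obtain ⟨T, hT, hcut⟩ := exists_finset_of_reflTransGen hreach
      refine (Set.Finite.biUnion T.finite_toSet
        fun e he => ih R' hsymm' e.1 e.2 (hT e he)).subset ?_
      rintro C ⟨hx, hy, h1, h2, hfin, hcard⟩
      obtain ⟨e, he, he1, he2⟩ := hcut C hx hy
      obtain ⟨a, b, c, d⟩ := hkey C hx hy h1 h2 hfin hcard
      exact Set.mem_biUnion he ⟨he1, he2, a, b, c, d⟩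
    · refine (Set.finite_singleton {z | Relation.ReflTransGen R' x z}).subset ?_
      rintro C ⟨hx, hy, h1, h2, hfin, hcard⟩
      obtain ⟨a, b, c, d⟩ := hkey C hx hy h1 h2 hfin hcard
      rw [Set.mem_singleton_iff]
      apply (a.subset_of_reachable hx).antisymm
      intro z hz
      by_contra hzC
      have hyz : Relation.ReflTransGen R' y z := b.subset_of_reachable hy hzC
      have : Std.Symm R' := ⟨hsymm'⟩
      have hzy : Relation.ReflTransGen R' z y := Std.Symm.symm _ _ hyz
      exact hreach (hz.trans hzy)

end Bonds

section MinimalCuts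

variable {G : Type*} [Group G]

/-- The almost invariant sets whose homomorphism is moved by the automorphism. -/
def Moved (f : MulAut G) (C : Set G) : Prop :=
  AlmostInvariant C ∧ ∃ g, cutHom C (f g) ≠ cutHom C g

/-- The number of boundary edges of a set in the Cayley graph of a finite set. -/
noncomputable def energy (S : Finset G) (C : Set G) : ℕ := ∑ s ∈ S, (coboundary C s).ncard

/-- Minimizers of a natural number valued function among the sets with some property. -/
def Minimizes {X : Type*} (P : Set X → Prop) (e : Set X → ℕ) (C : Set X) : Prop :=
  P C ∧ ∀ D, P D → e C ≤ e D

lemma exists_minimizes {X : Type*} {P : Set X → Prop} (e : Set X → ℕ) (h : ∃ C, P C) :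
    ∃ C, Minimizes P e C := by
  classical
  have h' : ∃ k, ∃ C, P C ∧ e C = k := h.elim fun C hC => ⟨_, C, hC, rfl⟩
  obtain ⟨C, hC, hk⟩ := Nat.find_spec h'
  exact ⟨C, hC, fun D hD => hk ▸ Nat.find_min' h' ⟨D, hD, rfl⟩⟩

lemma Minimizes.map {X : Type*} {P : Set X → Prop} {e : Set X → ℕ} {C : Set X}
    (h : Minimizes P e C) (t : Set X → Set X) (hP : ∀ D, P D → P (t D)) (he : ∀ D, e (t D) = e D) :
    Minimizes P e (t C) :=
  ⟨hP C h.1, fun D hD => (he C).trans_le (h.2 D hD)⟩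

lemma Moved.image {f : MulAut G} {C : Set G} (h : Moved f C) (T : G ≃ G) (φ : MulAut G)
    (hT : ∀ x g, T (x * g) = T x * φ g) (hφ : ∀ g, φ (f g) = f (φ g)) : Moved f (T '' C) := by
  refine ⟨h.1.image T φ hT, ?_⟩
  obtain ⟨g, hg⟩ := h.2
  refine ⟨φ g, ?_⟩
  rwa [← hφ, cutHom_image T φ hT, cutHom_image T φ hT]

lemma Moved.compl {f : MulAut G} {C : Set G} (h : Moved f C) : Moved f Cᶜ := by
  refine ⟨h.1.compl, ?_⟩
  obtain ⟨g, hg⟩ := h.2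
  exact ⟨g, by rw [cutHom_compl, cutHom_compl]; exact fun h => hg (neg_injective h)⟩

lemma Moved.nonempty {f : MulAut G} {C : Set G} (h : Moved f C) : C.Nonempty := by
  rw [Set.nonempty_iff_ne_empty]
  rintro rfl
  obtain ⟨g, hg⟩ := h.2
  exact hg (by rw [cutHom_empty, cutHom_empty])

lemma Moved.compl_nonempty {f : MulAut G} {C : Set G} (h : Moved f C) : Cᶜ.Nonempty :=
  h.compl.nonempty

lemma Moved.split {f : MulAut G} {B C D : Set G} (h : Moved f C) (hB : AlmostInvariant B)
    (hD : AlmostInvariant D) (hdisj : B ∩ D = ∅) (hun : B ∪ D = C) : Moved f B ∨ Moved f D := by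
  by_contra hcon
  push Not at hcon
  obtain ⟨g, hg⟩ := h.2
  apply hg
  have e : ∀ g, cutHom C g = cutHom B g + cutHom D g := by
    intro g
    rw [← cutHom_inter_add_union hB hD, hdisj, hun, cutHom_empty, zero_add]
  have e1 : cutHom B (f g) = cutHom B g := by
    by_contra h'; exact hcon.1 ⟨hB, g, h'⟩
  have e2 : cutHom D (f g) = cutHom D g := by
    by_contra h'; exact hcon.2 ⟨hD, g, h'⟩
  rw [e, e, e1, e2]

lemma energy_compl (S : Finset G) (C : Set G) : energy S Cᶜ = energy S C := by
  simp only [energy, coboundary_compl]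

lemma energy_image {S : Finset G} (T : G ≃ G) (φ : MulAut G)
    (hT : ∀ x g, T (x * g) = T x * φ g) (hS : ∀ s, φ s ∈ S ↔ s ∈ S) (C : Set G) :
    energy S (T '' C) = energy S C := by
  symm
  apply Finset.sum_equiv φ.toEquiv
  · intro s; exact (hS s).symm
  · intro s _
    change _ = (coboundary (T '' C) (φ s)).ncard
    rw [coboundary_image T φ hT, Set.ncard_image_of_injective _ T.injective]

lemma ncard_coboundary_inter_add_union {C D : Set G} (hC : AlmostInvariant C)
    (hD : AlmostInvariant D) (g : G) :
    (coboundary (C ∩ D) g).ncard + (coboundary (C ∪ D) g).ncard ≤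
      (coboundary C g).ncard + (coboundary D g).ncard := by
  rw [← Set.ncard_union_add_ncard_inter _ _ (hC.inter hD g) (hC.union hD g),
    ← Set.ncard_union_add_ncard_inter _ _ (hC g) (hD g)]
  apply Nat.add_le_add
  · refine Set.ncard_le_ncard ?_ ((hC g).union (hD g))
    intro x
    simp only [mem_coboundary, Set.mem_inter_iff, Set.mem_union]; tauto
  · refine Set.ncard_le_ncard ?_ ((hC g).inter_of_left _)
    intro x
    simp only [mem_coboundary, Set.mem_inter_iff, Set.mem_union]; tauto

lemma ncard_coboundary_inter_add_union_lt {C D : Set G} (hC : AlmostInvariant C)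
    (hD : AlmostInvariant D) {v u : G} (hv : v ∈ C \ D) (hu : u ∈ D \ C) :
    (coboundary (C ∩ D) (v⁻¹ * u)).ncard + (coboundary (C ∪ D) (v⁻¹ * u)).ncard <
      (coboundary C (v⁻¹ * u)).ncard + (coboundary D (v⁻¹ * u)).ncard := by
  set g := v⁻¹ * u with hg
  have hvg : v * g = u := by rw [hg]; group
  rw [← Set.ncard_union_add_ncard_inter _ _ (hC.inter hD g) (hC.union hD g),
    ← Set.ncard_union_add_ncard_inter _ _ (hC g) (hD g)]
  apply Nat.add_lt_add_of_le_of_lt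
  · refine Set.ncard_le_ncard ?_ ((hC g).union (hD g))
    intro x
    simp only [mem_coboundary, Set.mem_inter_iff, Set.mem_union]; tauto
  · refine Set.ncard_lt_ncard ⟨?_, fun h => ?_⟩ ((hC g).inter_of_left _)
    · intro x
      simp only [mem_coboundary, Set.mem_inter_iff, Set.mem_union]; tauto
    · have hv1 : v ∈ coboundary C g ∩ coboundary D g := by
        simp only [mem_coboundary, Set.mem_inter_iff, hvg]
        exact ⟨fun h => hu.2 (h.1 hv.1), fun h => hv.2 (h.2 hu.1)⟩
      have hv2 := (h hv1).1
      simp only [mem_coboundary, Set.mem_inter_iff, hvg] at hv2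
      exact hv2 ⟨fun h => absurd h.2 hv.2, fun h => absurd h.1 hu.2⟩

lemma energy_inter_add_union {C D : Set G} (S : Finset G) (hC : AlmostInvariant C)
    (hD : AlmostInvariant D) : energy S (C ∩ D) + energy S (C ∪ D) ≤ energy S C + energy S D := by
  simp only [energy, ← Finset.sum_add_distrib]
  exact Finset.sum_le_sum fun s _ => ncard_coboundary_inter_add_union hC hD s

lemma energy_inter_add_union_lt {C D : Set G} (S : Finset G) (hC : AlmostInvariant C)
    (hD : AlmostInvariant D) {v u : G} (hv : v ∈ C \ D) (hu : u ∈ D \ C) (hS : v⁻¹ * u ∈ S) :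
    energy S (C ∩ D) + energy S (C ∪ D) < energy S C + energy S D := by
  simp only [energy, ← Finset.sum_add_distrib]
  exact Finset.sum_lt_sum (fun s _ => ncard_coboundary_inter_add_union hC hD s)
    ⟨_, hS, ncard_coboundary_inter_add_union_lt hC hD hv hu⟩

/-- Adjacency in the Cayley graph. -/
def cayleyRel (S : Finset G) (x y : G) : Prop := x⁻¹ * y ∈ S

lemma eq_univ_of_energy_eq_zero {S : Finset G} (hgen : Subgroup.closure (S : Set G) = ⊤)
    {C : Set G} (hC : AlmostInvariant C) (h0 : energy S C = 0) (hne : C.Nonempty) :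
    C = Set.univ := by
  have hstep : ∀ s ∈ S, ∀ x, x ∈ C ↔ x * s ∈ C := by
    intro s hs x
    by_contra hx
    have := (Finset.sum_eq_zero_iff.1 h0) s hs
    rw [Set.ncard_eq_zero (hC s)] at this
    exact this.subset hx
  have hall : ∀ g, ∀ x, x ∈ C ↔ x * g ∈ C := by
    intro g
    have hg : g ∈ Subgroup.closure (S : Set G) := hgen ▸ Subgroup.mem_top g
    induction hg using Subgroup.closure_induction with
    | mem s hs => exact hstep s hs
    | one => simp
    | mul a b _ _ ha hb => intro x; rw [ha, hb, mul_assoc]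
    | inv a _ ha => intro x; rw [ha (x * a⁻¹), inv_mul_cancel_right]
  obtain ⟨x, hx⟩ := hne
  rw [Set.eq_univ_iff_forall]
  intro y
  simpa using (hall (x⁻¹ * y) x).1 hx

lemma relConnected_of_minimizes {f : MulAut G} {S : Finset G} (hinv : ∀ s ∈ S, s⁻¹ ∈ S)
    (hgen : Subgroup.closure (S : Set G) = ⊤) {C : Set G}
    (hC : Minimizes (Moved f) (energy S) C) : RelConnected (cayleyRel S) C := by
  intro B hBC hB hCB
  by_contra hcon
  push Not at hcon
  have hno : ∀ s ∈ S, ∀ x, ¬(x ∈ B ∧ x * s ∈ C \ B) ∧ ¬(x ∈ C \ B ∧ x * s ∈ B) := by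
    intro s hs x
    refine ⟨fun h => hcon x h.1 _ h.2 (by simpa [cayleyRel] using hs), fun h => ?_⟩
    exact hcon _ h.2 _ h.1 (by simpa [cayleyRel] using hinv s hs)
  have hsub1 : ∀ s ∈ S, coboundary B s ⊆ coboundary C s := by
    intro s hs x hx
    have := hno s hs x
    have h1 := @hBC x
    have h2 := @hBC (x * s)
    simp only [mem_coboundary, Set.mem_sdiff] at *
    tauto
  have hsub2 : ∀ s ∈ S, coboundary (C \ B) s ⊆ coboundary C s := by
    intro s hs x hx
    have := hno s hs x
    have h1 := @hBC x
    have h2 := @hBC (x * s)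
    simp only [mem_coboundary, Set.mem_sdiff] at *
    tauto
  have hdisj : ∀ s ∈ S, Disjoint (coboundary B s) (coboundary (C \ B) s) := by
    intro s hs
    rw [Set.disjoint_left]
    intro x hx hx'
    have := hno s hs x
    have h1 := @hBC x
    have h2 := @hBC (x * s)
    simp only [mem_coboundary, Set.mem_sdiff] at *
    tauto
  have hAB : AlmostInvariant B := almostInvariant_of_closure hgen fun s hs =>
    (hC.1.1 s).subset (hsub1 s hs)
  have hAD : AlmostInvariant (C \ B) := almostInvariant_of_closure hgen fun s hs =>
    (hC.1.1 s).subset (hsub2 s hs)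
  have hle : energy S B + energy S (C \ B) ≤ energy S C := by
    simp only [energy, ← Finset.sum_add_distrib]
    refine Finset.sum_le_sum fun s hs => ?_
    rw [← Set.ncard_union_eq (hdisj s hs) (hAB s) (hAD s)]
    exact Set.ncard_le_ncard (Set.union_subset (hsub1 s hs) (hsub2 s hs)) (hC.1.1 s)
  obtain ⟨b, hb⟩ := hB
  obtain ⟨d, hd⟩ := hCB
  rcases hC.1.split hAB hAD (Set.inter_sdiff_self B C) (Set.union_sdiff_cancel hBC) with h | h
  · have := hC.2 B h
    have h0 := eq_univ_of_energy_eq_zero hgen hAD (by omega) ⟨d, hd⟩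
    exact (h0.symm.subset (Set.mem_univ b)).2 hb
  · have := hC.2 _ h
    have h0 := eq_univ_of_energy_eq_zero hgen hAB (by omega) ⟨b, hb⟩
    exact hd.2 (h0.symm.subset (Set.mem_univ d))

lemma outEdges_bound {S : Finset G} {C : Set G} (hC : AlmostInvariant C) :
    (outEdges (cayleyRel S) C).Finite ∧ (outEdges (cayleyRel S) C).ncard ≤ energy S C := by
  classical
  let T : Finset (Σ _ : G, G) := S.sigma fun s => (hC s).toFinset
  have hsub : outEdges (cayleyRel S) C ⊆ (fun e : Σ _ : G, G => (e.2, e.2 * e.1)) '' T := by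
    rintro ⟨a, b⟩ ⟨hab, ha, hb⟩
    refine ⟨⟨a⁻¹ * b, a⟩, ?_, by simp⟩
    simp only [T, Finset.coe_sigma, Set.mem_sigma_iff, Finset.mem_coe, Set.Finite.mem_toFinset,
      mem_coboundary, mul_inv_cancel_left]
    exact ⟨hab, fun h => hb (h.1 ha)⟩
  have hfin := T.finite_toSet.image fun e : Σ _ : G, G => (e.2, e.2 * e.1)
  refine ⟨hfin.subset hsub, (Set.ncard_le_ncard hsub hfin).trans
    ((Set.ncard_image_le T.finite_toSet).trans ?_)⟩
  rw [Set.ncard_coe_finset, Finset.card_sigma, energy]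
  refine Finset.sum_le_sum fun s _ => ?_
  rw [Set.ncard_eq_toFinset_card _ (hC s)]

end MinimalCuts

section NestedCuts

variable {G : Type*} [Group G]

/-- The endpoints of the boundary edges of a set. -/
def endpoints (S : Finset G) (C : Set G) : Set G := {a | ∃ s ∈ S, a ∈ coboundary C s}

lemma endpoints_image {S : Finset G} (T : G ≃ G) (φ : MulAut G)
    (hT : ∀ x g, T (x * g) = T x * φ g) (hS : ∀ s, φ s ∈ S ↔ s ∈ S) (C : Set G) {a : G}
    (ha : a ∈ endpoints S C) : T a ∈ endpoints S (T '' C) := by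
  obtain ⟨s, hs, has⟩ := ha
  refine ⟨φ s, (hS s).2 hs, ?_⟩
  rw [coboundary_image T φ hT]
  exact ⟨a, has, rfl⟩

lemma AlmostInvariant.finite_endpoints {S : Finset G} {C : Set G} (hC : AlmostInvariant C) :
    (endpoints S C).Finite := by
  refine (Set.Finite.biUnion S.finite_toSet fun s _ => hC s).subset ?_
  rintro a ⟨s, hs, ha⟩
  exact Set.mem_biUnion hs ha

/-- The differences of endpoints of minimal cuts. -/
def cutDifferences (P : Set G → Prop) (S : Finset G) : Set G :=
  {g | ∃ D, P D ∧ ∃ a ∈ endpoints S D, ∃ b ∈ endpoints S D, g = a⁻¹ * b}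

lemma minimizes_moved_mulLeft {f : MulAut G} {S : Finset G} {C : Set G}
    (hC : Minimizes (Moved f) (energy S) C) (h : G) :
    Minimizes (Moved f) (energy S) (Equiv.mulLeft h '' C) :=
  hC.map (fun C => Equiv.mulLeft h '' C)
    (fun _ hD => hD.image _ 1 (fun x g => (mul_assoc _ x g).symm) fun _ => rfl)
    (energy_image _ 1 (fun x g => (mul_assoc _ x g).symm) fun _ => Iff.rfl)

lemma minimizes_moved_image {f : MulAut G} {S : Finset G} (hSf : ∀ s, f s ∈ S ↔ s ∈ S)
    {C : Set G} (hC : Minimizes (Moved f) (energy S) C) :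
    Minimizes (Moved f) (energy S) (f '' C) :=
  hC.map (fun C => f '' C)
    (fun _ hD => hD.image f.toEquiv f (_root_.map_mul f) fun _ => rfl)
    (energy_image f.toEquiv f (_root_.map_mul f) hSf)

lemma minimizes_moved_compl {f : MulAut G} {S : Finset G}
    {C : Set G} (hC : Minimizes (Moved f) (energy S) C) :
    Minimizes (Moved f) (energy S) Cᶜ :=
  hC.map (fun C => Cᶜ) (fun _ hD => hD.compl) (energy_compl S)

lemma finite_cutDifferences {f : MulAut G} {S : Finset G} (hinv : ∀ s ∈ S, s⁻¹ ∈ S)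
    (hgen : Subgroup.closure (S : Set G) = ⊤) :
    (cutDifferences (Minimizes (Moved f) (energy S)) S).Finite := by
  set P := Minimizes (Moved f) (energy S) with hP
  by_cases hex : ∃ C, P C
  swap
  · convert Set.finite_empty
    ext g
    simp only [cutDifferences, Set.mem_ofPred_eq, Set.mem_empty_iff_false, iff_false]
    rintro ⟨D, hD, -⟩
    exact hex ⟨D, hD⟩
  obtain ⟨C₀, hC₀⟩ := hex
  have hfin : {C | P C ∧ 1 ∈ C ∧ ∃ s ∈ S, s ∉ C}.Finite := by
    refine (Set.Finite.biUnion S.finite_toSet fun s hs => finite_bonds (energy S C₀)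
      (cayleyRel S) (fun a b hab => ?_) 1 s (by simpa [cayleyRel] using hs)).subset ?_
    · simpa [cayleyRel] using hinv _ hab
    · rintro C ⟨hC, h1, s, hs, hsC⟩
      refine Set.mem_biUnion hs ⟨h1, hsC, relConnected_of_minimizes hinv hgen hC,
        relConnected_of_minimizes hinv hgen (minimizes_moved_compl hC),
        (outEdges_bound hC.1.1).1, (outEdges_bound hC.1.1).2.trans (hC.2 C₀ hC₀.1)⟩
  refine (Set.Finite.biUnion hfin fun D hD => Set.Finite.image2 (fun a b => a⁻¹ * b)
    (hD.1.1.1.finite_endpoints (S := S)) (hD.1.1.1.finite_endpoints (S := S))).subset ?_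
  rintro g ⟨D, hD, a, ha, b, hb, rfl⟩
  obtain ⟨c, hc, s, hs, hcs⟩ : ∃ c ∈ D, ∃ s ∈ S, c * s ∉ D := by
    by_contra hcon
    push Not at hcon
    have h0 : energy S D = 0 := by
      refine Finset.sum_eq_zero fun s hs => ?_
      rw [Set.ncard_eq_zero (hD.1.1 s)]
      ext x
      simp only [mem_coboundary, Set.mem_empty_iff_false, iff_false, not_not]
      exact ⟨fun h => hcon x h s hs, fun h => by simpa using hcon _ h _ (hinv s hs)⟩
    obtain ⟨y, hy⟩ := hD.1.compl_nonempty
    exact hy (eq_univ_of_energy_eq_zero hgen hD.1.1 h0 hD.1.nonempty ▸ Set.mem_univ y)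
  have hmem : ∀ x, x ∈ endpoints S D → c⁻¹ * x ∈ endpoints S (Equiv.mulLeft c⁻¹ '' D) :=
    fun x hx => endpoints_image (Equiv.mulLeft c⁻¹) 1 (fun x g => (mul_assoc _ x g).symm)
      (fun _ => Iff.rfl) D hx
  refine Set.mem_biUnion (x := Equiv.mulLeft c⁻¹ '' D)
    ⟨minimizes_moved_mulLeft hD _, ⟨c, hc, by simp⟩, s, hs, ?_⟩
    ⟨_, hmem a ha, _, hmem b hb, by group⟩
  rintro ⟨d, hd, hds⟩
  apply hcs
  rw [← hds]
  simpa using hd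

/-- An automorphism moving some almost invariant set moves the members of a nested family
invariant under translations, the automorphism and complements. -/
theorem exists_nested_moved (f : MulAut G) (S : Finset G) (hinv : ∀ s ∈ S, s⁻¹ ∈ S)
    (hSf : ∀ s, f s ∈ S ↔ s ∈ S) (hgen : Subgroup.closure (S : Set G) = ⊤)
    (hex : ∃ C, Moved f C) :
    ∃ N : Set (Set G), N.Nonempty ∧ (∀ C ∈ N, Moved f C) ∧
      (∀ C ∈ N, ∀ h, Equiv.mulLeft h '' C ∈ N) ∧ (∀ C ∈ N, f '' C ∈ N) ∧
      ∀ C ∈ N, ∀ D ∈ N, Nested C D := by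
  set P := Minimizes (Moved f) (energy S) with hP
  have hJfin : (cutDifferences P S).Finite := finite_cutDifferences hinv hgen
  set J := hJfin.toFinset with hJ
  have hJf : ∀ s, f s ∈ J ↔ s ∈ J := by
    have h1 : ∀ s, s ∈ J → f s ∈ J := by
      intro s hs
      rw [hJ, Set.Finite.mem_toFinset] at hs ⊢
      obtain ⟨D, hD, a, ha, b, hb, rfl⟩ := hs
      refine ⟨f '' D, minimizes_moved_image hSf hD, f a, ?_, f b, ?_, by simp⟩
      · exact endpoints_image f.toEquiv f (_root_.map_mul f) hSf D ha
      · exact endpoints_image f.toEquiv f (_root_.map_mul f) hSf D hb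
    classical
    have hbij : J.image f = J :=
       Finset.eq_of_subset_of_card_le (Finset.image_subset_iff.2 h1)
        (Finset.card_image_of_injective _ f.injective).ge
    intro s
    refine ⟨fun hs => ?_, h1 s⟩
    rw [← hbij, Finset.mem_image] at hs
    obtain ⟨t, ht, hts⟩ := hs
    rwa [← f.injective hts]
  set Q := Minimizes P (energy J) with hQ
  have hQc : ∀ C, Q C → Q Cᶜ := fun C hC =>
    hC.map (fun C => Cᶜ) (fun _ => minimizes_moved_compl) (energy_compl J)
  have hcross : ∀ C D, Q C → Q D → Moved f (C ∩ D) → Moved f (C ∪ D) →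
      (C \ D).Nonempty → (D \ C).Nonempty → False := by
    intro C D hC hD hI hU hCD hDC
    have hAC := hC.1.1.1
    have hAD := hD.1.1.1
    have e1 := energy_inter_add_union S hAC hAD
    have hIP : P (C ∩ D) := ⟨hI, fun E hE => by
      have := hC.1.2 E hE
      have := hD.1.2 _ hC.1.1
      have := hD.1.2 _ hU
      omega⟩
    have hUP : P (C ∪ D) := ⟨hU, fun E hE => by
      have := hC.1.2 E hE
      have := hD.1.2 _ hC.1.1
      have := hD.1.2 _ hI
      omega⟩
    obtain ⟨x, hx, v, hv, hxv⟩ := relConnected_of_minimizes hinv hgen hC.1 (C ∩ D)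
      Set.inter_subset_left hI.nonempty (by rwa [Set.sdiff_self_inter])
    rw [Set.sdiff_self_inter] at hv
    have hCcD : (Cᶜ \ (D \ C)).Nonempty := by
      obtain ⟨z, hz⟩ := hU.compl_nonempty
      exact ⟨z, fun h => hz (Or.inl h), fun h => hz (Or.inr h.1)⟩
    obtain ⟨u, hu, y, hy, huy⟩ := relConnected_of_minimizes hinv hgen (hQc C hC).1 (D \ C)
      (fun z hz => hz.2) hDC hCcD
    have hve : v ∈ endpoints S D := by
      refine ⟨v⁻¹ * x, by simpa using hinv _ hxv, ?_⟩
      rw [mem_coboundary, mul_inv_cancel_left]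
      exact fun h => hv.2 (h.2 hx.2)
    have hue : u ∈ endpoints S D := by
      refine ⟨u⁻¹ * y, huy, ?_⟩
      rw [mem_coboundary, mul_inv_cancel_left]
      exact fun h => hy.2 ⟨h.1 hu.1, hy.1⟩
    have e2 := energy_inter_add_union_lt J hAC hAD hv hu
      (hJfin.mem_toFinset.2 ⟨D, hD.1, v, hve, u, hue, rfl⟩)
    have := hC.2 _ hIP
    have := hD.2 _ hUP
    omega
  obtain ⟨C₀, hC₀⟩ : ∃ C, Q C := exists_minimizes _ (exists_minimizes _ hex)
  refine ⟨{C | Q C}, ⟨C₀, hC₀⟩, fun C hC => hC.1.1, ?_, ?_, ?_⟩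
  · intro C hC h
    exact hC.map (fun C => Equiv.mulLeft h '' C) (fun D hD => minimizes_moved_mulLeft hD h)
      (energy_image _ 1 (fun x g => (mul_assoc _ x g).symm) fun _ => Iff.rfl)
  · intro C hC
    exact hC.map (fun C => f '' C) (fun D hD => minimizes_moved_image hSf hD)
      (energy_image f.toEquiv f (_root_.map_mul f) hJf)
  · intro C hC D hD
    by_contra hnest
    simp only [Nested, not_or] at hnest
    obtain ⟨h1, h2, h3, h4⟩ := hnest
    rw [← Set.sdiff_nonempty] at h1 h2
    rw [← Ne, ← Set.nonempty_iff_ne_empty] at h3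
    rw [← Ne, ← Set.nonempty_compl] at h4
    have hAC := hC.1.1.1
    have hAD := hD.1.1.1
    by_cases hIU : Moved f (C ∩ D) ∧ Moved f (C ∪ D)
    · exact hcross C D hC hD hIU.1 hIU.2 h1 h2
    have hboth : Moved f (C ∩ Dᶜ) ∧ Moved f (Cᶜ ∩ D) := by
      rw [not_and_or] at hIU
      rcases hIU with hI | hU
      · constructor
        · refine (hC.1.1.split (hAC.inter hAD) (hAC.inter hAD.compl) ?_ ?_).resolve_left hI
          · ext; simp only [Set.mem_inter_iff, Set.mem_compl_iff, Set.mem_empty_iff_false]; tauto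
          · ext; simp only [Set.mem_inter_iff, Set.mem_union, Set.mem_compl_iff]; tauto
        · refine (hD.1.1.split (hAC.inter hAD) (hAC.compl.inter hAD) ?_ ?_).resolve_left hI
          · ext; simp only [Set.mem_inter_iff, Set.mem_compl_iff, Set.mem_empty_iff_false]; tauto
          · ext; simp only [Set.mem_inter_iff, Set.mem_union, Set.mem_compl_iff]; tauto
      · have hU' : ¬ Moved f (Cᶜ ∩ Dᶜ) := by
          rw [← Set.compl_union]
          intro h; exact hU (by simpa only [compl_compl] using h.compl)
        constructor
        · refine (hD.1.1.compl.split (hAC.compl.inter hAD.compl) (hAC.inter hAD.compl)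
            ?_ ?_).resolve_left hU'
          · ext; simp only [Set.mem_inter_iff, Set.mem_compl_iff, Set.mem_empty_iff_false]; tauto
          · ext; simp only [Set.mem_inter_iff, Set.mem_union, Set.mem_compl_iff]; tauto
        · refine (hC.1.1.compl.split (hAC.compl.inter hAD.compl) (hAC.compl.inter hAD)
            ?_ ?_).resolve_left hU'
          · ext; simp only [Set.mem_inter_iff, Set.mem_compl_iff, Set.mem_empty_iff_false]; tauto
          · ext; simp only [Set.mem_inter_iff, Set.mem_union, Set.mem_compl_iff]; tauto
    refine hcross C Dᶜ hC (hQc D hD) hboth.1 ?_ ?_ ?_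
    · have := hboth.2.compl
      rwa [Set.compl_inter, compl_compl] at this
    · rwa [Set.sdiff_compl]
    · rwa [Set.compl_union, Set.inter_comm] at h4

end NestedCuts

section CutSystems

variable {G : Type*} [Group G]

/-- The left translate of a set. -/
def tr (h : G) (C : Set G) : Set G := {x | h⁻¹ * x ∈ C}

@[simp] lemma mem_tr {h x : G} {C : Set G} : x ∈ tr h C ↔ h⁻¹ * x ∈ C := Iff.rfl

lemma tr_tr (a b : G) (C : Set G) : tr a (tr b C) = tr (a * b) C := by
  ext x; simp [mul_assoc]

lemma tr_one (C : Set G) : tr 1 C = C := by ext x; simp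

lemma tr_compl (a : G) (C : Set G) : tr a Cᶜ = (tr a C)ᶜ := rfl

lemma tr_eq_image (a : G) (C : Set G) : tr a C = Equiv.mulLeft a '' C := by
  ext x
  rw [Equiv.image_eq_preimage_symm]
  simp

lemma tr_subset_tr {a : G} {C D : Set G} (h : C ⊆ D) : tr a C ⊆ tr a D := fun _ hx => h hx

lemma tr_inv_tr (a : G) (C : Set G) : tr a⁻¹ (tr a C) = C := by
  rw [tr_tr, inv_mul_cancel, tr_one]

lemma tr_tr_inv (a : G) (C : Set G) : tr a (tr a⁻¹ C) = C := by
  rw [tr_tr, mul_inv_cancel, tr_one]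

/-- A nested family of cuts invariant under translations and complements, only finitely many of
which separate two given points. -/
structure CutSystem (E : Set (Set G)) : Prop where
  compl_mem : ∀ C ∈ E, Cᶜ ∈ E
  tr_mem : ∀ C ∈ E, ∀ a, tr a C ∈ E
  nested : ∀ C ∈ E, ∀ D ∈ E, Nested C D
  nonempty : ∀ C ∈ E, C.Nonempty
  finite_sep : ∀ x y, {C ∈ E | x ∉ C ∧ y ∈ C}.Finite

/-- A cut is adjacent to a point if it is maximal among those not containing it. -/
def Adj {X : Type*} (E : Set (Set X)) (x : X) (C : Set X) : Prop :=
  C ∈ E ∧ x ∉ C ∧ ∀ D ∈ E, x ∉ D → C ⊆ D → D = C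

/-- Two points are equivalent if no cut separates them. -/
def Sim {X : Type*} (E : Set (Set X)) (x y : X) : Prop := ∀ C ∈ E, x ∈ C ↔ y ∈ C

variable {E : Set (Set G)}

lemma Sim.symm {X : Type*} {E : Set (Set X)} {x y : X} (h : Sim E x y) : Sim E y x :=
  fun C hC => (h C hC).symm

lemma Adj.of_sim {X : Type*} {E : Set (Set X)} {x y : X} {C : Set X} (h : Adj E x C)
    (hxy : Sim E x y) : Adj E y C :=
  ⟨h.1, mt (hxy C h.1).2 h.2.1, fun D hD hy => h.2.2 D hD (mt (hxy D hD).1 hy)⟩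

namespace CutSystem

lemma sim_tr (hE : CutSystem E) {x y : G} (h : Sim E x y) (a : G) : Sim E (a * x) (a * y) := by
  intro C hC
  simpa using h _ (hE.tr_mem C hC a⁻¹)

lemma adj_tr (hE : CutSystem E) {x : G} {C : Set G} (h : Adj E x C) (a : G) :
    Adj E (a * x) (tr a C) := by
  refine ⟨hE.tr_mem _ h.1 a, by simpa using h.2.1, fun D hD hx hCD => ?_⟩
  have := h.2.2 (tr a⁻¹ D) (hE.tr_mem _ hD _) (by simpa using hx)
    (by simpa [tr_inv_tr] using tr_subset_tr (a := a⁻¹) hCD)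
  rw [← this, tr_tr_inv]

lemma sim_of_adj (hE : CutSystem E) {x y : G} {C : Set G} (hx : Adj E x C) (hy : Adj E y C) :
    Sim E x y := by
  have key : ∀ x y : G, Adj E x C → Adj E y C → ∀ D ∈ E, x ∈ D → y ∈ D := by
    intro x y hx hy D hD hxD
    by_contra hyD
    rcases hE.nested D hD C hx.1 with h | h | h | h
    · exact hx.2.1 (h hxD)
    · exact hx.2.1 (hy.2.2 D hD hyD h ▸ hxD)
    · have := hx.2.2 Dᶜ (hE.compl_mem D hD) (by simpa using hxD)
        (fun z hz hzD => h.subset ⟨hzD, hz⟩)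
      exact hy.2.1 (this ▸ hyD)
    · rcases h.symm.subset (Set.mem_univ y) with h | h
      · exact hyD h
      · exact hy.2.1 h
  exact fun D hD => ⟨key x y hx hy D hD, key y x hy hx D hD⟩

lemma exists_adj (hE : CutSystem E) {x : G} {D : Set G} (hD : D ∈ E) (hx : x ∉ D) :
    ∃ C, D ⊆ C ∧ Adj E x C := by
  obtain ⟨y, hy⟩ := hE.nonempty D hD
  have hfin : {C | C ∈ E ∧ x ∉ C ∧ D ⊆ C}.Finite :=
    (hE.finite_sep x y).subset fun C hC => ⟨hC.1, hC.2.1, hC.2.2 hy⟩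
  obtain ⟨C, hDC, hC⟩ := hfin.exists_le_maximal (a := D) ⟨hD, hx, subset_rfl⟩
  refine ⟨C, hDC, hC.prop.1, hC.prop.2.1, fun F hF hxF hCF => ?_⟩
  exact (hC.eq_of_subset ⟨hF, hxF, hDC.trans hCF⟩ hCF).symm

lemma eq_of_adj_adj_compl (hE : CutSystem E) {x z : G} {C D : Set G} (hx : Adj E x C)
    (hz : Adj E z Cᶜ) (hD : D ∈ E) (hxD : x ∉ D) (hzD : z ∈ D) : D = C := by
  have hzC : z ∈ C := not_not.1 hz.2.1
  rcases hE.nested D hD C hx.1 with h | h | h | h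
  · have := hz.2.2 Dᶜ (hE.compl_mem D hD) (by simpa using hzD) (Set.compl_subset_compl.2 h)
    exact compl_injective this
  · exact hx.2.2 D hD hxD h
  · exact absurd (show z ∈ D ∩ C from ⟨hzD, hzC⟩) (by rw [h]; simp)
  · rcases h.symm.subset (Set.mem_univ x) with h | h
    · exact absurd h hxD
    · exact absurd h hx.2.1

lemma adj_of_consecutive (hE : CutSystem E) {C D : Set G} (hD : D ∈ E) (hDC : D ⊂ C)
    (hcons : ∀ F ∈ E, D ⊂ F → F ⊆ C → F = C) {z : G} (hz : Adj E z Cᶜ) : Adj E z D := by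
  have hzC : z ∈ C := not_not.1 hz.2.1
  have hC : C ∈ E := by simpa using hE.compl_mem _ hz.1
  have hzD : z ∉ D := by
    intro hzD
    have := hz.2.2 Dᶜ (hE.compl_mem D hD) (by simpa using hzD) (Set.compl_subset_compl.2 hDC.1)
    exact hDC.ne (compl_injective this)
  refine ⟨hD, hzD, fun F hF hzF hDF => ?_⟩
  by_contra hne
  have hDF' : D ⊂ F := hDF.ssubset_of_ne (Ne.symm hne)
  rcases hE.nested F hF C hC with h | h | h | h
  · exact hzF (hcons F hF hDF' h ▸ hzC)
  · exact hzF (h hzC)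
  · obtain ⟨d, hd⟩ := hE.nonempty D hD
    exact h.subset ⟨hDF hd, hDC.1 hd⟩
  · have := hz.2.2 F hF hzF (fun c hc => (h.symm.subset (Set.mem_univ c)).resolve_right hc)
    exact hDC.2 (by
      obtain ⟨d, hd⟩ := hE.nonempty D hD
      exact absurd (hDC.1 hd) (this.subset (hDF hd)))

end CutSystem

end CutSystems

section Occupied

variable {G : Type*} [Group G]

/-- A cut is occupied if it is adjacent to some point. -/
def Occ {X : Type*} (E : Set (Set X)) (C : Set X) : Prop := ∃ x, Adj E x C

open Classical in
/-- The difference of the occupation numbers of the two ends of a cut. -/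
noncomputable def wt {X : Type*} (E : Set (Set X)) (C : Set X) : ℤ :=
  (if Occ E Cᶜ then 1 else 0) - if Occ E C then 1 else 0

lemma wt_compl {X : Type*} (E : Set (Set X)) (C : Set X) : wt E Cᶜ = - wt E C := by
  rw [wt, wt, compl_compl]; ring

variable {E : Set (Set G)}

namespace CutSystem

lemma occ_tr (hE : CutSystem E) (a : G) (C : Set G) : Occ E (tr a C) ↔ Occ E C := by
  constructor
  · rintro ⟨x, hx⟩
    exact ⟨_, by simpa [tr_inv_tr] using hE.adj_tr hx a⁻¹⟩
  · rintro ⟨x, hx⟩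
    exact ⟨_, hE.adj_tr hx a⟩

lemma wt_tr (hE : CutSystem E) (a : G) (C : Set G) : wt E (tr a C) = wt E C := by
  rw [wt, wt, ← tr_compl, propext (hE.occ_tr a Cᶜ), propext (hE.occ_tr a C)]

lemma occ_iff_of_consecutive (hE : CutSystem E) {C D : Set G} (hC : C ∈ E) (hD : D ∈ E)
    (hDC : D ⊂ C) (hcons : ∀ F ∈ E, D ⊂ F → F ⊆ C → F = C) : Occ E Cᶜ ↔ Occ E D := by
  constructor
  · rintro ⟨z, hz⟩
    exact ⟨z, hE.adj_of_consecutive hD hDC hcons hz⟩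
  · rintro ⟨z, hz⟩
    refine ⟨z, hE.adj_of_consecutive (C := Dᶜ) (hE.compl_mem C hC) ?_ ?_ (by rwa [compl_compl])⟩
    · exact ⟨Set.compl_subset_compl.2 hDC.1, fun h => hDC.2 (Set.compl_subset_compl.1 h)⟩
    · intro F hF h1 h2
      by_contra hne
      have h3 : D ⊆ Fᶜ := Set.subset_compl_comm.1 h2
      have h4 : Fᶜ ⊆ C := Set.compl_subset_comm.1 h1.1
      have h5 := hcons Fᶜ (hE.compl_mem F hF)
        (h3.ssubset_of_ne fun h => hne (by rw [h, compl_compl])) h4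
      exact h1.2 (by rw [← h5, compl_compl])

lemma exists_successor (hE : CutSystem E) {x : G} {D F : Set G} (hF : F ∈ E)
    (hx : x ∉ F) (hDF : D ⊂ F) (hD : D ∈ E) :
    ∃ C ∈ E, x ∉ C ∧ D ⊂ C ∧ ∀ F ∈ E, D ⊂ F → x ∉ F → C ⊆ F := by
  obtain ⟨y, hy⟩ := hE.nonempty D hD
  have hfin : {C | C ∈ E ∧ x ∉ C ∧ D ⊂ C}.Finite :=
    (hE.finite_sep x y).subset fun C hC => ⟨hC.1, hC.2.1, hC.2.2.1 hy⟩
  obtain ⟨C, -, hC⟩ := hfin.exists_le_minimal (a := F) ⟨hF, hx, hDF⟩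
  refine ⟨C, hC.prop.1, hC.prop.2.1, hC.prop.2.2, fun K hK hDK hxK => ?_⟩
  rcases hE.nested K hK C hC.prop.1 with h | h | h | h
  · exact (hC.eq_of_subset ⟨hK, hxK, hDK⟩ h).superset
  · exact h
  · exact absurd (show y ∈ K ∩ C from ⟨hDK.1 hy, hC.prop.2.2.1 hy⟩) (by rw [h]; simp)
  · rcases h.symm.subset (Set.mem_univ x) with h | h
    · exact absurd h hxK
    · exact absurd h hC.prop.2.1

open Classical in
lemma finsum_wt_above (hE : CutSystem E) {x : G} (k : ℕ) : ∀ {D : Set G}, D ∈ E → x ∉ D →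
    {F | F ∈ E ∧ x ∉ F ∧ D ⊆ F}.ncard ≤ k →
    ∑ᶠ F ∈ {F | F ∈ E ∧ x ∉ F ∧ D ⊆ F}, wt E F = (if Occ E Dᶜ then 1 else 0) - 1 := by
  have hfin : ∀ {D : Set G}, D ∈ E → {F | F ∈ E ∧ x ∉ F ∧ D ⊆ F}.Finite := by
    intro D hD
    obtain ⟨y, hy⟩ := hE.nonempty D hD
    exact (hE.finite_sep x y).subset fun C hC => ⟨hC.1, hC.2.1, hC.2.2 hy⟩
  induction k with
  | zero =>
    intro D hD hx h0
    rw [Nat.le_zero, Set.ncard_eq_zero (hfin hD)] at h0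
    exact absurd (show D ∈ {F | F ∈ E ∧ x ∉ F ∧ D ⊆ F} from ⟨hD, hx, subset_rfl⟩) (by simp [h0])
  | succ k ih =>
    intro D hD hx hk
    by_cases hadj : ∃ F ∈ E, x ∉ F ∧ D ⊂ F
    · obtain ⟨F, hF, hxF, hDF⟩ := hadj
      obtain ⟨C, hC, hxC, hDC, hmin⟩ := hE.exists_successor hF hxF hDF hD
      have hset : {F | F ∈ E ∧ x ∉ F ∧ D ⊆ F} = insert D {F | F ∈ E ∧ x ∉ F ∧ C ⊆ F} := by
        ext K
        simp only [Set.mem_ofPred_eq, Set.mem_insert_iff]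
        constructor
        · rintro ⟨h1, h2, h3⟩
          by_cases hKD : K = D
          · exact Or.inl hKD
          · exact Or.inr ⟨h1, h2, hmin K h1 (h3.ssubset_of_ne (Ne.symm hKD)) h2⟩
        · rintro (rfl | ⟨h1, h2, h3⟩)
          · exact ⟨hD, hx, subset_rfl⟩
          · exact ⟨h1, h2, hDC.1.trans h3⟩
      have hnot : D ∉ {F | F ∈ E ∧ x ∉ F ∧ C ⊆ F} := fun h => hDC.2 h.2.2
      rw [hset, Set.ncard_insert_of_notMem hnot (hfin hC)] at hk
      rw [hset, finsum_mem_insert _ hnot (hfin hC), ih hC hxC (by omega), wt]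
      have hocc := hE.occ_iff_of_consecutive hC hD hDC fun F hF h1 h2 =>
        h2.antisymm (hmin F hF h1 fun h => hxC (h2 h))
      simp only [hocc]
      ring
    · have hset : {F | F ∈ E ∧ x ∉ F ∧ D ⊆ F} = {D} := by
        ext K
        simp only [Set.mem_ofPred_eq, Set.mem_singleton_iff]
        constructor
        · rintro ⟨h1, h2, h3⟩
          by_contra hne
          exact hadj ⟨K, h1, h2, h3.ssubset_of_ne (Ne.symm hne)⟩
        · rintro rfl
          exact ⟨hD, hx, subset_rfl⟩
      have hocc : Occ E D := ⟨x, hD, hx, fun F hF hxF hDF => by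
        have : F ∈ {F | F ∈ E ∧ x ∉ F ∧ D ⊆ F} := ⟨hF, hxF, hDF⟩
        rwa [hset] at this⟩
      rw [hset, finsum_mem_singleton, wt, if_pos hocc]

lemma finsum_wt_sep (hE : CutSystem E) (x y : G) :
    ∑ᶠ F ∈ {C ∈ E | x ∉ C ∧ y ∈ C}, wt E F = 0 := by
  by_cases hne : {C ∈ E | x ∉ C ∧ y ∈ C}.Nonempty
  swap
  · rw [Set.not_nonempty_iff_eq_empty.1 hne, finsum_mem_empty]
  obtain ⟨F₀, hF₀⟩ := hne
  obtain ⟨D, -, hD⟩ := (hE.finite_sep x y).exists_le_minimal hF₀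
  have hadj : Adj E y Dᶜ := by
    refine ⟨hE.compl_mem D hD.prop.1, by simpa using hD.prop.2.2, fun F hF hy hDF => ?_⟩
    have h1 : Fᶜ ⊆ D := Set.compl_subset_comm.1 hDF
    have := hD.eq_of_subset ⟨hE.compl_mem F hF, fun h => hD.prop.2.1 (h1 h), hy⟩ h1
    rw [← this, compl_compl]
  have hset : {C ∈ E | x ∉ C ∧ y ∈ C} = {F | F ∈ E ∧ x ∉ F ∧ D ⊆ F} := by
    ext K
    constructor
    · rintro ⟨h1, h2, h3⟩
      refine ⟨h1, h2, ?_⟩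
      rcases hE.nested K h1 D hD.prop.1 with h | h | h | h
      · exact (hD.eq_of_subset ⟨h1, h2, h3⟩ h).superset
      · exact h
      · exact absurd (show y ∈ K ∩ D from ⟨h3, hD.prop.2.2⟩) (by rw [h]; simp)
      · rcases h.symm.subset (Set.mem_univ x) with h | h
        · exact absurd h h2
        · exact absurd h hD.prop.2.1
    · rintro ⟨h1, h2, h3⟩
      exact ⟨h1, h2, h3 hD.prop.2.2⟩
  rw [hset, hE.finsum_wt_above _ hD.prop.1 hD.prop.2.1 le_rfl, if_pos ⟨y, hadj⟩, sub_self]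

lemma occ_of_wt_eq_zero (hE : CutSystem E) (hw : ∀ C ∈ E, wt E C = 0) {D : Set G} (hD : D ∈ E) :
    Occ E D := by
  have hoc : ∀ C ∈ E, Occ E C → Occ E Cᶜ := by
    intro C hC h
    by_contra h'
    have := hw C hC
    rw [wt, if_pos h, if_neg h'] at this
    lia
  obtain ⟨x, hx⟩ := hE.nonempty _ (hE.compl_mem D hD)
  obtain ⟨y, hy⟩ := hE.nonempty D hD
  have hfin : {C | C ∈ E ∧ x ∉ C ∧ D ⊆ C ∧ Occ E C}.Finite :=
    (hE.finite_sep x y).subset fun C hC => ⟨hC.1, hC.2.1, hC.2.2.1 hy⟩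
  obtain ⟨F, hDF, hF⟩ := hE.exists_adj hD hx
  obtain ⟨C, -, hC⟩ := hfin.exists_le_minimal (a := F) ⟨hF.1, hF.2.1, hDF, x, hF⟩
  obtain ⟨hCE, hxC, hDC, hCo⟩ := hC.prop
  by_cases hne : D = C
  · rwa [hne]
  exfalso
  have hfin' : {K | K ∈ E ∧ D ⊆ K ∧ K ⊂ C}.Finite :=
    (hE.finite_sep x y).subset fun K hK => ⟨hK.1, fun h => hxC (hK.2.2.1 h), hK.2.1 hy⟩
  obtain ⟨K, -, hK⟩ := hfin'.exists_le_maximal (a := D) ⟨hD, subset_rfl, hDC.ssubset_of_ne hne⟩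
  have hocc := (hE.occ_iff_of_consecutive hCE hK.prop.1 hK.prop.2.2 fun L hL h1 h2 => by
    by_contra hLC
    have := hK.eq_of_subset ⟨hL, hK.prop.2.1.trans h1.1, h2.ssubset_of_ne hLC⟩ h1.1
    exact h1.ne this).1 (hoc C hCE hCo)
  have := hC.eq_of_subset ⟨hK.prop.1, fun h => hxC (hK.prop.2.2.1 h), hK.prop.2.1, hocc⟩
    hK.prop.2.2.1
  exact hK.prop.2.2.ne this

end CutSystem

end Occupied

section OrbitCuts

variable {G : Type*} [Group G]

lemma Nested.symm {X : Type*} {C D : Set X} (h : Nested C D) : Nested D C := by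
  rcases h with h | h | h | h
  · exact Or.inr (Or.inl h)
  · exact Or.inl h
  · exact Or.inr (Or.inr (Or.inl (by rwa [Set.inter_comm])))
  · exact Or.inr (Or.inr (Or.inr (by rwa [Set.union_comm])))

lemma Nested.compl_left {X : Type*} {C D : Set X} (h : Nested C D) : Nested Cᶜ D := by
  rcases h with h | h | h | h
  · refine Or.inr (Or.inr (Or.inr ?_))
    rw [Set.eq_univ_iff_forall]
    intro x
    by_cases hx : x ∈ C
    · exact Or.inr (h hx)
    · exact Or.inl hx
  · refine Or.inr (Or.inr (Or.inl ?_))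
    rw [Set.eq_empty_iff_forall_notMem]
    exact fun x hx => hx.1 (h hx.2)
  · exact Or.inr (Or.inl fun x hx hxC => h.subset ⟨hxC, hx⟩)
  · exact Or.inl fun x hx => (h.symm.subset (Set.mem_univ x)).resolve_left hx

lemma Nested.compl_right {X : Type*} {C D : Set X} (h : Nested C D) : Nested C Dᶜ :=
  h.symm.compl_left.symm

lemma Nested.image {X Y : Type*} {C D : Set X} (h : Nested C D) (T : X ≃ Y) :
    Nested (T '' C) (T '' D) := by
  rcases h with h | h | h | h
  · exact Or.inl (Set.image_mono h)
  · exact Or.inr (Or.inl (Set.image_mono h))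
  · exact Or.inr (Or.inr (Or.inl (by
      rw [← Set.image_inter T.injective, h, Set.image_empty])))
  · exact Or.inr (Or.inr (Or.inr (by
      rw [← Set.image_union, h, Set.image_univ, T.surjective.range_eq])))

lemma cutHom_tr (a : G) (C : Set G) (g : G) : cutHom (tr a C) g = cutHom C g := by
  rw [tr_eq_image]
  exact cutHom_image (Equiv.mulLeft a) 1 (fun x g => (mul_assoc _ x g).symm) C g

lemma AlmostInvariant.finite_separating {C : Set G} (hC : AlmostInvariant C) (x y : G) :
    {h : G | ¬(h⁻¹ * x ∈ C ↔ h⁻¹ * y ∈ C)}.Finite := by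
  refine ((hC (x⁻¹ * y)).preimage (f := fun h : G => h⁻¹ * x) ?_).subset ?_
  · intro a _ b _ h
    simpa using h
  · intro h hh
    simpa [mem_coboundary, mul_assoc] using hh

lemma finsum_separating {C : Set G} (hC : AlmostInvariant C) (c : ℤ) (x y : G) :
    ∑ᶠ h ∈ {h : G | h⁻¹ * x ∉ C ∧ h⁻¹ * y ∈ C}, c +
      ∑ᶠ h ∈ {h : G | h⁻¹ * x ∈ C ∧ h⁻¹ * y ∉ C}, -c = c * cutHom C (x⁻¹ * y) := by
  set A := {h : G | h⁻¹ * x ∉ C ∧ h⁻¹ * y ∈ C} with hA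
  set B := {h : G | h⁻¹ * x ∈ C ∧ h⁻¹ * y ∉ C} with hB
  have hAf : A.Finite := (hC.finite_separating x y).subset fun h hh hn => hh.1 (hn.2 hh.2)
  have hBf : B.Finite := (hC.finite_separating x y).subset fun h hh hn => hh.2 (hn.1 hh.1)
  let d : G → ℤ := fun h => c * (ind C (h⁻¹ * y) - ind C (h⁻¹ * x))
  have h1 : ∑ᶠ h ∈ A, c = ∑ᶠ h ∈ A, d h := by
    refine finsum_mem_congr rfl fun h hh => ?_
    simp only [d, ind, if_neg hh.1, if_pos hh.2]; ring
  have h2 : ∑ᶠ h ∈ B, -c = ∑ᶠ h ∈ B, d h := by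
    refine finsum_mem_congr rfl fun h hh => ?_
    simp only [d, ind, if_pos hh.1, if_neg hh.2]; ring
  have hdisj : Disjoint A B := Set.disjoint_left.2 fun h hh hh' => hh.1 hh'.1
  have h3 : ∑ᶠ h ∈ A ∪ B, d h = ∑ᶠ h, d h := by
    refine (finsum_mem_inter_support_eq d (A ∪ B) Set.univ ?_).trans (finsum_mem_univ d)
    ext h
    simp only [Set.mem_inter_iff, Set.mem_univ, true_and, and_iff_right_iff_imp,
      Function.mem_support]
    intro hd
    by_cases hx : h⁻¹ * x ∈ C <;> by_cases hy : h⁻¹ * y ∈ C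
    · exact absurd (by simp [d, ind, hx, hy]) hd
    · exact Or.inr ⟨hx, hy⟩
    · exact Or.inl ⟨hx, hy⟩
    · exact absurd (by simp [d, ind, hx, hy]) hd
  rw [h1, h2, ← finsum_mem_union hdisj hAf hBf, h3]
  have h4 : cutHom C (x⁻¹ * y) = ∑ᶠ h : G, (ind C (h⁻¹ * y) - ind C (h⁻¹ * x)) := by
    rw [cutHom, ← finsum_comp_equiv ((Equiv.inv G).trans (Equiv.mulRight x))]
    apply finsum_congr
    intro h
    simp [mul_assoc]
  rw [h4, mul_finsum]

/-- The translates of the members of a family and their complements. -/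
def orbitCuts {ι : Type*} (C : ι → Set G) : Set (Set G) :=
  {E | ∃ i h, E = tr h (C i) ∨ E = (tr h (C i))ᶜ}

/-- A nested family of almost invariant sets whose homomorphisms are linearly independent for
coefficients of absolute value at most one. -/
structure NestedFamily {ι : Type*} [Fintype ι] (C : ι → Set G) : Prop where
  ai : ∀ i, AlmostInvariant (C i)
  nested : ∀ i j h, Nested (C i) (tr h (C j))
  indep : ∀ w : ι → ℤ, (∀ i, |w i| ≤ 1) → (∀ g, ∑ i, w i * cutHom (C i) g = 0) → ∀ i, w i = 0

namespace NestedFamily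

variable {ι : Type*} [Fintype ι] {C : ι → Set G}

lemma exists_cutHom_ne_zero (hC : NestedFamily C) (i : ι) : ∃ g, cutHom (C i) g ≠ 0 := by
  classical
  by_contra h
  push Not at h
  have := hC.indep (Pi.single i 1) (fun j => by
    by_cases hj : j = i
    · subst hj; simp
    · simp [hj]) (fun g => by simp [Pi.single_apply, h]) i
  simp at this

lemma exists_mem_coboundary (hC : NestedFamily C) (i : ι) : ∃ g x, x ∈ coboundary (C i) g := by
  obtain ⟨g, hg⟩ := hC.exists_cutHom_ne_zero i
  refine ⟨g, Set.nonempty_iff_ne_empty.2 fun h0 => hg ?_⟩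
  rw [← ind_sub_support] at h0
  exact finsum_eq_zero_of_forall_eq_zero
    fun x => congrFun (Function.support_eq_empty_iff.1 h0) x

lemma tr_ne_compl (hC : NestedFamily C) (a b : G) (i j : ι) :
    tr a (C i) ≠ (tr b (C j))ᶜ := by
  classical
  intro h
  have hχ : ∀ g, cutHom (C i) g = - cutHom (C j) g := by
    intro g
    rw [← cutHom_tr a, h, cutHom_compl, cutHom_tr]
  by_cases hij : i = j
  · subst hij
    obtain ⟨g, hg⟩ := hC.exists_cutHom_ne_zero i
    have := hχ g
    lia
  · have := hC.indep (Pi.single i 1 + Pi.single j 1) (fun k => by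
      by_cases hki : k = i
      · subst hki; simp [hij]
      · by_cases hkj : k = j
        · subst hkj; simp [hki]
        · simp [hki, hkj]) (fun g => by
      simp [Pi.single_apply, add_mul, Finset.sum_add_distrib, hχ]) i
    simp [hij] at this

lemma tr_injective [IsMulTorsionFree G] (hC : NestedFamily C) {a b : G} {i j : ι}
    (h : tr a (C i) = tr b (C j)) : i = j ∧ a = b := by
  classical
  have hχ : ∀ g, cutHom (C i) g = cutHom (C j) g := by
    intro g
    rw [← cutHom_tr a, h, cutHom_tr]
  have hij : i = j := by
    by_contra hij
    have := hC.indep (Pi.single i 1 - Pi.single j 1) (fun k => by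
      by_cases hki : k = i
      · subst hki; simp [hij]
      · by_cases hkj : k = j
        · subst hkj; simp [hki]
        · simp [hki, hkj]) (fun g => by
      simp [Pi.single_apply, sub_mul, Finset.sum_sub_distrib, hχ]) i
    simp [hij] at this
  subst hij
  refine ⟨rfl, ?_⟩
  obtain ⟨g, x, hx⟩ := hC.exists_mem_coboundary i
  set t := a⁻¹ * b with ht
  have hinv : tr t (C i) = C i := by
    rw [ht, ← tr_tr, ← h, tr_inv_tr]
  have hmem : ∀ y, t * y ∈ C i ↔ y ∈ C i := by
    intro y
    conv_lhs => rw [← hinv]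
    simp
  have hpow : ∀ k : ℕ, t ^ k * x ∈ coboundary (C i) g := by
    intro k
    induction k with
    | zero => simpa using hx
    | succ k ih =>
      rw [mem_coboundary] at ih ⊢
      rwa [pow_succ', mul_assoc, hmem, mul_assoc, hmem]
  by_contra hab
  have ht1 : t ≠ 1 := fun h => hab (inv_mul_eq_one.1 h)
  have hinj : Function.Injective fun k : ℕ => t ^ k * x := by
    intro k l hkl
    have hkl' : t ^ ((k : ℤ) - l) = 1 := by
      rw [_root_.zpow_sub, zpow_natCast, zpow_natCast, mul_right_cancel hkl, mul_inv_cancel]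
    have := (IsMulTorsionFree.zpow_eq_one_iff_right ht1).1 hkl'
    lia
  exact Set.infinite_of_injective_forall_mem hinj hpow (hC.ai i g)

end NestedFamily

end OrbitCuts

section Occupation

variable {G : Type*} [Group G]

lemma orbitCuts_sep {ι : Type*} (C : ι → Set G) (x y : G) : {F ∈ orbitCuts C | x ∉ F ∧ y ∈ F} =
    ⋃ i, ((fun h => tr h (C i)) '' {h : G | h⁻¹ * x ∉ C i ∧ h⁻¹ * y ∈ C i} ∪
      (fun h => (tr h (C i))ᶜ) '' {h : G | h⁻¹ * x ∈ C i ∧ h⁻¹ * y ∉ C i}) := by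
  ext F
  simp only [Set.mem_iUnion, Set.mem_union, Set.mem_image]
  constructor
  · rintro ⟨⟨i, h, rfl | rfl⟩, hx, hy⟩
    · exact ⟨i, Or.inl ⟨h, ⟨hx, hy⟩, rfl⟩⟩
    · exact ⟨i, Or.inr ⟨h, ⟨not_not.1 hx, hy⟩, rfl⟩⟩
  · rintro ⟨i, ⟨h, ⟨hx, hy⟩, rfl⟩ | ⟨h, ⟨hx, hy⟩, rfl⟩⟩
    · exact ⟨⟨i, h, Or.inl rfl⟩, hx, hy⟩
    · exact ⟨⟨i, h, Or.inr rfl⟩, not_not.2 hx, hy⟩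

namespace NestedFamily

variable {ι : Type*} [Fintype ι] {C : ι → Set G}

lemma finite_pos (hC : NestedFamily C) (i : ι) (x y : G) :
    {h : G | h⁻¹ * x ∉ C i ∧ h⁻¹ * y ∈ C i}.Finite :=
  ((hC.ai i).finite_separating x y).subset fun _ hh hn => hh.1 (hn.2 hh.2)

lemma finite_neg (hC : NestedFamily C) (i : ι) (x y : G) :
    {h : G | h⁻¹ * x ∈ C i ∧ h⁻¹ * y ∉ C i}.Finite :=
  ((hC.ai i).finite_separating x y).subset fun _ hh hn => hh.2 (hn.1 hh.1)

lemma nested_tr (hC : NestedFamily C) (a b : G) (i j : ι) :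
    Nested (tr a (C i)) (tr b (C j)) := by
  have := (hC.nested i j (a⁻¹ * b)).image (Equiv.mulLeft a)
  rwa [← tr_eq_image, ← tr_eq_image, tr_tr, mul_inv_cancel_left] at this

lemma cutSystem (hC : NestedFamily C) : CutSystem (orbitCuts C) where
  compl_mem := by
    rintro _ ⟨i, h, rfl | rfl⟩
    · exact ⟨i, h, Or.inr rfl⟩
    · exact ⟨i, h, Or.inl (compl_compl _)⟩
  tr_mem := by
    rintro _ ⟨i, h, rfl | rfl⟩ a
    · exact ⟨i, a * h, Or.inl (tr_tr _ _ _)⟩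
    · exact ⟨i, a * h, Or.inr (by rw [tr_compl, tr_tr])⟩
  nested := by
    rintro _ ⟨i, h, rfl | rfl⟩ _ ⟨j, k, rfl | rfl⟩
    · exact hC.nested_tr h k i j
    · exact (hC.nested_tr h k i j).compl_right
    · exact (hC.nested_tr h k i j).compl_left
    · exact (hC.nested_tr h k i j).compl_left.compl_right
  nonempty := by
    rintro _ ⟨i, h, hD⟩
    obtain ⟨g, x, hx⟩ := hC.exists_mem_coboundary i
    rw [mem_coboundary] at hx
    by_cases hxC : x ∈ C i
    · have hxg : x * g ∉ C i := fun h => hx ⟨fun _ => h, fun _ => hxC⟩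
      rcases hD with rfl | rfl
      · exact ⟨h * x, by simpa using hxC⟩
      · exact ⟨h * (x * g), by simpa using hxg⟩
    · have hxg : x * g ∈ C i := by
        by_contra hxg
        exact hx ⟨fun h => absurd h hxC, fun h => absurd h hxg⟩
      rcases hD with rfl | rfl
      · exact ⟨h * (x * g), by simpa using hxg⟩
      · exact ⟨h * x, by simpa using hxC⟩
  finite_sep := by
    intro x y
    rw [orbitCuts_sep]
    exact Set.finite_iUnion fun i => ((hC.finite_pos i x y).image _).union
      ((hC.finite_neg i x y).image _)

lemma sum_wt_mul_cutHom [IsMulTorsionFree G] (hC : NestedFamily C) (g : G) :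
    ∑ i, wt (orbitCuts C) (C i) * cutHom (C i) g = 0 := by
  have hE := hC.cutSystem
  have h0 := hE.finsum_wt_sep 1 g
  rw [orbitCuts_sep, finsum_mem_iUnion] at h0
  · rw [finsum_eq_sum_of_fintype] at h0
    rw [← h0]
    refine Finset.sum_congr rfl fun i _ => ?_
    rw [finsum_mem_union, finsum_mem_image, finsum_mem_image]
    · simp only [wt_compl, hE.wt_tr]
      rw [finsum_separating (hC.ai i), inv_one, one_mul]
    · intro a _ b _ hab
      exact (hC.tr_injective (compl_injective hab)).2
    · intro a _ b _ hab
      exact (hC.tr_injective hab).2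
    · rw [Set.disjoint_left]
      rintro _ ⟨a, -, rfl⟩ ⟨b, -, hab⟩
      exact hC.tr_ne_compl a b i i hab.symm
    · exact (hC.finite_pos i 1 g).image _
    · exact (hC.finite_neg i 1 g).image _
  · intro i j hij
    rw [Function.onFun, Set.disjoint_left]
    rintro _ (⟨a, -, rfl⟩ | ⟨a, -, rfl⟩) (⟨b, -, hab⟩ | ⟨b, -, hab⟩)
    · exact hij (hC.tr_injective hab).1.symm
    · exact hC.tr_ne_compl a b i j hab.symm
    · exact hC.tr_ne_compl b a j i hab
    · exact hij (hC.tr_injective (compl_injective hab)).1.symm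
  · exact fun i => ((hC.finite_pos i 1 g).image _).union ((hC.finite_neg i 1 g).image _)

lemma occ [IsMulTorsionFree G] (hC : NestedFamily C) {D : Set G} (hD : D ∈ orbitCuts C) :
    Occ (orbitCuts C) D := by
  have hE := hC.cutSystem
  have hw : ∀ i, wt (orbitCuts C) (C i) = 0 := by
    refine hC.indep _ (fun i => ?_) hC.sum_wt_mul_cutHom
    rw [wt]
    split_ifs <;> simp
  refine hE.occ_of_wt_eq_zero ?_ hD
  rintro _ ⟨i, h, rfl | rfl⟩
  · rw [hE.wt_tr, hw]
  · rw [wt_compl, hE.wt_tr, hw, neg_zero]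

end NestedFamily

/-- A cut system whose cuts are the translates of the sets `C i` and their complements, where
`C i` is adjacent to `1` and its complement is adjacent to `y i`. -/
structure CutBasis {ι : Type*} (E : Set (Set G)) (C : ι → Set G) (y : ι → G) : Prop where
  sys : CutSystem E
  exists_eq : ∀ D ∈ E, ∃ i h, D = tr h (C i) ∨ D = (tr h (C i))ᶜ
  adj_one : ∀ i, Adj E 1 (C i)
  adj_y : ∀ i, Adj E (y i) (C i)ᶜ
  inj : ∀ {a b i j}, tr a (C i) = tr b (C j) → i = j ∧ a = b
  ne_compl : ∀ a b i j, tr a (C i) ≠ (tr b (C j))ᶜ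

lemma NestedFamily.exists_cutBasis {ι : Type*} [Fintype ι] [IsMulTorsionFree G] {C : ι → Set G}
    (hC : NestedFamily C) :
    ∃ a y : ι → G, CutBasis (orbitCuts C) (fun i => tr (a i) (C i)) y := by
  have hE := hC.cutSystem
  have hmem : ∀ i, C i ∈ orbitCuts C := fun i => ⟨i, 1, Or.inl (tr_one _).symm⟩
  choose a ha using fun i => hC.occ (hmem i)
  choose b hb using fun i => hC.occ (hE.compl_mem _ (hmem i))
  refine ⟨fun i => (a i)⁻¹, fun i => (a i)⁻¹ * b i, hE, ?_, ?_, ?_, ?_, ?_⟩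
  · rintro _ ⟨i, h, rfl | rfl⟩
    · exact ⟨i, h * a i, Or.inl (by simp [tr_tr])⟩
    · exact ⟨i, h * a i, Or.inr (by simp [tr_tr])⟩
  · intro i
    simpa using hE.adj_tr (ha i) (a i)⁻¹
  · intro i
    exact hE.adj_tr (hb i) (a i)⁻¹
  · intro c d i j h
    rw [tr_tr, tr_tr] at h
    obtain ⟨rfl, h⟩ := hC.tr_injective h
    exact ⟨rfl, mul_right_cancel h⟩
  · intro c d i j
    rw [tr_tr, tr_tr]
    exact hC.tr_ne_compl _ _ _ _

end Occupation

section Generation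

variable {G : Type*} [Group G] {E : Set (Set G)}

/-- The group of elements not separated from `1` by a cut system. -/
def CutSystem.simSubgroup (hE : CutSystem E) : Subgroup G where
  carrier := {g | Sim E 1 g}
  one_mem' := fun _ _ => Iff.rfl
  mul_mem' := by
    intro a b ha hb C hC
    have := hE.sim_tr hb a C hC
    rw [mul_one] at this
    exact (ha C hC).trans this
  inv_mem' := by
    intro a ha C hC
    have := hE.sim_tr ha a⁻¹ C hC
    rw [mul_one, inv_mul_cancel] at this
    exact this.symm

lemma CutSystem.mem_simSubgroup (hE : CutSystem E) {g : G} :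
    g ∈ hE.simSubgroup ↔ Sim E 1 g := Iff.rfl

lemma CutSystem.inv_mul_mem_simSubgroup (hE : CutSystem E) {x y : G} (h : Sim E x y) :
    x⁻¹ * y ∈ hE.simSubgroup := by
  have := hE.sim_tr h x⁻¹
  rwa [inv_mul_cancel] at this

lemma CutSystem.mem_iff_of_adj (hE : CutSystem E) {x z : G} {F D : Set G} (hx : Adj E x F)
    (hz : Adj E z Fᶜ) (hD : D ∈ E) (hDF : D ≠ F) (hDF' : D ≠ Fᶜ) : x ∈ D ↔ z ∈ D := by
  by_cases hxD : x ∈ D <;> by_cases hzD : z ∈ D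
  · exact iff_of_true hxD hzD
  · exact absurd (compl_eq_comm.1 (hE.eq_of_adj_adj_compl hx hz (hE.compl_mem D hD)
      (not_not.2 hxD) hzD)).symm hDF'
  · exact absurd (hE.eq_of_adj_adj_compl hx hz hD hxD hzD) hDF
  · exact iff_of_false hxD hzD

/-- Two cuts adjacent to the same point are equal or disjoint. -/
lemma CutSystem.disjoint_of_adj (hE : CutSystem E) {x : G} {A B : Set G} (hA : Adj E x A)
    (hB : Adj E x B) (hAB : A ≠ B) : Disjoint A B := by
  rcases hE.nested A hA.1 B hB.1 with h | h | h | h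
  · exact absurd (hA.2.2 B hB.1 hB.2.1 h).symm hAB
  · exact absurd (hB.2.2 A hA.1 hA.2.1 h) hAB
  · exact Set.disjoint_iff_inter_eq_empty.2 h
  · rcases h.symm.subset (Set.mem_univ x) with h | h
    · exact absurd h hA.2.1
    · exact absurd h hB.2.1

lemma CutSystem.subsystem (hE : CutSystem E) {E' : Set (Set G)} (hsub : E' ⊆ E)
    (hcompl : ∀ C ∈ E', Cᶜ ∈ E') (htr : ∀ C ∈ E', ∀ a, tr a C ∈ E') : CutSystem E' where
  compl_mem := hcompl
  tr_mem := htr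
  nested := fun C hC D hD => hE.nested C (hsub hC) D (hsub hD)
  nonempty := fun C hC => hE.nonempty C (hsub hC)
  finite_sep := fun x y => (hE.finite_sep x y).subset fun _ hC => ⟨hsub hC.1, hC.2⟩

lemma Adj.mono {X : Type*} {E E' : Set (Set X)} {x : X} {C : Set X} (h : Adj E x C)
    (hsub : E' ⊆ E) (hC : C ∈ E') : Adj E' x C :=
  ⟨hC, h.2.1, fun D hD => h.2.2 D (hsub hD)⟩

namespace CutBasis

variable {ι : Type*} {C : ι → Set G} {y : ι → G}

lemma adj_self (hC : CutBasis E C y) (i : ι) (h : G) : Adj E h (tr h (C i)) := by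
  simpa using hC.sys.adj_tr (hC.adj_one i) h

lemma adj_mul (hC : CutBasis E C y) (i : ι) (h : G) : Adj E (h * y i) (tr h (C i))ᶜ :=
  hC.sys.adj_tr (hC.adj_y i) h

lemma tr_mem (hC : CutBasis E C y) (i : ι) (h : G) : tr h (C i) ∈ E := (hC.adj_self i h).1

lemma mem_closure_of_not_separated (hC : CutBasis E C y) (J : Set ι) (g : G) (k : ℕ) :
    ∀ x : G, {D ∈ E | x ∉ D ∧ g ∈ D}.ncard ≤ k →
      (∀ i ∉ J, ∀ h, x ∈ tr h (C i) ↔ g ∈ tr h (C i)) →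
      x⁻¹ * g ∈ Subgroup.closure ((hC.sys.simSubgroup : Set G) ∪ y '' J) := by
  have hE := hC.sys
  set K := Subgroup.closure ((hE.simSubgroup : Set G) ∪ y '' J) with hK
  have hHK : hE.simSubgroup ≤ K := fun g hg => Subgroup.subset_closure (Or.inl hg)
  have hyK : ∀ i ∈ J, y i ∈ K := fun i hi => Subgroup.subset_closure (Or.inr ⟨i, hi, rfl⟩)
  have hsub : ∀ {x z : G} {F : Set G}, Adj E x F → Adj E z Fᶜ → g ∈ F →
      {D ∈ E | z ∉ D ∧ g ∈ D} ⊂ {D ∈ E | x ∉ D ∧ g ∈ D} := by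
    intro x z F hx hz hg
    refine ⟨fun D hD => ⟨hD.1, ?_, hD.2.2⟩, fun h => ?_⟩
    · have h1 : D ≠ F := fun h => hz.2.1 (h ▸ hD.2.1)
      have h2 : D ≠ Fᶜ := fun h => (h ▸ hD.2.2 : g ∈ Fᶜ) hg
      rw [hE.mem_iff_of_adj hx hz hD.1 h1 h2]
      exact hD.2.1
    · exact hz.2.1 (h ⟨hx.1, hx.2.1, hg⟩).2.1
  induction k with
  | zero =>
    intro x hx _
    rw [Nat.le_zero, Set.ncard_eq_zero (hE.finite_sep x g)] at hx
    refine hHK (hE.inv_mul_mem_simSubgroup fun D hD => ⟨fun hxD => ?_, fun hgD => ?_⟩)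
    · by_contra hgD
      exact hx.subset (show Dᶜ ∈ _ from ⟨hE.compl_mem D hD, not_not.2 hxD, hgD⟩)
    · by_contra hxD
      exact hx.subset (show D ∈ _ from ⟨hD, hxD, hgD⟩)
  | succ k ih =>
    intro x hx htype
    by_cases hle : {D ∈ E | x ∉ D ∧ g ∈ D}.ncard ≤ k
    · exact ih x hle htype
    have hne : {D ∈ E | x ∉ D ∧ g ∈ D}.Nonempty :=
      Set.nonempty_of_ncard_ne_zero (by lia)
    obtain ⟨D, hD, hxD, hgD⟩ := hne
    obtain ⟨F, hDF, hF⟩ := hE.exists_adj hD hxD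
    have hgF := hDF hgD
    have hnext : ∀ {z : G} {i : ι} {h : G}, i ∈ J → (F = tr h (C i) ∨ F = (tr h (C i))ᶜ) →
        Adj E z Fᶜ → z⁻¹ * g ∈ K := by
      intro z i h hiJ hFi hz
      refine ih z ?_ ?_
      · have := Set.ncard_lt_ncard (hsub hF hz hgF) (hE.finite_sep x g)
        lia
      · intro j hj a
        rw [← htype j hj a]
        have hij : j ≠ i := fun hji => hj (hji ▸ hiJ)
        refine (hE.mem_iff_of_adj hF hz (hC.tr_mem j a) ?_ ?_).symm
        · rcases hFi with rfl | rfl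
          · exact fun h => hij (hC.inj h).1
          · exact hC.ne_compl _ _ _ _
        · rcases hFi with rfl | rfl
          · exact hC.ne_compl _ _ _ _
          · rw [compl_compl]
            exact fun h => hij (hC.inj h).1
    obtain ⟨i, h, hFi⟩ := hC.exists_eq F hF.1
    have hiJ : i ∈ J := by
      by_contra hiJ
      have := htype i hiJ h
      rcases hFi with rfl | rfl
      · exact hF.2.1 (this.2 hgF)
      · exact hgF (this.1 (not_not.1 hF.2.1))
    rcases hFi with rfl | rfl
    · have h1 := hHK (hE.inv_mul_mem_simSubgroup (hE.sim_of_adj hF (hC.adj_self i h)))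
      have h2 := hnext hiJ (Or.inl rfl) (hC.adj_mul i h)
      have := K.mul_mem (K.mul_mem h1 (hyK i hiJ)) h2
      simpa [mul_assoc] using this
    · have h1 := hHK (hE.inv_mul_mem_simSubgroup (hE.sim_of_adj hF (hC.adj_mul i h)))
      have h2 := hnext hiJ (Or.inr rfl) (by simpa using hC.adj_self i h)
      have := K.mul_mem (K.mul_mem h1 (K.inv_mem (hyK i hiJ))) h2
      simpa [mul_assoc] using this

lemma closure_eq_top (hC : CutBasis E C y) :
    Subgroup.closure ((hC.sys.simSubgroup : Set G) ∪ Set.range y) = ⊤ := by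
  rw [eq_top_iff]
  intro g _
  have := hC.mem_closure_of_not_separated Set.univ g _ 1 le_rfl
    fun i hi => absurd (Set.mem_univ i) hi
  simpa using this

end CutBasis

end Generation

section PingPong

lemma freeGroupBasis_closure_range {ι G : Type*} [Group G] (b : FreeGroupBasis ι G) :
    Subgroup.closure (Set.range b) = ⊤ := by
  have h : Set.range b = b.repr.symm.toMonoidHom '' Set.range (FreeGroup.of (α := ι)) := by
    rw [← Set.range_comp]
    rfl
  rw [h, ← MonoidHom.map_closure, FreeGroup.closure_range_of, ← MonoidHom.range_eq_map]
  exact MonoidHom.range_eq_top.2 b.repr.symm.surjective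

lemma exists_basis_zpowers {G : Type*} [Group G] [IsMulTorsionFree G] {y : G} (hy : y ≠ 1) :
    ∃ b : FreeGroupBasis PUnit.{1} (Subgroup.zpowers y), ∀ x, (b x : G) = y := by
  let φ : FreeGroup PUnit.{1} →* Subgroup.zpowers y :=
    FreeGroup.lift fun _ => ⟨y, Subgroup.mem_zpowers y⟩
  have hφ : ∀ k : ℤ, (φ (of PUnit.unit ^ k) : G) = y ^ k := fun k => by simp [φ]
  have hgen : ∀ w : FreeGroup PUnit.{1}, ∃ k : ℤ, of PUnit.unit ^ k = w := by
    intro w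
    have : w ∈ Subgroup.closure (Set.range (of : PUnit.{1} → FreeGroup PUnit.{1})) := by
      rw [FreeGroup.closure_range_of]; trivial
    rwa [Set.range_unique, Subgroup.mem_closure_singleton] at this
  have hbij : Function.Bijective φ := by
    constructor
    · rw [injective_iff_map_eq_one]
      intro w hw
      obtain ⟨k, rfl⟩ := hgen w
      have := hφ k
      rw [hw, Subgroup.coe_one, eq_comm, IsMulTorsionFree.zpow_eq_one_iff_right hy] at this
      rw [this, zpow_zero]
    · rintro ⟨_, k, rfl⟩
      exact ⟨of PUnit.unit ^ k, Subtype.ext (hφ k)⟩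
  refine ⟨FreeGroupBasis.ofRepr (MulEquiv.ofBijective φ hbij).symm, fun x => ?_⟩
  change (φ (of x) : G) = y
  simp [φ]

namespace CutBasis

variable {G : Type*} [Group G] {E : Set (Set G)} {ι : Type*} {C : ι → Set G} {y : ι → G}

lemma y_mem (hC : CutBasis E C y) (i : ι) : y i ∈ C i := not_not.1 (hC.adj_y i).2.1

lemma y_ne_one (hC : CutBasis E C y) (i : ι) : y i ≠ 1 := fun h =>
  (hC.adj_one i).2.1 (h ▸ hC.y_mem i)

/-- The two cuts of type `i` adjacent to `1`, indexed by a sign. -/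
def side (C : ι → Set G) (y : ι → G) (i : ι) : Bool → Set G
  | true => C i
  | false => (tr (y i)⁻¹ (C i))ᶜ

lemma adj_side (hC : CutBasis E C y) (i : ι) (s : Bool) : Adj E 1 (side C y i s) := by
  cases s
  · simpa [side] using hC.adj_mul i (y i)⁻¹
  · exact hC.adj_one i

lemma tr_side_ne (hC : CutBasis E C y) {i j : ι} {s t : Bool} {h : G}
    (hne : i = j → s = t → h ≠ 1) : tr h (side C y i s) ≠ side C y j t := by
  intro heq
  cases s <;> cases t
  · rw [side, side, tr_compl, tr_tr] at heq
    obtain ⟨rfl, h1⟩ := hC.inj (compl_injective heq)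
    exact hne rfl rfl (mul_eq_right.1 h1)
  · rw [side, side, tr_compl, tr_tr, ← tr_one (C j)] at heq
    exact hC.ne_compl _ _ _ _ heq.symm
  · exact hC.ne_compl _ _ _ _ heq
  · rw [side, side, ← tr_one (C j)] at heq
    obtain ⟨rfl, h1⟩ := hC.inj heq
    exact hne rfl rfl h1

lemma disjoint_side (hC : CutBasis E C y) {i j : ι} {s t : Bool} (hne : i = j → s ≠ t) :
    Disjoint (side C y i s) (side C y j t) := by
  refine hC.sys.disjoint_of_adj (hC.adj_side i s) (hC.adj_side j t) ?_
  rw [← tr_one (side C y i s)]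
  exact hC.tr_side_ne fun hij hst => absurd hst (hne hij)

lemma disjoint_tr_side (hC : CutBasis E C y) {h : G} (hh : h ∈ hC.sys.simSubgroup) (h1 : h ≠ 1)
    (i j : ι) (s t : Bool) : Disjoint (tr h (side C y i s)) (side C y j t) := by
  refine hC.sys.disjoint_of_adj (x := 1) ?_ (hC.adj_side j t) (hC.tr_side_ne fun _ _ => h1)
  have := hC.sys.adj_tr (hC.adj_side i s) h
  rw [mul_one] at this
  exact this.of_sim hh.symm

/-- The sets on which the ping-pong argument is played. -/
def pong (C : ι → Set G) (y : ι → G) : Option ι → Set G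
  | none => {x | ∀ i s, x ∉ side C y i s}
  | some i => {x | ∃ s, x ∈ side C y i s}

lemma pow_mul_mem (hC : CutBasis E C y) (i : ι) {x : G} (hx : x ∉ side C y i false) (k : ℕ) :
    y i ^ (k + 1) * x ∈ side C y i true := by
  induction k with
  | zero =>
    have : x ∈ tr (y i)⁻¹ (C i) := not_not.1 hx
    simpa [side] using this
  | succ k ih =>
    have h := Set.disjoint_left.1
      (hC.disjoint_side (i := i) (j := i) (t := false) fun _ => by simp) ih
    have : y i ^ (k + 1) * x ∈ tr (y i)⁻¹ (C i) := not_not.1 h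
    rw [mem_tr, inv_inv, ← mul_assoc, ← pow_succ'] at this
    exact this

lemma pow_inv_mul_mem (hC : CutBasis E C y) (i : ι) {x : G} (hx : x ∉ side C y i true) (k : ℕ) :
    (y i ^ (k + 1))⁻¹ * x ∈ side C y i false := by
  induction k with
  | zero => simpa [side] using hx
  | succ k ih =>
    have h := Set.disjoint_right.1
      (hC.disjoint_side (i := i) (j := i) (s := true) fun _ => by simp) ih
    have h' : (y i ^ (k + 1))⁻¹ * x ∉ C i := h
    have : (y i)⁻¹ * ((y i ^ (k + 1))⁻¹ * x) ∈ side C y i false := by simpa [side] using h'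
    rwa [← mul_assoc, ← _root_.mul_inv_rev, ← pow_succ] at this

lemma zpow_mul_mem_pong (hC : CutBasis E C y) (i : ι) {x : G} (hx : ∀ s, x ∉ side C y i s)
    {k : ℤ} (hk : k ≠ 0) : y i ^ k * x ∈ pong C y (some i) := by
  obtain ⟨m, rfl | rfl⟩ := k.eq_nat_or_neg
  · obtain ⟨m, rfl⟩ := Nat.exists_eq_succ_of_ne_zero (n := m) (by lia)
    refine ⟨true, ?_⟩
    rw [zpow_natCast]
    exact hC.pow_mul_mem i (hx false) m
  · obtain ⟨m, rfl⟩ := Nat.exists_eq_succ_of_ne_zero (n := m) (by lia)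
    refine ⟨false, ?_⟩
    rw [_root_.zpow_neg, zpow_natCast]
    exact hC.pow_inv_mul_mem i (hx true) m

/-- The factors of the free product decomposition given by a cut basis. -/
def factor (hC : CutBasis E C y) : Option ι → Subgroup G
  | none => hC.sys.simSubgroup
  | some i => Subgroup.zpowers (y i)

lemma lift_factor_bijective (hC : CutBasis E C y) (hι : 3 ≤ Cardinal.mk (Option ι)) [Nonempty ι] :
    Function.Bijective (Monoid.CoprodI.lift fun o => (hC.factor o).subtype) := by
  constructor
  · refine Monoid.CoprodI.lift_injective_of_ping_pong _ (Or.inl hι) (pong C y) ?_ ?_ ?_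
    · rintro (_ | i)
      · exact ⟨1, fun i s => (hC.adj_side i s).2.1⟩
      · exact ⟨y i, true, hC.y_mem i⟩
    · rintro (_ | i) (_ | j) hij
      · exact absurd rfl hij
      · exact Set.disjoint_left.2 fun x hx ⟨s, hs⟩ => hx j s hs
      · exact Set.disjoint_right.2 fun x hx ⟨s, hs⟩ => hx i s hs
      · refine Set.disjoint_left.2 ?_
        rintro x ⟨s, hs⟩ ⟨t, ht⟩
        exact Set.disjoint_left.1 (hC.disjoint_side fun h => absurd (congrArg some h) hij) hs ht
    · rintro (_ | i) o hio ⟨g, hg⟩ h1 _ ⟨x, hx, rfl⟩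
      · cases o with
        | none => exact absurd rfl hio
        | some j =>
          obtain ⟨s, hs⟩ := hx
          intro i t ht
          refine Set.disjoint_left.1
            (hC.disjoint_tr_side hg (fun h => h1 (Subtype.ext h)) j i s t) ?_ ht
          simpa using hs
      · obtain ⟨k, rfl⟩ := hg
        have hk : k ≠ 0 := by
          rintro rfl
          exact h1 (Subtype.ext (zpow_zero _))
        refine hC.zpow_mul_mem_pong i (fun s hs => ?_) hk
        cases o with
        | none => exact hx i s hs
        | some j =>
          obtain ⟨t, ht⟩ := hx
          exact Set.disjoint_left.1 (hC.disjoint_side fun h => absurd (congrArg some h) hio) hs ht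
  · rw [← MonoidHom.range_eq_top, eq_top_iff, ← hC.closure_eq_top, Subgroup.closure_le]
    rintro g (hg | ⟨i, rfl⟩)
    · exact ⟨Monoid.CoprodI.of (i := none) ⟨g, hg⟩, by simp⟩
    · exact ⟨Monoid.CoprodI.of (i := some i) ⟨y i, Subgroup.mem_zpowers _⟩, by simp⟩

lemma exists_basis.{u, v} {G : Type u} [Group G] {E : Set (Set G)} {ι : Type v} {C : ι → Set G}
    {y : ι → G} [IsFreeGroup G] [IsMulTorsionFree G] (hC : CutBasis E C y)
    (hι : 3 ≤ Cardinal.mk (Option ι)) [Nonempty ι] :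
    ∃ (κ : Type (max v u)) (β : FreeGroupBasis κ G) (e : ι → κ), Function.Injective e ∧
      (∀ i, β (e i) = y i) ∧ (∀ k ∉ Set.range e, β k ∈ hC.sys.simSubgroup) ∧
      hC.sys.simSubgroup ≤ Subgroup.closure (β '' (Set.range e)ᶜ) := by
  have hfac : ∀ o, ∃ (X : Type u) (b : FreeGroupBasis X (hC.factor o)),
      ∀ i, o = some i → ∃ x₀, (∀ x, x = x₀) ∧ (b x₀ : G) = y i := by
    rintro (_ | i)
    · exact ⟨_, IsFreeGroup.basis hC.sys.simSubgroup, fun i hi => by simp at hi⟩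
    · obtain ⟨b, hb⟩ := exists_basis_zpowers (hC.y_ne_one i)
      refine ⟨_, b.reindex Equiv.ulift.symm, ?_⟩
      rintro j hij
      obtain rfl := Option.some_injective _ hij
      exact ⟨⟨PUnit.unit⟩, fun x => rfl, hb _⟩
  choose X b hb using hfac
  choose x₀ hx₀ hbx using fun i => hb (some i) i rfl
  let Ψ := MulEquiv.ofBijective _ (hC.lift_factor_bijective hι)
  let β := (Monoid.CoprodI.FreeGroupBasis.coprodI b).map Ψ
  have hβ : ∀ o x, β ⟨o, x⟩ = (b o x : G) := by
    intro o x
    change Monoid.CoprodI.lift (M := fun o => hC.factor o) (fun o => (hC.factor o).subtype)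
      (FreeGroup.lift (fun x : Σ o, X o =>
        Monoid.CoprodI.of (M := fun o => hC.factor o) (b x.1 x.2)) (of ⟨o, x⟩)) = _
    simp
  let e : ι → Σ o, X o := fun i => ⟨some i, x₀ i⟩
  have hnone : ∀ x, (⟨none, x⟩ : Σ o, X o) ∉ Set.range e := by
    rintro x ⟨i, hi⟩
    simpa using congrArg Sigma.fst hi
  refine ⟨_, β, e, ?_, ?_, ?_, ?_⟩
  · intro i j hij
    exact Option.some_injective _ (congrArg Sigma.fst hij)
  · intro i
    rw [hβ, hbx]
  · rintro ⟨_ | i, x⟩ hk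
    · rw [hβ]
      exact (b none x).2
    · exact absurd ⟨i, by rw [hx₀ i x]⟩ hk
  · intro g hg
    have htop : (⟨g, hg⟩ : hC.factor none) ∈ Subgroup.closure (Set.range (b none)) := by
      rw [freeGroupBasis_closure_range]; trivial
    have := Subgroup.mem_map_of_mem (hC.factor none).subtype htop
    rw [MonoidHom.map_closure] at this
    refine Subgroup.closure_mono ?_ this
    rintro _ ⟨_, ⟨x, rfl⟩, rfl⟩
    exact ⟨⟨none, x⟩, hnone x, hβ none x⟩

end CutBasis

end PingPong

section Exchange

/-- The translates of a set and their complements. -/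
def cutsOf {G : Type*} [Group G] (A : Set G) : Set (Set G) :=
  {D | ∃ h, D = tr h A ∨ D = (tr h A)ᶜ}

lemma Adj.image_equiv {X Y : Type*} {E : Set (Set X)} {E' : Set (Set Y)} (T : X ≃ Y)
    (hT : ∀ D, T '' D ∈ E' ↔ D ∈ E) {x : X} {D : Set X} (h : Adj E x D) :
    Adj E' (T x) (T '' D) := by
  refine ⟨(hT D).2 h.1, mt T.injective.mem_set_image.1 h.2.1, fun F hF hx hDF => ?_⟩
  obtain ⟨F, rfl⟩ := T.surjective.image_surjective F
  rw [h.2.2 F ((hT F).1 hF) (mt T.injective.mem_set_image.2 hx)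
    ((Set.image_subset_image_iff T.injective).1 hDF)]

lemma sim_image_equiv {X Y : Type*} {E : Set (Set X)} {E' : Set (Set Y)} (T : X ≃ Y)
    (hT : ∀ D, T '' D ∈ E' ↔ D ∈ E) {x y : X} : Sim E' (T x) (T y) ↔ Sim E x y := by
  constructor
  · intro h D hD
    simpa only [T.injective.mem_set_image] using h _ ((hT D).2 hD)
  · intro h F hF
    obtain ⟨F, rfl⟩ := T.surjective.image_surjective F
    simpa only [T.injective.mem_set_image] using h F ((hT F).1 hF)

section

variable {G : Type*} [Group G]

lemma image_tr (f : MulAut G) (a : G) (A : Set G) : f '' tr a A = tr (f a) (f '' A) := by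
  ext x
  obtain ⟨x, rfl⟩ := f.surjective x
  rw [f.injective.mem_set_image, mem_tr, mem_tr, ← _root_.map_inv, ← _root_.map_mul,
    f.injective.mem_set_image]

lemma cutsOf_tr (a : G) (A : Set G) : cutsOf (tr a A) = cutsOf A := by
  ext D
  constructor
  · rintro ⟨h, hD⟩
    rw [tr_tr] at hD
    exact ⟨_, hD⟩
  · rintro ⟨h, hD⟩
    refine ⟨h * a⁻¹, ?_⟩
    rwa [tr_tr, inv_mul_cancel_right]

lemma image_mem_cutsOf (f : MulAut G) (A D : Set G) :
    f.toEquiv '' D ∈ cutsOf (f '' A) ↔ D ∈ cutsOf A := by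
  change f '' D ∈ cutsOf (f '' A) ↔ D ∈ cutsOf A
  constructor
  · rintro ⟨h, hD⟩
    obtain ⟨h, rfl⟩ := f.surjective h
    rw [← image_tr, ← Set.image_compl_eq f.bijective] at hD
    exact ⟨h, hD.imp (fun h => f.injective.image_injective h)
      fun h => f.injective.image_injective h⟩
  · rintro ⟨h, rfl | rfl⟩
    · exact ⟨f h, Or.inl (image_tr f h A)⟩
    · exact ⟨f h, Or.inr (by rw [Set.image_compl_eq f.bijective, image_tr])⟩

end

namespace CutBasis

variable {G : Type*} [Group G] {E : Set (Set G)} {ι : Type*} {C : ι → Set G} {y : ι → G}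

lemma cutsOf_subset (hC : CutBasis E C y) (i : ι) : cutsOf (C i) ⊆ E := by
  rintro _ ⟨h, rfl | rfl⟩
  · exact hC.tr_mem i h
  · exact hC.sys.compl_mem _ (hC.tr_mem i h)

lemma cutSystem_cutsOf (hC : CutBasis E C y) (i : ι) : CutSystem (cutsOf (C i)) := by
  refine hC.sys.subsystem (hC.cutsOf_subset i) ?_ ?_
  · rintro _ ⟨h, rfl | rfl⟩
    · exact ⟨h, Or.inr rfl⟩
    · exact ⟨h, Or.inl (compl_compl _)⟩
  · rintro _ ⟨h, rfl | rfl⟩ a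
    · exact ⟨a * h, Or.inl (tr_tr _ _ _)⟩
    · exact ⟨a * h, Or.inr (by rw [tr_compl, tr_tr])⟩

lemma simSubgroup_cutsOf (hC : CutBasis E C y) {κ : Type*} (β : κ → G) {e : ι → κ}
    (he : Function.Injective e) (hβe : ∀ i, β (e i) = y i)
    (hβ : ∀ k ∉ Set.range e, β k ∈ hC.sys.simSubgroup)
    (hH : hC.sys.simSubgroup ≤ Subgroup.closure (β '' (Set.range e)ᶜ)) (i : ι) :
    (hC.cutSystem_cutsOf i).simSubgroup = Subgroup.closure (β '' {e i}ᶜ) := by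
  apply le_antisymm
  · intro g hg
    have := hC.mem_closure_of_not_separated {i}ᶜ g _ 1 le_rfl fun j hj h => by
      obtain rfl : j = i := by simpa using hj
      exact hg _ ⟨h, Or.inl rfl⟩
    rw [inv_one, one_mul] at this
    refine (Subgroup.closure_le _).2 ?_ this
    rintro x (hx | ⟨j, hj, rfl⟩)
    · refine Subgroup.closure_mono (Set.image_mono ?_) (hH hx)
      exact Set.compl_subset_compl.2 (Set.singleton_subset_iff.2 ⟨i, rfl⟩)
    · exact Subgroup.subset_closure ⟨e j, fun h => hj (he h), hβe j⟩
  · rw [Subgroup.closure_le]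
    rintro _ ⟨k, hk, rfl⟩
    by_cases hke : k ∈ Set.range e
    · obtain ⟨j, rfl⟩ := hke
      have hji : i ≠ j := fun h => hk (congrArg e h.symm)
      rw [hβe]
      rintro D ⟨h, hD⟩
      refine hC.sys.mem_iff_of_adj (hC.adj_one j) (hC.adj_y j) (hC.cutsOf_subset i ⟨h, hD⟩) ?_ ?_
      · rw [← tr_one (C j)]
        rcases hD with rfl | rfl
        · exact fun h => hji (hC.inj h).1
        · exact (hC.ne_compl _ _ _ _).symm
      · rw [← tr_one (C j)]
        rcases hD with rfl | rfl
        · exact hC.ne_compl _ _ _ _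
        · exact fun h => hji (hC.inj (compl_injective h)).1
    · exact fun D hD => hβ k hke D (hC.cutsOf_subset i hD)

variable {f : MulAut G} {i j : ι} {h : G}

lemma image_mem_cutsOf_iff (hf : f '' C i = tr h (C j)) (D : Set G) :
    f.toEquiv '' D ∈ cutsOf (C j) ↔ D ∈ cutsOf (C i) := by
  rw [← image_mem_cutsOf f (C i), hf, cutsOf_tr]

lemma map_simSubgroup (hC : CutBasis E C y) (hf : f '' C i = tr h (C j)) :
    (hC.cutSystem_cutsOf i).simSubgroup.map f.toMonoidHom =
      (hC.cutSystem_cutsOf j).simSubgroup := by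
  have key : ∀ x, f x ∈ (hC.cutSystem_cutsOf j).simSubgroup ↔
      x ∈ (hC.cutSystem_cutsOf i).simSubgroup := by
    intro x
    rw [CutSystem.mem_simSubgroup, CutSystem.mem_simSubgroup,
      ← sim_image_equiv f.toEquiv (image_mem_cutsOf_iff hf)]
    change Sim _ 1 (f x) ↔ Sim _ (f 1) (f x)
    rw [_root_.map_one]
  ext x
  obtain ⟨x, rfl⟩ := f.surjective x
  rw [key]
  exact Subgroup.mem_map_iff_mem f.injective

lemma exists_map_y (hC : CutBasis E C y) (hf : f '' C i = tr h (C j)) :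
    ∃ k ∈ (hC.cutSystem_cutsOf j).simSubgroup, ∃ m ∈ (hC.cutSystem_cutsOf j).simSubgroup,
      f (y i) = k * y j * m := by
  have hE := hC.cutSystem_cutsOf j
  have hmem : ∀ i, C i ∈ cutsOf (C i) := fun i => ⟨1, Or.inl (tr_one _).symm⟩
  have h1 : Adj (cutsOf (C j)) 1 (tr h (C j)) := by
    have := ((hC.adj_one i).mono (hC.cutsOf_subset i) (hmem i)).image_equiv f.toEquiv
      (image_mem_cutsOf_iff hf)
    change Adj _ (f 1) (f '' C i) at this
    rwa [_root_.map_one, hf] at this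
  have h2 : Adj (cutsOf (C j)) (f (y i)) (tr h (C j))ᶜ := by
    have := ((hC.adj_y i).mono (hC.cutsOf_subset i)
      ((hC.cutSystem_cutsOf i).compl_mem _ (hmem i))).image_equiv f.toEquiv
      (image_mem_cutsOf_iff hf)
    change Adj _ (f (y i)) (f '' (C i)ᶜ) at this
    rwa [Set.image_compl_eq f.bijective, hf] at this
  have h3 := (hC.adj_self j h).mono (hC.cutsOf_subset j) (hE.tr_mem _ (hmem j) h)
  have h4 := (hC.adj_mul j h).mono (hC.cutsOf_subset j)
    (hE.compl_mem _ (hE.tr_mem _ (hmem j) h))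
  refine ⟨h, hE.sim_of_adj h1 h3, _, hE.inv_mul_mem_simSubgroup (hE.sim_of_adj h4 h2), ?_⟩
  group

lemma sAut_le_normalClosure {n : ℕ} (hn : 3 ≤ n) {f : FrAut n} (hfS : f ∈ SAut n)
    {E : Set (Set (FreeGroup (Fin n)))} {C : Bool → Set (FreeGroup (Fin n))}
    {y : Bool → FreeGroup (Fin n)} (hC : CutBasis E C y) {h : FreeGroup (Fin n)}
    (hf : f '' C false = tr h (C true)) : SAut n ≤ Subgroup.normalClosure {f} := by
  obtain ⟨κ, β, e, he, hβe, hβ, hH⟩ := hC.exists_basis (by simp)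
  let σ : κ ≃ Fin n := Equiv.ofFreeGroupEquiv β.repr.symm
  let Φ : FrAut n := (β.reindex σ).repr.symm
  have hΦ : ∀ k, Φ (of (σ k)) = β k := fun k => by
    change (β.reindex σ) (σ k) = β k
    rw [FreeGroupBasis.reindex_apply, Equiv.symm_apply_apply]
  have hM : ∀ b, (omitGen (σ (e b))).map Φ.toMonoidHom =
      (hC.cutSystem_cutsOf b).simSubgroup := by
    intro b
    rw [hC.simSubgroup_cutsOf β he hβe hβ hH b, omitGen, MonoidHom.map_closure]
    congr 1
    ext x
    constructor
    · rintro ⟨_, ⟨k, hk, rfl⟩, rfl⟩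
      refine ⟨σ.symm k, fun h => hk ?_, ?_⟩
      · rw [Set.mem_singleton_iff, ← Set.mem_singleton_iff.1 h, Equiv.apply_symm_apply]
      · rw [← hΦ, Equiv.apply_symm_apply]; rfl
    · rintro ⟨k, hk, rfl⟩
      exact ⟨_, ⟨σ k, fun h => hk (σ.injective h), rfl⟩, hΦ k⟩
  have hij : σ (e false) ≠ σ (e true) := fun h => by simpa using he (σ.injective h)
  obtain ⟨l, hl⟩ : ∃ l, l ∉ ({σ (e false), σ (e true)} : Finset (Fin n)) := by
    by_contra hcon
    push Not at hcon
    have h1 := Finset.card_le_card (fun x _ => hcon x : Finset.univ ⊆ _)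
    have h2 := Finset.card_le_two (a := σ (e false)) (b := σ (e true))
    rw [Finset.card_univ, Fintype.card_fin] at h1
    lia
  simp only [Finset.mem_insert, Finset.mem_singleton, not_or] at hl
  set N := Subgroup.normalClosure {f} with hN
  have hfN : Φ⁻¹ * f * Φ ∈ N := by
    have := (Subgroup.normalClosure_normal (s := {f})).conj_mem f
      (Subgroup.subset_normalClosure rfl) Φ⁻¹
    rwa [inv_inv] at this
  have hconj : ∀ {x z}, f (Φ x) = Φ z → (Φ⁻¹ * f * Φ) x = z := by
    intro x z hxz
    rw [MulAut.mul_apply, MulAut.mul_apply, hxz, MulAut.inv_apply_self]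
  have hcomp : f.toMonoidHom.comp Φ.toMonoidHom =
      Φ.toMonoidHom.comp (Φ⁻¹ * f * Φ : FrAut n).toMonoidHom := by
    ext x
    change f (Φ (of x)) = Φ ((Φ⁻¹ * f * Φ) (of x))
    rw [MulAut.mul_apply, MulAut.mul_apply, MulAut.apply_inv_self]
  have hmap : (omitGen (σ (e false))).map (Φ⁻¹ * f * Φ : FrAut n).toMonoidHom =
      omitGen (σ (e true)) := by
    apply Subgroup.map_injective (f := Φ.toMonoidHom) Φ.injective
    rw [Subgroup.map_map, ← hcomp, ← Subgroup.map_map, hM, hM, hC.map_simSubgroup hf]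
  obtain ⟨k, hk, m, hm, hfy⟩ := hC.exists_map_y hf
  rw [← hM] at hk hm
  obtain ⟨k, hk, rfl⟩ := hk
  obtain ⟨m, hm, rfl⟩ := hm
  refine sAut_le_of_rmul_mem hl.1 (rmul_mem_of_exchange N _ hfN hij hl.1 hl.2 hmap hk hm ?_) ?_
  · apply hconj
    rw [hΦ, hβe, hfy, _root_.map_mul, _root_.map_mul, hΦ, hβe]
    rfl
  · have : (SAut n).Normal := MonoidHom.normal_ker _
    exact Subgroup.normalClosure_le_normal (Set.singleton_subset_iff.2 hfS)

end CutBasis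

end Exchange

section Conclusion

lemma Moved.nestedFamily {G : Type*} [Group G] {f : MulAut G} {p : ℕ} (hodd : Odd p)
    (hf : f ^ p = 1) {A : Set G} (hA : Moved f A)
    (hnest : ∀ b b' h, Nested (cond b (f '' A) A) (tr h (cond b' (f '' A) A))) :
    NestedFamily fun b : Bool => cond b (f '' A) A := by
  have hχ : ∀ g, cutHom (f '' A) (f g) = cutHom A g := cutHom_image f.toEquiv f (_root_.map_mul f) A
  refine ⟨?_, hnest, ?_⟩
  · rintro (_ | _)
    · exact hA.1
    · exact hA.1.image f.toEquiv f (_root_.map_mul f)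
  · intro w hw hsum
    obtain ⟨g₀, hg₀⟩ := hA.2
    have hsum' : ∀ g, w true * cutHom A g + w false * cutHom A (f g) = 0 := by
      intro g
      have := hsum (f g)
      rw [Fintype.sum_bool] at this
      simpa only [cond, hχ] using this
    have hne : ∃ g, cutHom A g ≠ 0 := by
      by_contra hcon
      push Not at hcon
      exact hg₀ (by rw [hcon, hcon])
    obtain ⟨g₁, hg₁⟩ := hne
    have hcases : ∀ b, w b = 0 ∨ w b = 1 ∨ w b = -1 := by
      intro b
      have := abs_le.1 (hw b)
      lia
    have hneg : ¬ ∀ g, cutHom A (f g) = - cutHom A g := by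
      intro hneg
      have hpow : ∀ k : ℕ, cutHom A ((f ^ k) g₁) = (-1) ^ k * cutHom A g₁ := by
        intro k
        induction k with
        | zero => simp
        | succ k ih => rw [pow_succ', MulAut.mul_apply, hneg, ih, pow_succ]; ring
      have := hpow p
      rw [hf, hodd.neg_one_pow, MulAut.one_apply] at this
      lia
    rcases hcases true with ht | ht | ht <;> rcases hcases false with hs | hs | hs <;>
      simp only [ht, hs] at hsum'
    · rintro (_ | _) <;> assumption
    · exact absurd (hsum' (f⁻¹ g₁)) (by simpa using hg₁)
    · exact absurd (hsum' (f⁻¹ g₁)) (by simpa using hg₁)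
    · exact absurd (hsum' g₁) (by simpa using hg₁)
    · exact absurd (fun g => by have := hsum' g; lia) hneg
    · exact absurd (by have := hsum' g₀; lia) hg₀
    · exact absurd (hsum' g₁) (by simpa using hg₁)
    · exact absurd (by have := hsum' g₀; lia) hg₀
    · exact absurd (fun g => by have := hsum' g; lia) hneg

lemma exists_invariant_generators {n : ℕ} {f : FrAut n} (hf : IsOfFinOrder f) :
    ∃ S : Finset (FreeGroup (Fin n)), (∀ s ∈ S, s⁻¹ ∈ S) ∧ (∀ s, f s ∈ S ↔ s ∈ S) ∧
      Subgroup.closure (S : Set (FreeGroup (Fin n))) = ⊤ := by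
  let A : Set (FreeGroup (Fin n)) :=
    ⋃ g ∈ (Subgroup.zpowers f : Set (FrAut n)), Set.range fun k => g (of k)
  have hmem : ∀ x, x ∈ A ↔ ∃ g ∈ Subgroup.zpowers f, ∃ k, g (of k) = x := by
    intro x
    simp [A]
  have hA : A.Finite := Set.Finite.biUnion (finite_zpowers.2 hf) fun _ _ => Set.finite_range _
  have hfA : ∀ x, f x ∈ A ↔ x ∈ A := by
    intro x
    rw [hmem, hmem]
    constructor
    · rintro ⟨g, hg, k, hk⟩
      refine ⟨f⁻¹ * g, mul_mem (inv_mem (Subgroup.mem_zpowers f)) hg, k, ?_⟩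
      rw [MulAut.mul_apply, hk, MulAut.inv_apply_self]
    · rintro ⟨g, hg, k, rfl⟩
      exact ⟨f * g, mul_mem (Subgroup.mem_zpowers f) hg, k, rfl⟩
  have hS : (A ∪ A⁻¹).Finite := hA.union hA.inv
  refine ⟨hS.toFinset, ?_, ?_, ?_⟩
  · intro s hs
    rw [Set.Finite.mem_toFinset, Set.mem_union, Set.mem_inv] at hs ⊢
    rw [inv_inv]
    exact hs.symm
  · intro s
    rw [Set.Finite.mem_toFinset, Set.Finite.mem_toFinset, Set.mem_union, Set.mem_union,
      Set.mem_inv, Set.mem_inv, ← _root_.map_inv, hfA, hfA]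
  · rw [Set.Finite.coe_toFinset, eq_top_iff, ← FreeGroup.closure_range_of]
    apply Subgroup.closure_mono
    rintro _ ⟨k, rfl⟩
    exact Or.inl ((hmem _).2 ⟨1, one_mem _, k, rfl⟩)

lemma exists_moved {n p : ℕ} (hn : 3 ≤ n) (hp : p.Prime) (hodd : Odd p) {f : FrAut n}
    (hf : f ^ p = 1) (hf1 : f ≠ 1) : ∃ C, Moved f C := by
  by_contra hcon
  push Not at hcon
  have : Nontrivial (Fin n) := Fin.nontrivial_iff_two_le.2 (by lia)
  refine hf1 (eq_one_of_pow_prime_of_expSum hp hodd f hf fun i w => ?_)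
  by_contra hne
  refine hcon (basicCut i) ⟨almostInvariant_basicCut i, w, ?_⟩
  rw [cutHom_basicCut, cutHom_basicCut]
  exact fun h => hne (Multiplicative.toAdd.injective h)

lemma sAut_le_normalClosure_of_prime_order {n p : ℕ} (hn : 3 ≤ n) (hp : p.Prime) (hodd : Odd p)
    {f : FrAut n} (hf : f ^ p = 1) (hf1 : f ≠ 1) (hfS : f ∈ SAut n) :
    SAut n ≤ Subgroup.normalClosure {f} := by
  obtain ⟨S, hinv, hSf, hgen⟩ := exists_invariant_generators (f := f)
    (isOfFinOrder_iff_pow_eq_one.2 ⟨p, hp.pos, hf⟩)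
  obtain ⟨N, ⟨A, hA⟩, hmov, htr, hfN, hnest⟩ := exists_nested_moved f S hinv hSf hgen
    (exists_moved hn hp hodd hf hf1)
  have hmem : ∀ b : Bool, cond b (f '' A) A ∈ N := by
    rintro (_ | _)
    · exact hA
    · exact hfN A hA
  have hfam := (hmov A hA).nestedFamily hodd hf fun b b' h =>
    hnest _ (hmem b) _ (tr_eq_image h _ ▸ htr _ (hmem b') h)
  obtain ⟨a, y, hC⟩ := hfam.exists_cutBasis
  refine hC.sAut_le_normalClosure hn hfS (h := f (a false) * (a true)⁻¹) ?_
  rw [tr_tr, inv_mul_cancel_right]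
  exact image_tr f (a false) A

end Conclusion

end NormalClosureOfPrimeOrder

/-- **Proposition 1.5.** For `n ≥ 3` and an odd prime `p`, if `f ∈ Aut(F_n)` has order `p`,
then `N(f) = SAut(F_n)` if `det f̄ = 1` and `N(f) = Aut(F_n)` if `det f̄ = -1`. -/
theorem normalClosure_odd_prime_order_aut (n p : ℕ) (hn : 3 ≤ n) (hp : p.Prime) (hodd : Odd p)
    (f : FrAut n) (hf : orderOf f = p) :
    (detρ n f = 1 → Subgroup.normalClosure {f} = SAut n) ∧
    (detρ n f = -1 → Subgroup.normalClosure {f} = ⊤) := by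
  have hfp : f ^ p = 1 := hf ▸ pow_orderOf_eq_one f
  have hf1 : f ≠ 1 := by
    rintro rfl
    rw [orderOf_one] at hf
    exact hp.one_lt.ne hf
  constructor
  · intro hdet
    have hfS : f ∈ SAut n := MonoidHom.mem_ker.2 hdet
    have : (SAut n).Normal := MonoidHom.normal_ker _
    exact le_antisymm (Subgroup.normalClosure_le_normal (Set.singleton_subset_iff.2 hfS))
      (sAut_le_normalClosure_of_prime_order hn hp hodd hfp hf1 hfS)
  · intro hdet
    have h := congrArg (detρ n) hfp
    rw [_root_.map_pow, hdet, _root_.map_one, hodd.neg_one_pow] at h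
    exact absurd h (by decide)

end NormalClosurePaper
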